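/- arXiv:1510.08212 — 5 statements merged into one kernel-verified Lean document; each statement's English description precedes it below -/
import Mathlib

section
/- Every 6-dimensional 2-step nilpotent Lie algebra over K (K = ℝ or ℂ) which is not isomorphic to the direct product h₅ ⊕ K of the 5-dimensional Heisenberg Lie algebra with the 1-dimensional abelian Lie algebra admits a symplectic form. -/
/-- A symplectic form on a Lie algebra `g` over `K`: a `K`-bilinear form which is
alternating, nondegenerate and closed, i.e.
`θ ⁅X,Y⁆ Z + θ ⁅Y,Z⁆ X + θ ⁅Z,X⁆ Y = 0` for all `X Y Z`. -/
def IsSymplecticForm (K : Type*) [RCLike K] (g : Type*) [LieRing g] [LieAlgebra K g]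
    (θ : g → g → K) : Prop :=
  (∀ (a : K) (X Y Z : g), θ (a • X + Y) Z = a * θ X Z + θ Y Z) ∧
  (∀ (a : K) (X Y Z : g), θ X (a • Y + Z) = a * θ X Y + θ X Z) ∧
  (∀ X : g, θ X X = 0) ∧
  (∀ X : g, (∀ Y : g, θ X Y = 0) → X = 0) ∧
  (∀ X Y Z : g, θ ⁅X, Y⁆ Z + θ ⁅Y, Z⁆ X + θ ⁅Z, X⁆ Y = 0)
/-- A Lie algebra is 2-step nilpotent if `[[g,g],g] = 0` and `[g,g] ≠ 0`. -/
def IsTwoStepNilpotent (g : Type*) [LieRing g] : Prop :=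
  (∀ X Y Z : g, ⁅⁅X, Y⁆, Z⁆ = 0) ∧ ∃ X Y : g, ⁅X, Y⁆ ≠ 0
/-- The direct product `h_{2p+1} ⊕ K^m` of the `(2p+1)`-dimensional Heisenberg Lie algebra
(with basis `X_1,…,X_{2p},Z` and nonzero brackets `⁅X_{2i-1}, X_{2i}⁆ = Z`) with the
`m`-dimensional abelian Lie algebra, realized on
`((Fin p → K) × (Fin p → K)) × (K × (Fin m → K))` with bracket
`⁅(a,b,c,d), (a',b',c',d')⁆ = (0, 0, ∑ i, (a i * b' i - a' i * b i), 0)`. -/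
abbrev HeisenbergAbelian (K : Type*) [RCLike K] (p m : ℕ) : Type _ :=
  ((Fin p → K) × (Fin p → K)) × (K × (Fin m → K))

namespace HeisenbergAbelian

variable {K : Type*} [RCLike K] {p m : ℕ}

/-- The Lie bracket of `h_{2p+1} ⊕ K^m`. -/
def brak (x y : HeisenbergAbelian K p m) : HeisenbergAbelian K p m :=
  ((0, 0), (∑ i, (x.1.1 i * y.1.2 i - y.1.1 i * x.1.2 i), 0))

instance (priority := 5000) : LieRing (HeisenbergAbelian K p m) where
  bracket := brak
  add_lie x y z := by
    show brak (x + y) z = brak x z + brak y z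
    simp only [brak, Prod.fst_add, Prod.snd_add, Pi.add_apply, Prod.mk_add_mk, add_zero,
      Prod.mk.injEq, true_and, and_true, ← Finset.sum_add_distrib]
    exact Finset.sum_congr rfl fun i _ => by ring
  lie_add x y z := by
    show brak x (y + z) = brak x y + brak x z
    simp only [brak, Prod.fst_add, Prod.snd_add, Pi.add_apply, Prod.mk_add_mk, add_zero,
      Prod.mk.injEq, true_and, and_true, ← Finset.sum_add_distrib]
    exact Finset.sum_congr rfl fun i _ => by ring
  lie_self x := by
    show brak x x = 0
    simp only [brak, sub_self, Finset.sum_const_zero]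
    rfl
  leibniz_lie x y z := by
    show brak x (brak y z) = brak (brak x y) z + brak y (brak x z)
    simp only [brak, Prod.mk_add_mk, Prod.mk.injEq, Pi.zero_apply, mul_zero, zero_mul,
      sub_self, Finset.sum_const_zero, add_zero, zero_add, and_true, true_and]

instance (priority := 5000) : LieAlgebra K (HeisenbergAbelian K p m) where
  lie_smul t x y := by
    show brak x (t • y) = t • brak x y
    simp only [brak, Prod.smul_fst, Prod.smul_snd, Pi.smul_apply, Prod.smul_mk, smul_zero,
      smul_eq_mul, Prod.mk.injEq, true_and, and_true, Finset.mul_sum]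
    exact Finset.sum_congr rfl fun i _ => by ring

end HeisenbergAbelian

open Module

theorem exists_symp (K : Type*) [Field K] (E : Type*) [AddCommGroup E] [Module K E]
    [FiniteDimensional K E] (n : ℕ) (h : finrank K E = n + n) :
    ∃ ω : E →ₗ[K] E →ₗ[K] K, (∀ x, ω x x = 0) ∧ ∀ x, (∀ y, ω x y = 0) → x = 0 := by
  have h' : finrank K E = finrank K ((Fin n → K) × (Fin n → K)) := by simp [h]
  let e := LinearEquiv.ofFinrankEq _ _ h'
  refine ⟨LinearMap.mk₂ K (fun x y => (e x).1 ⬝ᵥ (e y).2 - (e x).2 ⬝ᵥ (e y).1) ?_ ?_ ?_ ?_, ?_, ?_⟩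
  · intro x y z; simp [add_dotProduct]; ring
  · intro c x y; simp [mul_sub]
  · intro x y z; simp [dotProduct_add]; ring
  · intro c x y; simp [mul_sub]
  · intro x; simp [dotProduct_comm]
  · intro x hx
    apply e.injective
    rw [map_zero]
    ext i
    · have := hx (e.symm (0, Pi.single i 1))
      simpa using this
    · have := hx (e.symm (Pi.single i 1, 0))
      simpa using this

theorem lemA (K : Type*) [RCLike K] (g : Type*) [LieRing g] [LieAlgebra K g]
    [FiniteDimensional K g] (n : ℕ) (W : Submodule K g) (hW : ∀ X Y : g, ⁅X, Y⁆ ∈ W)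
    (hn : finrank K g = (n + finrank K W) + (n + finrank K W))
    (φ : W →ₗ[K] Dual K (g ⧸ W)) (hinj : Function.Injective φ)
    (hc : ∀ X Y Z : g, φ ⟨_, hW X Y⟩ (W.mkQ Z) + φ ⟨_, hW Y Z⟩ (W.mkQ X)
      + φ ⟨_, hW Z X⟩ (W.mkQ Y) = 0) :
    ∃ θ : g → g → K, IsSymplecticForm K g θ := by
  let U := φ.range.dualCoannihilator
  have hU : finrank K U = n + n := by
    have h1 := Subspace.finrank_add_finrank_dualCoannihilator_eq φ.range
    have h2 := LinearMap.finrank_range_of_inj hinj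
    have h3 := W.finrank_quotient_add_finrank
    change _ + finrank K U = _ at h1
    omega
  obtain ⟨ω, hω, hω'⟩ := exists_symp K U n hU
  obtain ⟨p, hp⟩ := LinearMap.exists_leftInverse_of_injective U.subtype (by simp)
  obtain ⟨π, hπ⟩ := LinearMap.exists_leftInverse_of_injective W.subtype (by simp)
  have hp' : ∀ u : U, p u = u := fun u => LinearMap.congr_fun hp u
  have hπ' : ∀ u : W, π u = u := fun u => LinearMap.congr_fun hπ u
  have hq : ∀ w : W, W.mkQ (w : g) = 0 := fun w => by simp
  have hl : ∀ X Y : g, π ⁅X, Y⁆ = ⟨_, hW X Y⟩ := fun X Y => hπ' ⟨_, hW X Y⟩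
  have hl' : ∀ X Y : g, W.mkQ ⁅X, Y⁆ = 0 := fun X Y => hq ⟨_, hW X Y⟩
  refine ⟨fun X Y => φ (π X) (W.mkQ Y) - φ (π Y) (W.mkQ X) + ω (p (W.mkQ X)) (p (W.mkQ Y)),
    ?_, ?_, ?_, ?_, ?_⟩
  · intro a X Y Z
    simp only [map_add, map_smul, LinearMap.add_apply, LinearMap.smul_apply, smul_eq_mul]; ring
  · intro a X Y Z
    simp only [map_add, map_smul, LinearMap.add_apply, LinearMap.smul_apply, smul_eq_mul]; ring
  · intro X; simp only [sub_self, hω, add_zero]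
  · intro X hX
    have hXU : W.mkQ X ∈ U := by
      rw [Submodule.mem_dualCoannihilator]
      rintro _ ⟨w, rfl⟩
      have := hX w
      simpa only [hq, map_zero, hπ', zero_sub, add_zero, neg_eq_zero] using this
    have h0 : (⟨_, hXU⟩ : U) = 0 := by
      apply hω'
      intro u
      obtain ⟨Y, hY⟩ := W.mkQ_surjective (u : g ⧸ W)
      have := hX Y
      beta_reduce at this
      rw [hY, hp', show p (W.mkQ X) = ⟨_, hXU⟩ from hp' ⟨_, hXU⟩] at this
      have h1 := (Submodule.mem_dualCoannihilator _).1 u.2 _ ⟨π X, rfl⟩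
      have h2 := (Submodule.mem_dualCoannihilator _).1 hXU _ ⟨π Y, rfl⟩
      rw [h1, h2] at this
      simpa using this
    have h0' : W.mkQ X = 0 := congrArg Subtype.val h0
    have hXW : X ∈ W := by simpa using h0'
    have h3 : φ (π X) = 0 := by
      ext Y
      have := hX Y
      beta_reduce at this
      rw [h0'] at this
      simpa using this
    have h4 : π X = 0 := hinj (by simpa using h3)
    rw [show π X = ⟨X, hXW⟩ from hπ' ⟨X, hXW⟩] at h4
    exact congrArg Subtype.val h4
  · intro X Y Z
    have := hc X Y Z
    simp only [hl, hl', map_zero, sub_zero, LinearMap.zero_apply, add_zero]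
    exact this

section core
set_option linter.unusedSectionVars false
variable {K : Type*} [Field K] [CharZero K] {E W : Type*} [AddCommGroup E] [Module K E]
    [AddCommGroup W] [Module K W] [FiniteDimensional K E] [FiniteDimensional K W]

theorem skew (β : E →ₗ[K] E →ₗ[K] W) (ha : ∀ x, β x x = 0) (x y : E) : β x y = - β y x := by
  have := ha (x + y)
  simp only [map_add, LinearMap.add_apply, ha, zero_add, add_zero] at this
  exact eq_neg_of_add_eq_zero_right this

/-- cyclic sum as trilinear map -/
def cyc (γ : E →ₗ[K] E →ₗ[K] E →ₗ[K] K) : E →ₗ[K] E →ₗ[K] E →ₗ[K] K :=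
  γ + (LinearMap.lflip.comp γ).flip + LinearMap.lflip.comp (γ.flip)

theorem cyc_apply (γ : E →ₗ[K] E →ₗ[K] E →ₗ[K] K) (x y z : E) :
    cyc γ x y z = γ x y z + γ y z x + γ z x y := by
  simp [cyc]

theorem cyc_zero {n : ℕ} (b : Basis (Fin n) K E) (γ : E →ₗ[K] E →ₗ[K] E →ₗ[K] K)
    (ha : ∀ x, γ x x = 0)
    (h : ∀ i j k, i < j → j < k → cyc γ (b i) (b j) (b k) = 0) (x y z : E) :
    γ x y z + γ y z x + γ z x y = 0 := by
  have hs := skew γ ha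
  have hs' : ∀ x y z, γ x y z = - γ y x z := fun x y z => by rw [hs x y]; simp
  have ha' : ∀ x z, γ x x z = 0 := fun x z => by rw [ha x]; simp
  have h1 : ∀ x y z, cyc γ x y z = - cyc γ y x z := fun x y z => by
    rw [cyc_apply, cyc_apply, hs' x y z, hs' y z x, hs' z x y]; ring
  have h2 : ∀ x y z, cyc γ x y z = - cyc γ x z y := fun x y z => by
    rw [cyc_apply, cyc_apply, hs' x y z, hs' y z x, hs' z x y]; ring
  have h3 : ∀ x z, cyc γ x x z = 0 := fun x z => by
    have := h1 x x z
    exact self_eq_neg.1 this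
  have h4 : ∀ x z, cyc γ x z z = 0 := fun x z => self_eq_neg.1 (h2 x z z)
  have key : cyc γ = 0 := by
    refine b.ext fun i => b.ext fun j => b.ext fun k => ?_
    simp only [LinearMap.zero_apply]
    rcases lt_trichotomy i j with hij | rfl | hij
    · rcases lt_trichotomy j k with hjk | rfl | hjk
      · exact h _ _ _ hij hjk
      · exact h4 _ _
      · rw [h2, neg_eq_zero]
        rcases lt_trichotomy i k with hik | rfl | hik
        · exact h _ _ _ hik hjk
        · exact h3 _ _
        · rw [h1, neg_eq_zero]; exact h _ _ _ hik hij
    · exact h3 _ _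
    · rw [h1, neg_eq_zero]
      rcases lt_trichotomy i k with hik | rfl | hik
      · exact h _ _ _ hij hik
      · exact h4 _ _
      · rw [h2, neg_eq_zero]
        rcases lt_trichotomy j k with hjk | rfl | hjk
        · exact h _ _ _ hjk hik
        · exact h3 _ _
        · rw [h1, neg_eq_zero]; exact h _ _ _ hjk hij
  rw [← cyc_apply, key]; rfl

/-- a linear functional-valued map vanishing on all basis brackets vanishes -/
theorem span_basis {n : ℕ} (b : Basis (Fin n) K E) (β : E →ₗ[K] E →ₗ[K] W)
    (ha : ∀ x, β x x = 0)
    (hs : Submodule.span K (Set.range fun p : E × E => β p.1 p.2) = ⊤) (S : Submodule K W)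
    (h : ∀ i j, i < j → β (b i) (b j) ∈ S) : S = ⊤ := by
  rw [eq_top_iff, ← hs, Submodule.span_le]
  rintro _ ⟨⟨x, y⟩, rfl⟩
  change β x y ∈ S
  have : β.compr₂ S.mkQ = 0 := by
    refine b.ext fun i => b.ext fun j => ?_
    simp only [LinearMap.compr₂_apply, LinearMap.zero_apply, Submodule.mkQ_apply,
      Submodule.Quotient.mk_eq_zero]
    rcases lt_trichotomy i j with hij | rfl | hij
    · exact h _ _ hij
    · rw [ha]; exact S.zero_mem
    · rw [skew β ha]; exact S.neg_mem (h _ _ hij)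
  have h2 := LinearMap.congr_fun (LinearMap.congr_fun this x) y
  simpa only [LinearMap.compr₂_apply, LinearMap.zero_apply, Submodule.mkQ_apply,
      Submodule.Quotient.mk_eq_zero] using h2

theorem core4 (β : E →ₗ[K] E →ₗ[K] W)
    (ha : ∀ x, β x x = 0)
    (hs : Submodule.span K (Set.range fun p : E × E => β p.1 p.2) = ⊤)
    (hE : finrank K E ≤ 2) : finrank K W ≤ 1 := by
  obtain ⟨n, hn⟩ : ∃ n, finrank K E = n := ⟨_, rfl⟩
  let b := finBasisOfFinrankEq K E hn
  rw [hn] at hE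
  have : ∃ w : W, ∀ i j, i < j → β (b i) (b j) ∈ Submodule.span K {w} := by
    interval_cases n
    · exact ⟨0, fun i => i.elim0⟩
    · exact ⟨0, fun i j hij => by omega⟩
    · refine ⟨β (b 0) (b 1), fun i j hij => ?_⟩
      have : i = 0 := by omega
      have : j = 1 := by omega
      subst i j
      exact Submodule.mem_span_singleton_self _
  obtain ⟨w, hw⟩ := this
  have := span_basis b β ha hs _ hw
  have h2 : finrank K (Submodule.span K {w}) ≤ 1 := by
    have := finrank_span_le_card (R := K) ({w} : Set W)
    simpa using this
  rw [this, finrank_top] at h2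
  exact h2

theorem core3 (β : E →ₗ[K] E →ₗ[K] W)
    (ha : ∀ x, β x x = 0)
    (hs : Submodule.span K (Set.range fun p : E × E => β p.1 p.2) = ⊤)
    (hE : finrank K E = 3) (hW : finrank K W = 3) :
    ∃ φ : W →ₗ[K] Dual K E, Function.Injective φ ∧
      ∀ x y z, φ (β x y) z + φ (β y z) x + φ (β z x) y = 0 := by
  let b := finBasisOfFinrankEq K E hE
  let v : Fin 3 → W := ![β (b 1) (b 2), β (b 2) (b 0), β (b 0) (b 1)]
  have hv : Submodule.span K (Set.range v) = ⊤ := by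
    apply span_basis b β ha hs
    have m : ∀ i, v i ∈ Submodule.span K (Set.range v) := fun i =>
      Submodule.subset_span ⟨i, rfl⟩
    intro i j hij
    fin_cases i <;> fin_cases j <;> simp at hij
    · exact m 2
    · have := m 1
      change β (b 0) (b 2) ∈ _
      rw [skew β ha]; exact Submodule.neg_mem _ this
    · exact m 0
  let w : Basis (Fin 3) K W := basisOfTopLeSpanOfCardEqFinrank v hv.ge (by simp [hW])
  have hw : ∀ i, w i = v i := fun i => by simp [w]
  let u : Fin 3 → Dual K E := ![b.coord 0, b.coord 1, (-2 : K) • b.coord 2]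
  have hu : LinearIndependent K u := by
    rw [Fintype.linearIndependent_iff]
    intro c hc
    have hh : ∀ i, (∑ i, c i • u i) (b i) = 0 := fun i => by rw [hc]; rfl
    have h0 := hh 0
    have h1 := hh 1
    have h2 := hh 2
    simp [Fin.sum_univ_three, u] at h0 h1 h2
    intro i
    fin_cases i <;> assumption
  refine ⟨w.constr K u, ?_, ?_⟩
  · exact w.injective_constr_of_linearIndependent hu
  · have hc : ∀ i, w.constr K u (v i) = u i := fun i => by rw [← hw, Basis.constr_basis]
    intro x y z
    refine cyc_zero b (β.compr₂ (w.constr K u)) (fun x => by ext; simp [ha]) ?_ x y z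
    intro i j k hij hjk
    have : i = 0 := by omega
    have : j = 1 := by omega
    have : k = 2 := by omega
    subst i j k
    rw [cyc_apply]
    change w.constr K u (v 2) _ + w.constr K u (v 0) _ + w.constr K u (v 1) _ = 0
    rw [hc, hc, hc]
    simp [u]
    norm_num

theorem rankOne_inj {D : Type*} [AddCommGroup D] [Module K D] [FiniteDimensional K D]
    (hD : finrank K D = 4) (L : Submodule K (D × D)) (hL : 4 ≤ finrank K L)
    (hdep : ∀ u ∈ L, ¬ LinearIndependent K ![u.1, u.2])
    (hinj : ∀ d, (0, d) ∈ L → d = 0) : ∃ c : K, ∀ a : D, (a, c • a) ∈ L := by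
  let f : L →ₗ[K] D := (LinearMap.fst K D D).comp L.subtype
  have hf : Function.Injective f := by
    rw [← LinearMap.ker_eq_bot, LinearMap.ker_eq_bot']
    rintro ⟨⟨x, y⟩, h⟩ h0
    change x = 0 at h0
    subst h0
    have := hinj y h
    subst this
    rfl
  have hLe : finrank K L = finrank K D := by
    have := LinearMap.finrank_le_finrank_of_injective hf
    omega
  let e : L ≃ₗ[K] D := LinearEquiv.ofInjectiveOfFinrankEq f hf hLe
  have he : ∀ l : L, e l = (l : D × D).1 := fun l => rfl
  let S : D →ₗ[K] D := ((LinearMap.snd K D D).comp L.subtype).comp e.symm.toLinearMap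
  have hS : ∀ a, (a, S a) ∈ L := fun a => by
    have h1 := he (e.symm a)
    rw [LinearEquiv.apply_symm_apply] at h1
    have : (a, S a) = ((e.symm a : L) : D × D) := Prod.ext h1 rfl
    rw [this]; exact (e.symm a).2
  obtain ⟨c, hc⟩ := LinearMap.exists_eq_smul_id_of_forall_notLinearIndependent
    (f := S) fun v => hdep _ (hS v)
  refine ⟨c, fun a => ?_⟩
  have := hS a
  rw [hc] at this
  simpa using this

theorem dep_cases {D : Type*} [AddCommGroup D] [Module K D] {x y : D}
    (h : ¬ LinearIndependent K ![x, y]) (hx : x ≠ 0) : ∃ c : K, y = c • x := by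
  rw [LinearIndependent.pair_iff' hx] at h
  push Not at h
  obtain ⟨a, ha⟩ := h
  exact ⟨a, ha.symm⟩

theorem dep_swap {D : Type*} [AddCommGroup D] [Module K D] {x y : D}
    (h : ¬ LinearIndependent K ![x, y]) : ¬ LinearIndependent K ![y, x] := by
  rwa [LinearIndependent.pair_symm_iff]

theorem rankOne {D : Type*} [AddCommGroup D] [Module K D] [FiniteDimensional K D]
    (hD : finrank K D = 4) (L : Submodule K (D × D)) (hL : 4 ≤ finrank K L)
    (hdep : ∀ u ∈ L, ¬ LinearIndependent K ![u.1, u.2]) :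
    ∃ c d : K, (c ≠ 0 ∨ d ≠ 0) ∧ ∀ a : D, (c • a, d • a) ∈ L := by
  by_cases h1 : ∀ d, (0, d) ∈ L → d = 0
  · obtain ⟨c, hc⟩ := rankOne_inj hD L hL hdep h1
    exact ⟨1, c, Or.inl one_ne_zero, fun a => by simpa using hc a⟩
  by_cases h2 : ∀ d, (d, 0) ∈ L → d = 0
  · let s := LinearEquiv.prodComm K D D
    have := rankOne_inj hD (L.map s.toLinearMap) (by rw [LinearEquiv.finrank_map_eq]; exact hL)
      (by
        rintro _ ⟨u, hu, rfl⟩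
        exact dep_swap (hdep u hu))
      (by
        rintro d ⟨⟨x, y⟩, hu, h⟩
        have h3 : y = 0 := congrArg Prod.fst h
        have h4 : x = d := congrArg Prod.snd h
        subst h3 h4
        exact h2 _ hu)
    obtain ⟨c, hc⟩ := this
    refine ⟨c, 1, Or.inr one_ne_zero, fun a => ?_⟩
    obtain ⟨⟨x, y⟩, hu, h⟩ := hc a
    have h3 : y = a := congrArg Prod.fst h
    have h4 : x = c • a := congrArg Prod.snd h
    subst h3 h4
    simpa using hu
  exfalso
  push Not at h1 h2
  obtain ⟨b, hb, hb0⟩ := h1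
  obtain ⟨a, ha, ha0⟩ := h2
  have h1 : ∀ x y, (x, y) ∈ L → ∃ c : K, x = c • b := by
    intro x y h
    by_cases hx : x = 0
    · exact ⟨0, by simp [hx]⟩
    obtain ⟨c, hc⟩ := dep_cases (hdep _ h) hx
    obtain ⟨d, hd⟩ := dep_cases (hdep _ (L.add_mem h hb)) (by simpa using hx)
    simp only [Prod.mk_add_mk, add_zero] at hc hd
    have hbx : b = (d - c) • x := by rw [sub_smul, ← hd, ← hc]; abel
    have hdc : d - c ≠ 0 := fun h0 => hb0 (by rw [hbx, h0, zero_smul])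
    exact ⟨(d - c)⁻¹, by rw [hbx, smul_smul, inv_mul_cancel₀ hdc, one_smul]⟩
  have h2 : ∀ x y, (x, y) ∈ L → ∃ c : K, y = c • a := by
    intro y x h
    by_cases hx : x = 0
    · exact ⟨0, by simp [hx]⟩
    obtain ⟨c, hc⟩ := dep_cases (dep_swap (hdep _ h)) hx
    obtain ⟨d, hd⟩ := dep_cases (dep_swap (hdep _ (L.add_mem h ha))) (by simpa using hx)
    simp only [Prod.mk_add_mk, add_zero] at hc hd
    have hbx : a = (d - c) • x := by rw [sub_smul, ← hd, ← hc]; abel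
    have hdc : d - c ≠ 0 := fun h0 => ha0 (by rw [hbx, h0, zero_smul])
    exact ⟨(d - c)⁻¹, by rw [hbx, smul_smul, inv_mul_cancel₀ hdc, one_smul]⟩
  let f : K × K →ₗ[K] D × D :=
    LinearMap.prodMap (LinearMap.toSpanSingleton K D b) (LinearMap.toSpanSingleton K D a)
  have hLf : L ≤ LinearMap.range f := by
    rintro ⟨x, y⟩ h
    obtain ⟨c, hc⟩ := h1 x y h
    obtain ⟨d, hd⟩ := h2 x y h
    exact ⟨(c, d), by simp [f, hc, hd]⟩
  have h3 := Submodule.finrank_mono hLf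
  have h4 := LinearMap.finrank_range_le f
  simp at h4
  omega

theorem core2 (β : E →ₗ[K] E →ₗ[K] W)
    (ha : ∀ x, β x x = 0)
    (hs : Submodule.span K (Set.range fun p : E × E => β p.1 p.2) = ⊤)
    (hE : finrank K E = 4) (hW : finrank K W = 2) :
    ∃ φ : W →ₗ[K] Dual K E, Function.Injective φ ∧
      ∀ x y z, φ (β x y) z + φ (β y z) x + φ (β z x) y = 0 := by
  let b := finBasisOfFinrankEq K E hE
  let w := finBasisOfFinrankEq K W hW
  let F : Dual K E × Dual K E → E → E → E → K := fun u x y z =>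
    w.coord 0 (β x y) * u.1 z + w.coord 1 (β x y) * u.2 z
  let T : Dual K E × Dual K E →ₗ[K] (Fin 4 → K) :=
    { toFun := fun u t => F u (b (t.succAbove 0)) (b (t.succAbove 1)) (b (t.succAbove 2))
        + F u (b (t.succAbove 1)) (b (t.succAbove 2)) (b (t.succAbove 0))
        + F u (b (t.succAbove 2)) (b (t.succAbove 0)) (b (t.succAbove 1))
      map_add' := by
        intro u v; ext t
        simp only [F, Prod.fst_add, Prod.snd_add, LinearMap.add_apply, Pi.add_apply]; ring
      map_smul' := by
        intro c u; ext t
        simp only [F, Prod.smul_fst, Prod.smul_snd, LinearMap.smul_apply, Pi.smul_apply,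
          RingHom.id_apply, smul_eq_mul]; ring }
  have hF : ∀ (u : Dual K E × Dual K E) (x y z : E), (w.constr K ![u.1, u.2]) (β x y) z = F u x y z := by
    intro u x y z
    rw [Basis.constr_apply_fintype]
    simp [F, Fin.sum_univ_two]
  have hcyc : ∀ u ∈ LinearMap.ker T, ∀ x y z,
      F u x y z + F u y z x + F u z x y = 0 := by
    intro u hu x y z
    rw [← hF, ← hF, ← hF]
    refine cyc_zero b (β.compr₂ (w.constr K ![u.1, u.2])) (fun x => by ext; simp [ha]) ?_ x y z
    intro i j k hij hjk
    obtain ⟨t, rfl, rfl, rfl⟩ : ∃ t : Fin 4, t.succAbove 0 = i ∧ t.succAbove 1 = j ∧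
        t.succAbove 2 = k := by
      revert i j k; decide
    rw [cyc_apply]
    simp only [LinearMap.compr₂_apply, hF]
    exact congrFun (LinearMap.mem_ker.1 hu) t
  have hD : finrank K (Dual K E) = 4 := by rw [Subspace.dual_finrank_eq, hE]
  have hker : 4 ≤ finrank K (LinearMap.ker T) := by
    have h1 := T.finrank_range_add_finrank_ker
    have h2 := (LinearMap.range T).finrank_le
    rw [Module.finrank_prod, hD] at h1
    simp only [Module.finrank_fin_fun] at h2
    omega
  by_cases hdep : ∀ u ∈ LinearMap.ker T, ¬ LinearIndependent K ![u.1, u.2]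
  · exfalso
    obtain ⟨c, d, hcd, hL⟩ := rankOne hD _ hker hdep
    let ℓ : W →ₗ[K] K := c • w.coord 0 + d • w.coord 1
    have hℓ : LinearMap.ker ℓ = ⊤ := by
      rw [eq_top_iff, ← hs, Submodule.span_le]
      rintro _ ⟨⟨x, y⟩, rfl⟩
      change ℓ (β x y) = 0
      have h1 : ∀ i, b.coord i (b i) * ℓ (β x y) + b.coord i x * ℓ (β y (b i))
          + b.coord i y * ℓ (β (b i) x) = 0 := by
        intro i
        have := hcyc _ (hL (b.coord i)) x y (b i)
        simp only [F, LinearMap.smul_apply, smul_eq_mul] at this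
        simp only [ℓ, LinearMap.add_apply, LinearMap.smul_apply, smul_eq_mul]
        linear_combination this
      have h2 : ∑ i, b.coord i x * ℓ (β y (b i)) = ℓ (β y x) := by
        conv_rhs => rw [← b.sum_repr x]
        simp only [map_sum, map_smul, smul_eq_mul, Basis.coord_apply]
      have h3 : ∑ i, b.coord i y * ℓ (β (b i) x) = ℓ (β y x) := by
        conv_rhs => rw [← b.sum_repr y]
        simp only [map_sum, map_smul, LinearMap.sum_apply, LinearMap.smul_apply, smul_eq_mul,
          Basis.coord_apply]
      have h4 : ∑ i, (b.coord i (b i) * ℓ (β x y) + b.coord i x * ℓ (β y (b i))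
          + b.coord i y * ℓ (β (b i) x)) = 0 := Finset.sum_eq_zero fun i _ => h1 i
      rw [Finset.sum_add_distrib, Finset.sum_add_distrib, h2, h3, skew β ha y x] at h4
      simp at h4
      have h5 : (2 : K) * ℓ (β x y) = 0 := by linear_combination h4
      simpa using h5
    have h0 : ∀ v, ℓ v = 0 := fun v => by
      have : v ∈ LinearMap.ker ℓ := by rw [hℓ]; trivial
      exact this
    have hc := h0 (w 0)
    have hd := h0 (w 1)
    simp [ℓ] at hc hd
    simp [hc, hd] at hcd
  · push Not at hdep
    obtain ⟨u, hu, hind⟩ := hdep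
    refine ⟨w.constr K ![u.1, u.2], w.injective_constr_of_linearIndependent hind, ?_⟩
    intro x y z
    simp only [hF]
    exact hcyc u hu x y z

theorem core1 (β : E →ₗ[K] E →ₗ[K] W) (ha : ∀ x, β x x = 0) (hne : ∃ x y, β x y ≠ 0)
    (hW : finrank K W = 1) :
    (∃ φ : W →ₗ[K] Dual K E, Function.Injective φ ∧
      ∀ x y z, φ (β x y) z + φ (β y z) x + φ (β z x) y = 0) ∨
    ∃ (w : W) (e₁ e₂ e₃ e₄ : E), w ≠ 0 ∧ β e₁ e₂ = w ∧ β e₃ e₄ = w ∧ β e₁ e₃ = 0 ∧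
      β e₁ e₄ = 0 ∧ β e₂ e₃ = 0 ∧ β e₂ e₄ = 0 := by
  obtain ⟨e₁, e₂, h12⟩ := hne
  let κ : W ≃ₗ[K] K := LinearEquiv.ofFinrankEq W K (by simp [hW])
  set w := β e₁ e₂ with hw
  have hκ0 : κ w ≠ 0 := by simpa using h12
  let γ : E →ₗ[K] E →ₗ[K] K := β.compr₂ ((κ w)⁻¹ • κ.toLinearMap)
  have hγ : ∀ x y, γ x y = (κ w)⁻¹ * κ (β x y) := fun x y => rfl
  have hβ : ∀ x y, β x y = γ x y • w := fun x y => by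
    apply κ.injective
    rw [map_smul, hγ, smul_eq_mul]
    field_simp
  have hγ12 : γ e₁ e₂ = 1 := by rw [hγ, ← hw, inv_mul_cancel₀ hκ0]
  have hγa : ∀ x, γ x x = 0 := fun x => by rw [hγ, ha, map_zero, mul_zero]
  have hsk := skew γ hγa
  by_cases h : ∀ x y, γ e₁ x = 0 → γ e₂ x = 0 → γ e₁ y = 0 → γ e₂ y = 0 → γ x y = 0
  · left
    have hsplit : ∀ x y, γ x y = γ e₁ x * γ e₂ y - γ e₂ x * γ e₁ y := by
      intro x y
      have h1 := h (x + γ e₂ x • e₁ - γ e₁ x • e₂) (y + γ e₂ y • e₁ - γ e₁ y • e₂)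
      simp only [map_add, map_sub, map_smul, LinearMap.add_apply, LinearMap.sub_apply,
        LinearMap.smul_apply, smul_eq_mul, hγa, hγ12, hsk e₂ e₁, hsk x e₁, hsk x e₂] at h1
      have h2 := h1 (by ring) (by ring) (by ring) (by ring)
      linear_combination h2
    refine ⟨LinearMap.smulRight ((κ w)⁻¹ • κ.toLinearMap) (γ e₁), ?_, ?_⟩
    · rw [← LinearMap.ker_eq_bot, LinearMap.ker_eq_bot']
      intro m hm
      have := LinearMap.congr_fun hm e₂
      simp [hγ12, hκ0] at this
      exact this
    · intro x y z
      change γ x y * γ e₁ z + γ y z * γ e₁ x + γ z x * γ e₁ y = 0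
      rw [hsplit x y, hsplit y z, hsplit z x]
      ring
  · right
    push Not at h
    obtain ⟨x, y, h1, h2, h3, h4, h5⟩ := h
    refine ⟨w, e₁, e₂, x, (γ x y)⁻¹ • y, h12, rfl, ?_, ?_, ?_, ?_, ?_⟩ <;>
      simp [hβ, h1, h2, h3, h4, h5]

end core

set_option linter.unusedSimpArgs false in
theorem iso_heis (K : Type*) [RCLike K] (g : Type*) [LieRing g] [LieAlgebra K g]
    [FiniteDimensional K g] (h6 : finrank K g = 6) (W : Submodule K g)
    (hW : ∀ X Y : g, ⁅X, Y⁆ ∈ W) (hW1 : finrank K W = 1)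
    (w X₁ X₂ X₃ X₄ : g) (hwW : w ∈ W) (hw : w ≠ 0) (hwX : ∀ X : g, ⁅w, X⁆ = 0)
    (h12 : ⁅X₁, X₂⁆ = w) (h34 : ⁅X₃, X₄⁆ = w) (h13 : ⁅X₁, X₃⁆ = 0) (h14 : ⁅X₁, X₄⁆ = 0)
    (h23 : ⁅X₂, X₃⁆ = 0) (h24 : ⁅X₂, X₄⁆ = 0) :
    Nonempty (g ≃ₗ⁅K⁆ HeisenbergAbelian K 2 1) := by
  let Xs : Fin 4 → g := ![X₁, X₂, X₃, X₄]
  let T : g →ₗ[K] (Fin 4 → W) := LinearMap.pi fun i =>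
    ((LieAlgebra.ad K g (Xs i) : g →ₗ[K] g)).codRestrict W (fun Y => hW _ _)
  have hT : ∀ X i, ((T X i : W) : g) = ⁅Xs i, X⁆ := fun X i => rfl
  obtain ⟨X₅, hX5, hX5W⟩ : ∃ X, X ∈ LinearMap.ker T ∧ X ∉ W := by
    by_contra hcon
    push Not at hcon
    have h1 := Submodule.finrank_mono (show LinearMap.ker T ≤ W from hcon)
    have h2 := T.finrank_range_add_finrank_ker
    have h3 := (LinearMap.range T).finrank_le
    rw [Module.finrank_pi_fintype] at h3
    simp [hW1] at h3
    omega
  have hX : ∀ i, ⁅Xs i, X₅⁆ = 0 := fun i => by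
    rw [← hT, LinearMap.mem_ker.1 hX5]; rfl
  have h15 : ⁅X₁, X₅⁆ = 0 := hX 0
  have h25 : ⁅X₂, X₅⁆ = 0 := hX 1
  have h35 : ⁅X₃, X₅⁆ = 0 := hX 2
  have h45 : ⁅X₄, X₅⁆ = 0 := hX 3
  have sk : ∀ {X Y Z : g}, ⁅X, Y⁆ = Z → ⁅Y, X⁆ = -Z := fun {X Y Z} h => by
    rw [← lie_skew, h]
  have sk0 : ∀ {X Y : g}, ⁅X, Y⁆ = 0 → ⁅Y, X⁆ = 0 := fun {X Y} h => by
    rw [← lie_skew, h, neg_zero]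
  have hXw : ∀ X, ⁅X, w⁆ = 0 := fun X => sk0 (hwX X)
  have h21 := sk h12
  have h43 := sk h34
  have h31 := sk0 h13
  have h41 := sk0 h14
  have h32 := sk0 h23
  have h42 := sk0 h24
  have h51 := sk0 h15
  have h52 := sk0 h25
  have h53 := sk0 h35
  have h54 := sk0 h45
  let f : HeisenbergAbelian K 2 1 →ₗ[K] g :=
    { toFun := fun x => x.1.1 0 • X₁ + x.1.2 0 • X₂ + x.1.1 1 • X₃ + x.1.2 1 • X₄
        + x.2.1 • w + x.2.2 0 • X₅
      map_add' := fun x y => by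
        simp only [Prod.fst_add, Prod.snd_add, Pi.add_apply, add_smul]; abel
      map_smul' := fun c x => by
        simp only [Prod.smul_fst, Prod.smul_snd, Pi.smul_apply, smul_eq_mul, mul_smul, smul_add,
          RingHom.id_apply] }
  have hf : ∀ x, f x = x.1.1 0 • X₁ + x.1.2 0 • X₂ + x.1.1 1 • X₃ + x.1.2 1 • X₄
        + x.2.1 • w + x.2.2 0 • X₅ := fun x => rfl
  have hlie : ∀ x y, f ⁅x, y⁆ = ⁅f x, f y⁆ := by
    intro x y
    change f (HeisenbergAbelian.brak x y) = _
    rw [hf, hf x, hf y]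
    simp only [HeisenbergAbelian.brak, lie_add, add_lie, smul_lie, lie_smul, lie_self, hXw, hwX,
      h12, h13, h14, h15, h21, h23, h24, h25, h31, h32, h34, h35, h41, h42, h43, h45, h51, h52,
      h53, h54, smul_zero, add_zero, zero_add, Fin.sum_univ_two, Pi.zero_apply, zero_smul]
    module
  have hinj : Function.Injective f := by
    rw [← LinearMap.ker_eq_bot, LinearMap.ker_eq_bot']
    intro x hx
    rw [hf] at hx
    have key : ∀ Y : g, ⁅x.1.1 0 • X₁ + x.1.2 0 • X₂ + x.1.1 1 • X₃ + x.1.2 1 • X₄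
        + x.2.1 • w + x.2.2 0 • X₅, Y⁆ = 0 := fun Y => by rw [hx, zero_lie]
    have k1 := key X₁
    have k2 := key X₂
    have k3 := key X₃
    have k4 := key X₄
    simp only [lie_add, add_lie, smul_lie, lie_smul, lie_self, hXw, hwX,
      h12, h13, h14, h15, h21, h23, h24, h25, h31, h32, h34, h35, h41, h42, h43, h45, h51, h52,
      h53, h54, smul_zero, add_zero, zero_add, smul_neg, neg_eq_zero, smul_eq_zero, hw, or_false]
      at k1 k2 k3 k4
    simp only [k1, k2, k3, k4, zero_smul, zero_add] at hx
    have k5 : x.2.2 0 = 0 := by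
      by_contra h0
      apply hX5W
      have : X₅ = (x.2.2 0)⁻¹ • (-(x.2.1 • w)) := by
        rw [← eq_neg_of_add_eq_zero_right hx, smul_smul, inv_mul_cancel₀ h0, one_smul]
      rw [this]
      exact W.smul_mem _ (W.neg_mem (W.smul_mem _ hwW))
    have k6 : x.2.1 = 0 := by simpa [k5, hw] using hx
    refine Prod.ext (Prod.ext ?_ ?_) (Prod.ext k6 ?_)
    · funext i; fin_cases i <;> assumption
    · funext i; fin_cases i <;> assumption
    · funext i; fin_cases i; assumption
  have hfr : finrank K (HeisenbergAbelian K 2 1) = finrank K g := by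
    rw [h6]; simp
  have hbij : Function.Bijective f :=
    ⟨hinj, (LinearMap.injective_iff_surjective_of_finrank_eq_finrank hfr).1 hinj⟩
  let F : HeisenbergAbelian K 2 1 →ₗ⁅K⁆ g := { f with map_lie' := fun {x y} => hlie x y }
  exact ⟨(LieEquiv.ofBijective F hbij).symm⟩

/-- Every 6-dimensional 2-step nilpotent Lie algebra over `K` which is not isomorphic to
`h₅ ⊕ K` (the direct product of the 5-dimensional Heisenberg Lie algebra with the
1-dimensional abelian Lie algebra) admits a symplectic form. -/
theorem symplectic_of_sixDim_twoStep_not_heisenberg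
    (K : Type*) [RCLike K] (g : Type*) [LieRing g] [LieAlgebra K g] [FiniteDimensional K g]
    (h2 : IsTwoStepNilpotent g) (h6 : Module.finrank K g = 6)
    (hne : ¬ Nonempty (g ≃ₗ⁅K⁆ HeisenbergAbelian K 2 1)) :
    ∃ θ : g → g → K, IsSymplecticForm K g θ := by
  obtain ⟨h2, A, B, hAB⟩ := h2
  let W : Submodule K g := Submodule.span K (Set.range fun p : g × g => ⁅p.1, p.2⁆)
  have hW : ∀ X Y : g, ⁅X, Y⁆ ∈ W := fun X Y => Submodule.subset_span ⟨(X, Y), rfl⟩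
  have hWz : ∀ w ∈ W, ∀ X : g, ⁅w, X⁆ = 0 := by
    intro w hw X
    induction hw using Submodule.span_induction with
    | mem x hx => obtain ⟨p, rfl⟩ := hx; exact h2 _ _ _
    | zero => exact zero_lie _
    | add x y _ _ hx hy => rw [add_lie, hx, hy, add_zero]
    | smul c x _ hx => rw [smul_lie, hx, smul_zero]
  have hWz' : ∀ w ∈ W, ∀ X : g, ⁅X, w⁆ = 0 := fun w hw X => by
    rw [← lie_skew, hWz w hw, neg_zero]
  obtain ⟨s, hs⟩ := W.mkQ.exists_rightInverse_of_surjective W.range_mkQ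
  have hs' : ∀ x, W.mkQ (s x) = x := fun x => LinearMap.congr_fun hs x
  let β : (g ⧸ W) →ₗ[K] (g ⧸ W) →ₗ[K] W :=
    LinearMap.mk₂ K (fun x y => ⟨⁅s x, s y⁆, hW _ _⟩)
      (fun x y z => Subtype.ext (by simp)) (fun c x y => Subtype.ext (by simp))
      (fun x y z => Subtype.ext (by simp)) (fun c x y => Subtype.ext (by simp))
  have hβ : ∀ x y, ((β x y : W) : g) = ⁅s x, s y⁆ := fun x y => rfl
  have hβ' : ∀ X Y : g, β (W.mkQ X) (W.mkQ Y) = ⟨⁅X, Y⁆, hW X Y⟩ := by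
    intro X Y
    have hm : ∀ X : g, s (W.mkQ X) - X ∈ W := fun X => by
      have h0 : W.mkQ (s (W.mkQ X) - X) = 0 := by rw [map_sub, hs', sub_self]
      exact (Submodule.Quotient.mk_eq_zero W).1 h0
    apply Subtype.ext
    rw [hβ]
    have e1 : s (W.mkQ X) = X + (s (W.mkQ X) - X) := by abel
    have e2 : s (W.mkQ Y) = Y + (s (W.mkQ Y) - Y) := by abel
    rw [e1, e2, lie_add, add_lie, add_lie, hWz _ (hm X), hWz' _ (hm Y), hWz _ (hm X)]
    simp
  have ha : ∀ x, β x x = 0 := fun x => Subtype.ext (by rw [hβ, lie_self]; rfl)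
  have hsp : Submodule.span K (Set.range fun p : (g ⧸ W) × (g ⧸ W) => β p.1 p.2) = ⊤ := by
    apply Submodule.map_injective_of_injective W.injective_subtype
    rw [Submodule.map_span, Submodule.map_top, Submodule.range_subtype]
    apply le_antisymm
    · rw [Submodule.span_le]
      rintro _ ⟨v, -, rfl⟩
      exact v.2
    · apply Submodule.span_le.2
      rintro _ ⟨⟨X, Y⟩, rfl⟩
      apply Submodule.subset_span
      exact ⟨_, ⟨(W.mkQ X, W.mkQ Y), rfl⟩, congrArg Subtype.val (hβ' X Y)⟩
  have hdim := W.finrank_quotient_add_finrank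
  rw [h6] at hdim
  have hpos : 0 < finrank K W := by
    rw [Module.finrank_pos_iff_exists_ne_zero]
    exact ⟨⟨_, hW A B⟩, fun h => hAB (congrArg Subtype.val h)⟩
  have fin : ∀ n, 3 = n + finrank K W →
      (∃ φ : W →ₗ[K] Dual K (g ⧸ W), Function.Injective φ ∧
        ∀ x y z, φ (β x y) z + φ (β y z) x + φ (β z x) y = 0) →
      ∃ θ : g → g → K, IsSymplecticForm K g θ := by
    rintro n hn ⟨φ, hφ, hc⟩
    refine lemA K g n W hW (by omega) φ hφ ?_
    intro X Y Z
    rw [← hβ', ← hβ', ← hβ']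
    exact hc _ _ _
  obtain h | h | h | h : finrank K W = 1 ∨ finrank K W = 2 ∨ finrank K W = 3 ∨
      4 ≤ finrank K W := by omega
  · rcases core1 β ha ⟨W.mkQ A, W.mkQ B, by
      rw [hβ']; exact fun h => hAB (congrArg Subtype.val h)⟩ h with h' | h'
    · exact fin 2 (by omega) h'
    · obtain ⟨w, e₁, e₂, e₃, e₄, hw, h12, h34, h13, h14, h23, h24⟩ := h'
      exact absurd (iso_heis K g h6 W hW h w (s e₁) (s e₂) (s e₃) (s e₄) w.2
        (by simpa using hw) (hWz _ w.2) (by rw [← hβ, h12]) (by rw [← hβ, h34])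
        (by rw [← hβ, h13]; rfl) (by rw [← hβ, h14]; rfl) (by rw [← hβ, h23]; rfl)
        (by rw [← hβ, h24]; rfl)) hne
  · exact fin 1 (by omega) (core2 β ha hsp (by omega) h)
  · exact fin 0 (by omega) (core3 β ha hsp (by omega) h)
  · have := core4 β ha hsp (by omega)
    omega
end

section
/- For k ≥ 1, the free 2-step nilpotent Lie algebra n_{k,2} on k generators over K (K = ℝ or ℂ) admits a symplectic form if and only if k = 3. -/
/-- The free 2-step nilpotent Lie algebra on `k` generators over `K`: the quotient of the
free Lie algebra on `k` generators by the second term of its lower central series. -/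
abbrev FreeTwoStepNilpotent (K : Type*) [RCLike K] (k : ℕ) :=
  FreeLieAlgebra K (Fin k) ⧸
    LieModule.lowerCentralSeries K (FreeLieAlgebra K (Fin k)) (FreeLieAlgebra K (Fin k)) 2

/-- Underlying product, used for the additive structure. -/
def TwoModel (K : Type*) (k : ℕ) : Type _ := (Fin k → K) × (Fin k → Fin k → K)

namespace TwoModel

variable {K : Type*} [RCLike K] {k : ℕ}

noncomputable instance : AddCommGroup (TwoModel K k) :=
  inferInstanceAs (AddCommGroup ((Fin k → K) × (Fin k → Fin k → K)))

noncomputable instance : Module K (TwoModel K k) :=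
  inferInstanceAs (Module K ((Fin k → K) × (Fin k → Fin k → K)))

/-- generator part -/
def x : TwoModel K k →ₗ[K] (Fin k → K) :=
  LinearMap.fst K (Fin k → K) (Fin k → Fin k → K)

/-- bracket part -/
def y : TwoModel K k →ₗ[K] (Fin k → Fin k → K) :=
  LinearMap.snd K (Fin k → K) (Fin k → Fin k → K)

/-- constructor -/
def mk (u : Fin k → K) (v : Fin k → Fin k → K) : TwoModel K k := (u, v)

@[simp] theorem x_mk (u : Fin k → K) (v : Fin k → Fin k → K) : x (mk u v) = u := rfl
@[simp] theorem y_mk (u : Fin k → K) (v : Fin k → Fin k → K) : y (mk u v) = v := rfl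

theorem ext' {p q : TwoModel K k} (h1 : ∀ i, x p i = x q i) (h2 : ∀ i j, y p i j = y q i j) :
    p = q :=
  Prod.ext (funext h1) (funext fun i => funext (h2 i))

noncomputable instance : Bracket (TwoModel K k) (TwoModel K k) where
  bracket p q := mk 0 (fun i j => x p i * x q j - x p j * x q i)

@[simp] theorem x_lie (p q : TwoModel K k) : x ⁅p, q⁆ = 0 := rfl
@[simp] theorem y_lie (p q : TwoModel K k) (i j : Fin k) :
    y ⁅p, q⁆ i j = x p i * x q j - x p j * x q i := rfl

noncomputable instance : LieRing (TwoModel K k) where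
  add_lie p q r := by apply ext' <;> intros <;> simp; ring
  lie_add p q r := by apply ext' <;> intros <;> simp; ring
  lie_self p := by apply ext' <;> intros <;> simp; ring
  leibniz_lie p q r := by apply ext' <;> intros <;> simp

noncomputable instance : LieAlgebra K (TwoModel K k) where
  lie_smul t p q := by apply ext' <;> intros <;> simp; ring

end TwoModel

open TwoModel in
/-- Everything needed about the quotient. -/
theorem freeTwoStep_facts (K : Type*) [RCLike K] (k : ℕ) :
    ∃ (X : Fin k → FreeTwoStepNilpotent K k) (φ : FreeTwoStepNilpotent K k →ₗ[K] TwoModel K k),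
      (∀ a b c : FreeTwoStepNilpotent K k, ⁅⁅a, b⁆, c⁆ = 0) ∧
      (∀ S : LieSubalgebra K (FreeTwoStepNilpotent K k), (∀ i, X i ∈ S) → ∀ u, u ∈ S) ∧
      (∀ i, φ (X i) = mk (Pi.single i 1) 0) ∧
      (∀ u v, φ ⁅u, v⁆ = ⁅φ u, φ v⁆) := by
  set L := FreeLieAlgebra K (Fin k)
  set I := LieModule.lowerCentralSeries K L L 2 with hI
  have hmem : ∀ a b c : L, ⁅c, ⁅a, b⁆⁆ ∈ I := by
    intro a b c
    rw [hI, LieModule.lowerCentralSeries_succ, LieModule.lowerCentralSeries_succ]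
    exact LieSubmodule.lie_mem_lie (LieSubmodule.mem_top _)
      (LieSubmodule.lie_mem_lie (LieSubmodule.mem_top _) (LieSubmodule.mem_top _))
  let π : L →ₗ⁅K⁆ L ⧸ I :=
    { (LieSubmodule.Quotient.mk' I : L →ₗ[K] L ⧸ I) with
      map_lie' := fun {a b} => LieSubmodule.Quotient.mk_bracket _ a b }
  have hπ : Function.Surjective π := LieSubmodule.Quotient.surjective_mk' I
  let F : L →ₗ⁅K⁆ TwoModel K k := FreeLieAlgebra.lift K (fun i => mk (Pi.single i 1) 0)
  have hle : I ≤ F.ker := by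
    rw [hI, LieModule.lowerCentralSeries_succ, LieModule.lowerCentralSeries_succ,
      LieSubmodule.lie_le_iff]
    intro c _ m hm
    have h1 : (⁅(⊤ : LieIdeal K L), LieModule.lowerCentralSeries K L L 0⁆ : LieIdeal K L)
        ≤ LieIdeal.comap F (LieAlgebra.center K (TwoModel K k)) := by
      rw [LieSubmodule.lie_le_iff]
      intro a _ b _
      rw [LieIdeal.mem_comap, LieHom.map_lie, LieModule.mem_maxTrivSubmodule]
      intro d
      apply ext' <;> intros <;> simp
    have h2 := h1 hm
    rw [LieIdeal.mem_comap, LieModule.mem_maxTrivSubmodule] at h2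
    rw [LieHom.mem_ker, LieHom.map_lie]
    exact h2 _
  let φ : (L ⧸ I) →ₗ[K] TwoModel K k :=
    Submodule.liftQ (I : Submodule K L) (F : L →ₗ[K] TwoModel K k) (fun u hu => hle hu)
  have hφ : ∀ u, φ (π u) = F u := fun u => rfl
  refine ⟨fun i => π (FreeLieAlgebra.of K i), φ, ?_, ?_, ?_, ?_⟩
  · intro a b c
    obtain ⟨a, rfl⟩ := hπ a
    obtain ⟨b, rfl⟩ := hπ b
    obtain ⟨c, rfl⟩ := hπ c
    rw [← LieHom.map_lie, ← LieHom.map_lie, ← lie_skew, map_neg, neg_eq_zero]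
    exact (LieSubmodule.Quotient.mk_eq_zero' (N := I)).2 (hmem a b c)
  · intro S hS u
    obtain ⟨u, rfl⟩ := hπ u
    let G : L →ₗ⁅K⁆ S := FreeLieAlgebra.lift K (fun i => ⟨π (FreeLieAlgebra.of K i), hS i⟩)
    have : S.incl.comp G = π := by
      ext i
      simp [G]
    rw [← this]
    exact (G u).2
  · intro i
    rw [hφ]
    exact FreeLieAlgebra.lift_of_apply _ _
  · intro u v
    obtain ⟨u, rfl⟩ := hπ u
    obtain ⟨v, rfl⟩ := hπ v
    rw [← LieHom.map_lie, hφ, hφ, hφ, LieHom.map_lie]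

open TwoModel

/-- The span of generators and brackets is everything. -/
theorem span_top_of_gen {K : Type*} [RCLike K] {k : ℕ} {g : Type*} [LieRing g] [LieAlgebra K g]
    (X : Fin k → g) (hnil : ∀ a b c : g, ⁅⁅a, b⁆, c⁆ = 0)
    (hgen : ∀ S : LieSubalgebra K g, (∀ i, X i ∈ S) → ∀ u, u ∈ S) (u : g) :
    u ∈ Submodule.span K (Set.range X ∪ Set.range fun p : Fin k × Fin k => ⁅X p.1, X p.2⁆) := by
  set T := Submodule.span K
    (Set.range X ∪ Set.range fun p : Fin k × Fin k => ⁅X p.1, X p.2⁆) with hT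
  have hnil' : ∀ a b c : g, ⁅c, ⁅a, b⁆⁆ = 0 := fun a b c => by
    rw [← lie_skew, hnil, neg_zero]
  have hbr : ∀ a ∈ T, ∀ b ∈ T, ⁅a, b⁆ ∈ T := by
    intro a ha b hb
    induction ha, hb using Submodule.span_induction₂ with
    | mem_mem a b ha hb =>
      rcases ha with ⟨i, rfl⟩ | ⟨p, rfl⟩
      · rcases hb with ⟨j, rfl⟩ | ⟨q, rfl⟩
        · exact Submodule.subset_span (Or.inr ⟨(i, j), rfl⟩)
        · simp only [hnil']; exact T.zero_mem
      · simp only [hnil]; exact T.zero_mem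
    | zero_left b hb => simp
    | zero_right a ha => simp
    | add_left a b c _ _ _ h1 h2 => rw [add_lie]; exact T.add_mem h1 h2
    | add_right a b c _ _ _ h1 h2 => rw [lie_add]; exact T.add_mem h1 h2
    | smul_left r a b _ _ h => rw [smul_lie]; exact T.smul_mem _ h
    | smul_right r a b _ _ h => rw [lie_smul]; exact T.smul_mem _ h
  let S : LieSubalgebra K g := { T with lie_mem' := fun {a b} ha hb => hbr a ha b hb }
  exact hgen S (fun i => Submodule.subset_span (Or.inl ⟨i, rfl⟩)) u

theorem symplectic_imp {K : Type*} [RCLike K] {k : ℕ} {g : Type*} [LieRing g] [LieAlgebra K g]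
    (hk : 1 ≤ k)
    (X : Fin k → g) (φ : g →ₗ[K] TwoModel K k) (hnil : ∀ a b c : g, ⁅⁅a, b⁆, c⁆ = 0)
    (hgen : ∀ S : LieSubalgebra K g, (∀ i, X i ∈ S) → ∀ u, u ∈ S)
    (hφX : ∀ i, φ (X i) = mk (Pi.single i 1) 0)
    (hφ : ∀ u v, φ ⁅u, v⁆ = ⁅φ u, φ v⁆)
    (θ : g → g → K) (hθ : IsSymplecticForm K g θ) : k = 3 := by
  obtain ⟨h1, h2, halt, hnd, hcl⟩ := hθ
  have l0 : ∀ Z, θ 0 Z = 0 := fun Z => by simpa using h1 1 0 0 Z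
  have r0 : ∀ Z, θ Z 0 = 0 := fun Z => by simpa using h2 1 Z 0 0
  let B : g →ₗ[K] g →ₗ[K] K := LinearMap.mk₂ K θ
    (fun a b c => by simpa using h1 1 a b c)
    (fun t a b => by simpa [l0] using h1 t a 0 b)
    (fun a b c => by simpa using h2 1 a b c)
    (fun t a b => by simpa [r0] using h2 t a b 0)
  have hB : ∀ a b, B a b = θ a b := fun a b => rfl
  have balt : ∀ a, B a a = 0 := halt
  have bneg : ∀ a b, B a b = - B b a := by
    intro a b
    have := balt (a + b)
    simp only [map_add, LinearMap.add_apply, balt] at this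
    linear_combination this
  have hiso : ∀ a b c d : g, B ⁅a, b⁆ ⁅c, d⁆ = 0 := by
    intro a b c d
    have := hcl a b ⁅c, d⁆
    have e : ⁅b, ⁅c, d⁆⁆ = 0 := by rw [← lie_skew, hnil, neg_zero]
    rw [e, hnil, l0, l0] at this
    simpa [hB] using this
  have key : ∀ v : g, (∀ i, B v (X i) = 0) → (∀ i j, B v ⁅X i, X j⁆ = 0) → v = 0 := by
    intro v hv1 hv2
    apply hnd v
    intro u
    rw [← hB]
    induction span_top_of_gen X hnil hgen u using Submodule.span_induction with
    | mem u hu =>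
      rcases hu with ⟨i, rfl⟩ | ⟨p, rfl⟩
      · exact hv1 i
      · exact hv2 _ _
    | zero => simp
    | add a b _ _ ha hb => rw [map_add, ha, hb, add_zero]
    | smul t a _ ha => rw [map_smul, ha, smul_zero]
  have hX : ∀ i, X i ≠ 0 := by
    intro i h
    have := hφX i
    rw [h, map_zero] at this
    have h3 := congrArg (fun m => x m i) this
    simp at h3
  by_contra hk3
  have hcases : k = 1 ∨ k = 2 ∨ 4 ≤ k := by omega
  rcases hcases with rfl | rfl | hk4
  · refine hX 0 (key _ (fun i => ?_) (fun i j => ?_))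
    · rw [Subsingleton.elim i 0, balt]
    · rw [Subsingleton.elim i j, lie_self, map_zero]
  · have e10 : ⁅X 1, X 0⁆ = -⁅X 0, X 1⁆ := (lie_skew _ _).symm
    have hv := key (B (X 0) (X 1) • ⁅X 0, X 1⁆ + B (X 1) ⁅X 0, X 1⁆ • X 0 +
      B ⁅X 0, X 1⁆ (X 0) • X 1) (by
        intro i
        fin_cases i
        · simp [balt]
          rw [bneg (X 1) (X 0)]; ring
        · simp [balt]
          rw [bneg ⁅X 0, X 1⁆ (X 1)]; ring) (by
        have hY : B (B (X 0) (X 1) • ⁅X 0, X 1⁆ + B (X 1) ⁅X 0, X 1⁆ • X 0 +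
            B ⁅X 0, X 1⁆ (X 0) • X 1) ⁅X 0, X 1⁆ = 0 := by
          simp only [map_add, map_smul, LinearMap.add_apply, LinearMap.smul_apply, balt,
            smul_eq_mul]
          rw [bneg ⁅X 0, X 1⁆ (X 0)]; ring
        intro i j
        fin_cases i <;> fin_cases j
        · simp only [Fin.zero_eta, lie_self, map_zero]
        · exact hY
        · change B _ ⁅X 1, X 0⁆ = 0
          rw [e10, map_neg, hY, neg_zero]
        · change B _ ⁅X 1, X 1⁆ = 0
          rw [lie_self, map_zero])
    have hv' := congrArg φ hv
    simp only [map_add, map_smul, hφ, hφX, map_zero] at hv'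
    have c0 := congrArg (fun m => x m 0) hv'
    have c1 := congrArg (fun m => x m 1) hv'
    have c2 := congrArg (fun m => y m 0 1) hv'
    simp at c0 c1 c2
    refine hX 0 (key _ (fun i => ?_) (fun i j => ?_))
    · fin_cases i
      · exact balt _
      · exact c2
    · have hY : B (X 0) ⁅X 0, X 1⁆ = 0 := by rw [bneg, c1, neg_zero]
      fin_cases i <;> fin_cases j
      · simp only [Fin.zero_eta, lie_self, map_zero]
      · exact hY
      · change B _ ⁅X 1, X 0⁆ = 0
        rw [e10, map_neg, hY, neg_zero]
      · change B _ ⁅X 1, X 1⁆ = 0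
        rw [lie_self, map_zero]
  · let P := Σ j : Fin k, Fin j.1
    let fs : P → Fin k := fun p => ⟨p.2.1, p.2.2.trans p.1.2⟩
    let Y : P → g := fun p => ⁅X (fs p), X p.1⁆
    let E : (P → K) →ₗ[K] g := Fintype.linearCombination K Y
    let D : (P → K) →ₗ[K] (Fin k → K) := LinearMap.pi fun i => (B.flip (X i)).comp E
    have hcard : Fintype.card P = ∑ i ∈ Finset.range k, i := by
      rw [← Fin.sum_univ_eq_sum_range (fun i => i)]
      simp [P]
    have hlt : k < Fintype.card P := by
      have h3 := Finset.sum_range_id_mul_two k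
      obtain ⟨m, rfl⟩ : ∃ m, k = m + 4 := ⟨k - 4, by omega⟩
      rw [hcard]
      have : m + 4 - 1 = m + 3 := by omega
      rw [this] at h3
      nlinarith
    have hker : LinearMap.ker D ≠ ⊥ := LinearMap.ker_ne_bot_of_finrank_lt (by simpa using hlt)
    obtain ⟨c, hc, hc0⟩ := Submodule.exists_mem_ne_zero_of_ne_bot hker
    apply hc0
    have hE : E c = 0 := by
      apply key
      · intro i
        exact congrFun (LinearMap.mem_ker.1 hc) i
      · intro i j
        simp [E, Fintype.linearCombination_apply, Y, hiso]
    have hE' := congrArg φ hE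
    simp only [E, Fintype.linearCombination_apply, map_sum, map_smul, Y, hφ, hφX, map_zero] at hE'
    funext p
    have h3 := congrArg (fun m => y m (fs p) p.1) hE'
    simp only [map_sum, map_smul, Finset.sum_apply, Pi.smul_apply, y_lie, x_mk, map_zero,
      Pi.zero_apply, smul_eq_mul] at h3
    rw [Finset.sum_eq_single p] at h3
    · have hne : p.1 ≠ fs p := fun h => by
        have := congrArg Fin.val h
        have h5 := p.2.2
        simp only [fs] at this
        omega
      simpa [hne] using h3
    · rintro ⟨j, i⟩ _ hq
      obtain ⟨j', i'⟩ := p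
      have hi := i.2
      have hi' := i'.2
      have n1 : ¬ (i'.1 = i.1 ∧ j'.1 = j.1) := by
        rintro ⟨h5, h6⟩
        apply hq
        obtain rfl := Fin.ext h6
        obtain rfl := Fin.ext h5
        rfl
      have n2 : ¬ (j'.1 = i.1 ∧ i'.1 = j.1) := by omega
      simp only [fs, Pi.single_apply, Fin.ext_iff]
      clear h3 hq hE' hE hc hc0 hker hlt hcard
      split_ifs <;> first | (exfalso; omega) | simp
    · simp

theorem symplectic_exists {K : Type*} [RCLike K] {g : Type*} [LieRing g] [LieAlgebra K g]
    (X : Fin 3 → g) (φ : g →ₗ[K] TwoModel K 3) (hnil : ∀ a b c : g, ⁅⁅a, b⁆, c⁆ = 0)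
    (hgen : ∀ S : LieSubalgebra K g, (∀ i, X i ∈ S) → ∀ u, u ∈ S)
    (hφX : ∀ i, φ (X i) = mk (Pi.single i 1) 0)
    (hφ : ∀ u v, φ ⁅u, v⁆ = ⁅φ u, φ v⁆) :
    ∃ θ : g → g → K, IsSymplecticForm K g θ := by
  have hrep : ∀ u : g, u = x (φ u) 0 • X 0 + x (φ u) 1 • X 1 + x (φ u) 2 • X 2 +
      y (φ u) 0 1 • ⁅X 0, X 1⁆ + y (φ u) 1 2 • ⁅X 1, X 2⁆ + y (φ u) 2 0 • ⁅X 2, X 0⁆ := by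
    intro u
    induction span_top_of_gen X hnil hgen u using Submodule.span_induction with
    | mem u hu =>
      rcases hu with ⟨i, rfl⟩ | ⟨⟨i, j⟩, rfl⟩
      · fin_cases i <;> simp [hφX]
      · have e10 : ⁅X 1, X 0⁆ = -⁅X 0, X 1⁆ := (lie_skew _ _).symm
        have e21 : ⁅X 2, X 1⁆ = -⁅X 1, X 2⁆ := (lie_skew _ _).symm
        have e02 : ⁅X 0, X 2⁆ = -⁅X 2, X 0⁆ := (lie_skew _ _).symm
        fin_cases i <;> fin_cases j <;> simp [hφX, hφ, e10, e21, e02, -lie_skew]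
    | zero => simp
    | add a b _ _ ha hb =>
      simp only [map_add, Pi.add_apply]
      nth_rewrite 1 [ha, hb]
      module
    | smul t a _ ha =>
      simp only [map_smul, Pi.smul_apply, smul_eq_mul]
      nth_rewrite 1 [ha]
      module
  let w : TwoModel K 3 → TwoModel K 3 → K := fun p q =>
    y p 1 2 * x q 0 + y p 2 0 * x q 1 - 2 * (y p 0 1 * x q 2)
  refine ⟨fun u v => w (φ u) (φ v) - w (φ v) (φ u), ?_, ?_, ?_, ?_, ?_⟩
  · intro a u v z
    simp only [w, map_add, map_smul, Pi.add_apply, Pi.smul_apply, smul_eq_mul]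
    ring
  · intro a u v z
    simp only [w, map_add, map_smul, Pi.add_apply, Pi.smul_apply, smul_eq_mul]
    ring
  · intro u
    simp
  · intro u hu
    have a0 := hu (X 0)
    have a1 := hu (X 1)
    have a2 := hu (X 2)
    have b0 := hu ⁅X 1, X 2⁆
    have b1 := hu ⁅X 2, X 0⁆
    have b2 := hu ⁅X 0, X 1⁆
    simp [w, hφX, hφ] at a0 a1 a2 b0 b1 b2
    rw [hrep u]
    simp [a0, a1, a2, b0, b1, b2]
  · intro u v z
    simp only [w, hφ, x_lie, y_lie, Pi.zero_apply]
    ring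

/-- For `k ≥ 1`, the free 2-step nilpotent Lie algebra on `k` generators admits a
symplectic form if and only if `k = 3`. -/
theorem freeTwoStepNilpotent_symplectic_iff (K : Type*) [RCLike K] (k : ℕ) (hk : 1 ≤ k) :
    (∃ θ : FreeTwoStepNilpotent K k → FreeTwoStepNilpotent K k → K,
        IsSymplecticForm K (FreeTwoStepNilpotent K k) θ) ↔ k = 3 := by
  obtain ⟨X, φ, hnil, hgen, hφX, hφ⟩ := freeTwoStep_facts K k
  constructor
  · rintro ⟨θ, hθ⟩
    exact symplectic_imp hk X φ hnil hgen hφX hφ θ hθ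
  · rintro rfl
    exact symplectic_exists X φ hnil hgen hφX hφ
end

section
/- Every 8-dimensional 2-step nilpotent Lie algebra g over K (K = ℝ or ℂ) with characteristic sequence (2,2,2,1,1) and with 4 generators (i.e. dim(g/[g,g]) = 4) admits a symplectic form. -/
/-- A 2-step nilpotent Lie algebra has characteristic sequence `(2,…,2,1,…,1)` with exactly
`k` twos iff the maximum of `rank (ad X) = dim ⁅X, g⁆` over `X ∈ g \ [g,g]` equals `k`. -/
def HasCharSeqTwos (K : Type*) [RCLike K] (g : Type*) [LieRing g] [LieAlgebra K g]
    (k : ℕ) : Prop :=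
  (∀ X : g, X ∉ LieAlgebra.derivedSeries K g 1 →
      Module.finrank K ↥(LinearMap.range (LieAlgebra.ad K g X)) ≤ k) ∧
  ∃ X : g, X ∉ LieAlgebra.derivedSeries K g 1 ∧
      Module.finrank K ↥(LinearMap.range (LieAlgebra.ad K g X)) = k

/-- Construction of the form from an adapted basis `e₁,…,e₄,z₂,…,z₅`. -/
theorem exists_symplectic_of_basis
    (K : Type*) [RCLike K] (g : Type*) [LieRing g] [LieAlgebra K g]
    (b : Module.Basis (Fin 8) K g) (p2 p3 p4 q2 q3 q4 : K)
    (h01 : ⁅b 0, b 1⁆ = b 4) (h02 : ⁅b 0, b 2⁆ = b 5) (h03 : ⁅b 0, b 3⁆ = b 6)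
    (h23 : ⁅b 2, b 3⁆ = b 7)
    (h12 : ⁅b 1, b 2⁆ = p2 • b 4 + p3 • b 5 + p4 • b 6)
    (h13 : ⁅b 1, b 3⁆ = q2 • b 4 + q3 • b 5 + q4 • b 6)
    (c4 : ∀ x : g, ⁅b 4, x⁆ = 0) (c5 : ∀ x : g, ⁅b 5, x⁆ = 0) (c6 : ∀ x : g, ⁅b 6, x⁆ = 0)
    (c7 : ∀ x : g, ⁅b 7, x⁆ = 0) :
    ∃ θ : g → g → K, IsSymplecticForm K g θ := by
  have swap : ∀ x y z : g, ⁅x, y⁆ = z → ⁅y, x⁆ = -z := fun x y z h => by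
    rw [← lie_skew, h]
  have d4 : ∀ x, ⁅x, b 4⁆ = 0 := fun x => by rw [← lie_skew, c4, neg_zero]
  have d5 : ∀ x, ⁅x, b 5⁆ = 0 := fun x => by rw [← lie_skew, c5, neg_zero]
  have d6 : ∀ x, ⁅x, b 6⁆ = 0 := fun x => by rw [← lie_skew, c6, neg_zero]
  have d7 : ∀ x, ⁅x, b 7⁆ = 0 := fun x => by rw [← lie_skew, c7, neg_zero]
  have h10 := swap _ _ _ h01
  have h20 := swap _ _ _ h02
  have h30 := swap _ _ _ h03
  have h32 := swap _ _ _ h23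
  have h21 := swap _ _ _ h12
  have h31 := swap _ _ _ h13
  have hbr : ∀ x y : g, ⁅x, y⁆ =
      ((b.repr x 0 * b.repr y 1 - b.repr x 1 * b.repr y 0)
        + p2 * (b.repr x 1 * b.repr y 2 - b.repr x 2 * b.repr y 1)
        + q2 * (b.repr x 1 * b.repr y 3 - b.repr x 3 * b.repr y 1)) • b 4
      + ((b.repr x 0 * b.repr y 2 - b.repr x 2 * b.repr y 0)
        + p3 * (b.repr x 1 * b.repr y 2 - b.repr x 2 * b.repr y 1)
        + q3 * (b.repr x 1 * b.repr y 3 - b.repr x 3 * b.repr y 1)) • b 5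
      + ((b.repr x 0 * b.repr y 3 - b.repr x 3 * b.repr y 0)
        + p4 * (b.repr x 1 * b.repr y 2 - b.repr x 2 * b.repr y 1)
        + q4 * (b.repr x 1 * b.repr y 3 - b.repr x 3 * b.repr y 1)) • b 6
      + (b.repr x 2 * b.repr y 3 - b.repr x 3 * b.repr y 2) • b 7 := by
    intro x y
    have hx := b.sum_repr x
    have hy := b.sum_repr y
    rw [Fin.sum_univ_eight] at hx hy
    conv_lhs => rw [← hx, ← hy]
    simp only [add_lie, lie_add, smul_lie, lie_smul, c4, c5, c6, c7, d4, d5, d6, d7, h01, h02,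
      h03, h10, h20, h30, h12, h13, h21, h31, h23, h32, lie_self, smul_zero]
    module
  have r : ∀ (x y : g) (i : Fin 8), b.repr ⁅x, y⁆ i =
      ((b.repr x 0 * b.repr y 1 - b.repr x 1 * b.repr y 0)
        + p2 * (b.repr x 1 * b.repr y 2 - b.repr x 2 * b.repr y 1)
        + q2 * (b.repr x 1 * b.repr y 3 - b.repr x 3 * b.repr y 1)) * (if 4 = i then 1 else 0)
      + ((b.repr x 0 * b.repr y 2 - b.repr x 2 * b.repr y 0)
        + p3 * (b.repr x 1 * b.repr y 2 - b.repr x 2 * b.repr y 1)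
        + q3 * (b.repr x 1 * b.repr y 3 - b.repr x 3 * b.repr y 1)) * (if 5 = i then 1 else 0)
      + ((b.repr x 0 * b.repr y 3 - b.repr x 3 * b.repr y 0)
        + p4 * (b.repr x 1 * b.repr y 2 - b.repr x 2 * b.repr y 1)
        + q4 * (b.repr x 1 * b.repr y 3 - b.repr x 3 * b.repr y 1)) * (if 6 = i then 1 else 0)
      + (b.repr x 2 * b.repr y 3 - b.repr x 3 * b.repr y 2) * (if 7 = i then 1 else 0) := by
    intro x y i
    rw [hbr x y]
    simp only [map_add, map_smul, Finsupp.add_apply, Finsupp.smul_apply, smul_eq_mul,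
      Module.Basis.repr_self_apply]
  let φ : g → g → K := fun x y => b.repr x 4 * b.repr y 1 - b.repr x 5 * b.repr y 3
    + b.repr x 6 * b.repr y 2 + b.repr x 7 * (2 * b.repr y 0 + (p3 + q4) * b.repr y 1)
  refine ⟨fun x y => φ x y - φ y x, ?_, ?_, ?_, ?_, ?_⟩
  · intro a X Y Z
    simp only [φ, map_add, map_smul, Finsupp.add_apply, Finsupp.smul_apply, smul_eq_mul]
    ring
  · intro a X Y Z
    simp only [φ, map_add, map_smul, Finsupp.add_apply, Finsupp.smul_apply, smul_eq_mul]
    ring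
  · intro X; simp
  · intro X h
    have k0 := h (b 0)
    have k1 := h (b 1)
    have k2 := h (b 2)
    have k3 := h (b 3)
    have k4 := h (b 4)
    have k5 := h (b 5)
    have k6 := h (b 6)
    have k7 := h (b 7)
    simp [φ] at k0 k1 k2 k3 k4 k5 k6 k7
    simp [k0, k4] at k1 k7
    apply b.ext_elem
    intro i
    simp only [map_zero, Finsupp.zero_apply]
    fin_cases i <;> simp <;> assumption
  · intro X Y Z
    simp only [φ, r]
    simp
    ring

theorem symplectic_of_eightDim_charSeq32_fourGenerators
    (K : Type*) [RCLike K] (g : Type*) [LieRing g] [LieAlgebra K g] [FiniteDimensional K g]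
    (h2 : IsTwoStepNilpotent g) (h8 : Module.finrank K g = 8)
    (hc : HasCharSeqTwos K g 3)
    (hgen : Module.finrank K (g ⧸ (LieAlgebra.derivedSeries K g 1 : Submodule K g)) = 4) :
    ∃ θ : g → g → K, IsSymplecticForm K g θ := by
  obtain ⟨hnil, -⟩ := h2
  obtain ⟨-, X, hX, hrk⟩ := hc
  set D : Submodule K g := (LieAlgebra.derivedSeries K g 1 : Submodule K g) with hD
  have hXD : X ∉ D := hX
  have hDspan : D = Submodule.span K {m | ∃ x y : g, ⁅x, y⁆ = m} := by
    rw [hD, LieAlgebra.derivedSeries_def, LieAlgebra.derivedSeriesOfIdeal_succ,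
      LieAlgebra.derivedSeriesOfIdeal_zero]
    have h := LieSubmodule.lieIdeal_oper_eq_linear_span' (R := K) (⊤ : LieIdeal K g)
      (⊤ : LieIdeal K g)
    refine Eq.trans h ?_
    simp
  have hmem : ∀ x y : g, ⁅x, y⁆ ∈ D := fun x y => by
    rw [hDspan]; exact Submodule.subset_span ⟨x, y, rfl⟩
  have hcent : ∀ d ∈ D, ∀ y : g, ⁅y, d⁆ = 0 := by
    intro d hd y
    have : D ≤ LinearMap.ker (LieAlgebra.ad K g y) := by
      rw [hDspan, Submodule.span_le]
      rintro _ ⟨u, v, rfl⟩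
      simp only [SetLike.mem_coe, LinearMap.mem_ker, LieAlgebra.ad_apply]
      rw [← lie_skew, hnil, neg_zero]
    simpa using this hd
  have hDdim : Module.finrank K D = 4 := by
    have := D.finrank_quotient_add_finrank
    omega
  set I := LinearMap.range (LieAlgebra.ad K g X) with hI
  set M := LinearMap.ker (LieAlgebra.ad K g X) with hM
  have hMdim : Module.finrank K M = 5 := by
    have h : Module.finrank K I + Module.finrank K M = Module.finrank K g :=
      LinearMap.finrank_range_add_finrank_ker (LieAlgebra.ad K g X)
    omega
  have hID : I ≤ D := by
    rintro _ ⟨y, rfl⟩; exact hmem X y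
  have hDM : D ≤ M := fun d hd => by
    simpa [hM] using hcent d hd X
  have hXM : X ∈ M := by simp [hM]
  have hMeq : ∀ m ∈ M, ∃ a : K, m - a • X ∈ D := by
    have hle : D ⊔ Submodule.span K {X} ≤ M := by
      rw [sup_le_iff, Submodule.span_singleton_le_iff_mem]
      exact ⟨hDM, hXM⟩
    have hlt : D < D ⊔ Submodule.span K {X} := by
      refine lt_of_le_of_ne le_sup_left fun h => hXD ?_
      rw [h]
      exact Submodule.mem_sup_right (Submodule.mem_span_singleton_self X)
    have h1 := Submodule.finrank_lt_finrank_of_lt hlt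
    have heq := Submodule.eq_of_le_of_finrank_le hle (by omega)
    intro m hm
    rw [← heq, Submodule.mem_sup] at hm
    obtain ⟨d, hd, z, hz, rfl⟩ := hm
    obtain ⟨a, rfl⟩ := Submodule.mem_span_singleton.1 hz
    exact ⟨a, by simpa using hd⟩
  -- a functional vanishing on `I` but not on `D`
  obtain ⟨d0, hd0, hd0I⟩ : ∃ d ∈ D, d ∉ I := by
    by_contra! h
    have := Submodule.finrank_mono (show D ≤ I from h)
    omega
  obtain ⟨l, hl0, hlI⟩ := Submodule.exists_le_ker_of_notMem hd0I
  have hlX : ∀ y, l ⁅X, y⁆ = 0 := fun y => hlI ⟨y, rfl⟩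
  obtain ⟨e3, e4, h34⟩ : ∃ e3 e4 : g, l ⁅e3, e4⁆ = 1 := by
    by_contra! h
    have : D ≤ LinearMap.ker l := by
      rw [hDspan, Submodule.span_le]
      rintro _ ⟨u, v, rfl⟩
      by_contra hne
      have hne' : l ⁅u, v⁆ ≠ 0 := hne
      apply h ((l ⁅u, v⁆)⁻¹ • u) v
      rw [smul_lie, map_smul, smul_eq_mul, inv_mul_cancel₀ hne']
    exact hl0 (this hd0)
  obtain ⟨e2, he2M, h32, h42⟩ : ∃ e2 : g, e2 ∉ M ∧ l ⁅e2, e3⁆ = 0 ∧ l ⁅e2, e4⁆ = 0 := by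
    let F : g →ₗ[K] K × K := (l ∘ₗ LieAlgebra.ad K g e3).prod (l ∘ₗ LieAlgebra.ad K g e4)
    have h1 := LinearMap.finrank_range_add_finrank_ker F
    have h3 : Module.finrank K (LinearMap.range F) ≤ 2 := by
      have := Submodule.finrank_le (LinearMap.range F)
      simpa using this
    by_contra! h
    have hle : LinearMap.ker F ≤ M := by
      intro y hy
      by_contra hyM
      have hy' : l ⁅e3, y⁆ = 0 ∧ l ⁅e4, y⁆ = 0 := by simpa [F] using hy
      refine h y hyM ?_ ?_
      · rw [← lie_skew, map_neg, hy'.1, neg_zero]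
      · rw [← lie_skew, map_neg, hy'.2, neg_zero]
    have := Submodule.finrank_mono hle
    omega
  have h43 : l ⁅e4, e3⁆ = -1 := by rw [← lie_skew, map_neg, h34]
  -- independence modulo `D`
  have key : ∀ a1 a2 a3 a4 : K, a1 • X + a2 • e2 + a3 • e3 + a4 • e4 ∈ D →
      a1 = 0 ∧ a2 = 0 ∧ a3 = 0 ∧ a4 = 0 := by
    intro a1 a2 a3 a4 h
    have k3 := congrArg l (hcent _ h e3)
    have k4 := congrArg l (hcent _ h e4)
    rw [← lie_skew] at k3 k4
    simp only [add_lie, smul_lie, map_neg, map_add, map_smul, hlX, h32, h42, h34, h43, lie_self,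
      map_zero, smul_eq_mul] at k3 k4
    have a40 : a4 = 0 := by linear_combination k3
    have a30 : a3 = 0 := by linear_combination -k4
    subst a40 a30
    simp only [zero_smul, add_zero] at h
    have a20 : a2 = 0 := by
      by_contra hne
      apply he2M
      have h5 : a2 • e2 ∈ M := by
        have := M.sub_mem (hDM h) (M.smul_mem a1 hXM)
        simpa using this
      exact (M.smul_mem_iff hne).1 h5
    subst a20
    simp only [zero_smul, add_zero] at h
    refine ⟨?_, rfl, rfl, rfl⟩
    by_contra hne
    exact hXD ((D.smul_mem_iff hne).1 h)
  have keyz : ∀ a2 a3 a4 a5 : K,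
      a2 • ⁅X, e2⁆ + a3 • ⁅X, e3⁆ + a4 • ⁅X, e4⁆ + a5 • ⁅e3, e4⁆ = 0 →
      a2 = 0 ∧ a3 = 0 ∧ a4 = 0 ∧ a5 = 0 := by
    intro a2 a3 a4 a5 h
    have k := congrArg l h
    simp only [map_add, map_smul, hlX, h34, map_zero, smul_eq_mul] at k
    have a50 : a5 = 0 := by linear_combination k
    subst a50
    have hm : a2 • e2 + a3 • e3 + a4 • e4 ∈ M := by
      rw [hM, LinearMap.mem_ker, LieAlgebra.ad_apply, ← h]
      simp
    obtain ⟨a, ha⟩ := hMeq _ hm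
    have := key (-a) a2 a3 a4 (by convert ha using 1; module)
    tauto
  let v : Fin 8 → g := ![X, e2, e3, e4, ⁅X, e2⁆, ⁅X, e3⁆, ⁅X, e4⁆, ⁅e3, e4⁆]
  have hzD : ∀ a b c d : K, a • ⁅X, e2⁆ + b • ⁅X, e3⁆ + c • ⁅X, e4⁆ + d • ⁅e3, e4⁆ ∈ D :=
    fun a b c d => D.add_mem (D.add_mem (D.add_mem (D.smul_mem _ (hmem _ _))
      (D.smul_mem _ (hmem _ _))) (D.smul_mem _ (hmem _ _))) (D.smul_mem _ (hmem _ _))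
  have hli : LinearIndependent K v := by
    rw [Fintype.linearIndependent_iff]
    intro c hsum
    rw [Fin.sum_univ_eight] at hsum
    change c 0 • X + c 1 • e2 + c 2 • e3 + c 3 • e4 + c 4 • ⁅X, e2⁆ + c 5 • ⁅X, e3⁆
      + c 6 • ⁅X, e4⁆ + c 7 • ⁅e3, e4⁆ = 0 at hsum
    have hd : c 0 • X + c 1 • e2 + c 2 • e3 + c 3 • e4 ∈ D := by
      have h1 := D.neg_mem (hzD (c 4) (c 5) (c 6) (c 7))
      convert h1 using 1
      rw [eq_neg_iff_add_eq_zero, ← hsum]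
      module
    obtain ⟨k0, k1, k2, k3⟩ := key _ _ _ _ hd
    rw [k0, k1, k2, k3] at hsum
    obtain ⟨k4, k5, k6, k7⟩ := keyz (c 4) (c 5) (c 6) (c 7) (by rw [← hsum]; module)
    intro i
    fin_cases i <;> assumption
  let b := basisOfLinearIndependentOfCardEqFinrank hli (by simp [h8])
  have hb : ∀ i, b i = v i := fun i => by
    simp [b]
  have hspan : ∀ d ∈ D, l d = 0 → ∃ a2 a3 a4 : K,
      d = a2 • ⁅X, e2⁆ + a3 • ⁅X, e3⁆ + a4 • ⁅X, e4⁆ := by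
    intro d hd hld
    have hs := b.sum_repr d
    rw [Fin.sum_univ_eight] at hs
    simp only [hb] at hs
    generalize b.repr d = c at hs
    change c 0 • X + c 1 • e2 + c 2 • e3 + c 3 • e4 + c 4 • ⁅X, e2⁆ + c 5 • ⁅X, e3⁆
      + c 6 • ⁅X, e4⁆ + c 7 • ⁅e3, e4⁆ = d at hs
    have hd' : c 0 • X + c 1 • e2 + c 2 • e3 + c 3 • e4 ∈ D := by
      have h1 := D.sub_mem hd (hzD (c 4) (c 5) (c 6) (c 7))
      convert h1 using 1
      rw [← hs]
      module
    obtain ⟨k0, k1, k2, k3⟩ := key _ _ _ _ hd'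
    rw [k0, k1, k2, k3] at hs
    have k7 : c 7 = 0 := by
      rw [← hs] at hld
      simpa [hlX, h34] using hld
    refine ⟨c 4, c 5, c 6, ?_⟩
    rw [← hs, k7]
    module
  obtain ⟨p2, p3, p4, hp⟩ := hspan _ (hmem e2 e3) h32
  obtain ⟨q2, q3, q4, hq⟩ := hspan _ (hmem e2 e4) h42
  refine exists_symplectic_of_basis K g b p2 p3 p4 q2 q3 q4 ?_ ?_ ?_ ?_ ?_ ?_ ?_ ?_ ?_ ?_
  all_goals simp only [hb]
  · rfl
  · rfl
  · rfl
  · rfl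
  · exact hp
  · exact hq
  · exact fun x => hnil _ _ x
  · exact fun x => hnil _ _ x
  · exact fun x => hnil _ _ x
  · exact fun x => hnil _ _ x
end

section
/- An 8-dimensional 2-step nilpotent Lie algebra over K (K = ℝ or ℂ) with characteristic sequence (2,2,2,1,1) admits a symplectic form if and only if it is not isomorphic to the Lie algebra with basis X_1,…,X_8 and nonzero brackets [X_1,X_2] = X_3, [X_1,X_4] = X_5, [X_1,X_6] = X_7, [X_2,X_4] = X_7, [X_6,X_8] = X_7 (and those obtained by skew-symmetry). -/
/-- The 8-dimensional 2-step nilpotent Lie algebra realized on `Fin 8 → K` with basis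
`X_i = e_{i-1}` and nonzero brackets `⁅X₁,X₂⁆ = X₃`, `⁅X₁,X₄⁆ = X₅`, `⁅X₁,X₆⁆ = X₇`,
`⁅X₂,X₄⁆ = X₇`, `⁅X₆,X₈⁆ = X₇` (and those obtained by skew-symmetry): the unique
non-symplectic algebra with characteristic sequence `(2,2,2,1,1)`. -/
abbrev NonSympl8 (K : Type*) [RCLike K] : Type _ := Fin 8 → K

namespace NonSympl8

variable {K : Type*} [RCLike K]

/-- The Lie bracket. -/
def brak (x y : NonSympl8 K) : NonSympl8 K := fun i =>
  if i = 2 then x 0 * y 1 - y 0 * x 1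
  else if i = 4 then x 0 * y 3 - y 0 * x 3
  else if i = 6 then x 0 * y 5 - y 0 * x 5 + (x 1 * y 3 - y 1 * x 3) + (x 5 * y 7 - y 5 * x 7)
  else 0

instance (priority := 5000) : LieRing (NonSympl8 K) where
  bracket := brak
  add_lie x y z := by
    funext i
    show brak (x + y) z i = brak x z i + brak y z i
    fin_cases i <;> simp [brak] <;> ring
  lie_add x y z := by
    funext i
    show brak x (y + z) i = brak x y i + brak x z i
    fin_cases i <;> simp [brak] <;> ring
  lie_self x := by
    funext i
    show brak x x i = 0
    fin_cases i <;> simp [brak]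
  leibniz_lie x y z := by
    funext i
    show brak x (brak y z) i = brak (brak x y) z i + brak y (brak x z) i
    fin_cases i <;> simp [brak]

instance (priority := 5000) : LieAlgebra K (NonSympl8 K) where
  lie_smul t x y := by
    funext i
    show brak x (t • y) i = t * brak x y i
    fin_cases i <;> simp [brak] <;> ring

end NonSympl8

section Aux

open Module

variable {K : Type*} [RCLike K] {g : Type*} [LieRing g] [LieAlgebra K g]

/-- A linear function vanishing on a basis vanishes. -/
theorem basis_zero {ι V : Type*} [AddCommGroup V] [Module K V] (b : Basis ι K V) (f : V → K)
    (hadd : ∀ X Y, f (X + Y) = f X + f Y) (hsmul : ∀ (a : K) X, f (a • X) = a * f X)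
    (hb : ∀ p, f (b p) = 0) (X : V) : f X = 0 := by
  let F : V →ₗ[K] K := { toFun := f, map_add' := hadd, map_smul' := hsmul }
  have : F = 0 := b.ext (fun p => hb p)
  exact LinearMap.congr_fun this X

/-- General construction of symplectic forms. -/
theorem symp_generic {ι κ : Type*} [Fintype ι] [Fintype κ] [LinearOrder ι]
    (b : Basis (ι ⊕ κ) K g) (W : κ → ι → ι → K)
    (hW : ∀ l i j, W l i j = - W l j i)
    (hbr : ∀ i j, i < j → ⁅b (Sum.inl i), b (Sum.inl j)⁆ = ∑ l, W l i j • b (Sum.inr l))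
    (hc : ∀ (l : κ) (X : g), ⁅b (Sum.inr l), X⁆ = 0)
    (φ : κ → ι → K) (η : ι → ι → K) (hη : ∀ i j, η i j = - η j i)
    (hclosed : ∀ i j k, i < j → j < k →
      ∑ l, (W l i j * φ l k + W l j k * φ l i + W l k i * φ l j) = 0)
    (hnd : ∀ (u : ι → K) (c : κ → K), (∀ l, ∑ i, φ l i * u i = 0) →
      (∀ j, ∑ l, c l * φ l j + ∑ i, u i * η i j = 0) → (∀ i, u i = 0) ∧ (∀ l, c l = 0)) :
    ∃ θ : g → g → K, IsSymplecticForm K g θ := by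
  have hW0 : ∀ l i, W l i i = 0 := fun l i => self_eq_neg.mp (hW l i i)
  have hbr' : ∀ i j, ⁅b (Sum.inl i), b (Sum.inl j)⁆ = ∑ l, W l i j • b (Sum.inr l) := by
    intro i j
    rcases lt_trichotomy i j with h | h | h
    · exact hbr i j h
    · subst h; simp [hW0]
    · rw [← lie_skew, hbr j i h, ← Finset.sum_neg_distrib]
      refine Finset.sum_congr rfl fun l _ => ?_
      rw [hW l i j, neg_smul]
  have hc' : ∀ (l : κ) (X : g), ⁅X, b (Sum.inr l)⁆ = 0 := by
    intro l X; rw [← lie_skew, hc, neg_zero]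
  have hE : ∀ i j k, ∑ l, (W l i j * φ l k + W l j k * φ l i + W l k i * φ l j) = 0 := by
    have hcyc : ∀ i j k, ∑ l, (W l i j * φ l k + W l j k * φ l i + W l k i * φ l j)
        = ∑ l, (W l j k * φ l i + W l k i * φ l j + W l i j * φ l k) := by
      intro i j k; refine Finset.sum_congr rfl fun l _ => ?_; ring
    have hsw : ∀ i j k, ∑ l, (W l i j * φ l k + W l j k * φ l i + W l k i * φ l j)
        = - ∑ l, (W l j i * φ l k + W l i k * φ l j + W l k j * φ l i) := by
      intro i j k; rw [← Finset.sum_neg_distrib]; refine Finset.sum_congr rfl fun l _ => ?_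
      rw [hW l i j, hW l j k, hW l k i]; ring
    have heq : ∀ i k, ∑ l, (W l i i * φ l k + W l i k * φ l i + W l k i * φ l i) = 0 := by
      intro i k; refine Finset.sum_eq_zero fun l _ => ?_
      rw [hW0, hW l i k]; ring
    have h1 : ∀ i j k, i < j → ∑ l, (W l i j * φ l k + W l j k * φ l i + W l k i * φ l j) = 0 := by
      intro i j k hij
      rcases lt_trichotomy j k with h | h | h
      · exact hclosed i j k hij h
      · subst h; rw [hcyc]; exact heq _ _
      · rcases lt_trichotomy i k with h' | h' | h'
        · rw [hsw, hcyc, hclosed i k j h' h, neg_zero]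
        · subst h'; rw [hcyc, hcyc]; exact heq _ _
        · rw [hcyc, hcyc]; exact hclosed k i j h' hij
    intro i j k
    rcases lt_trichotomy i j with h | h | h
    · exact h1 i j k h
    · subst h; exact heq _ _
    · rw [hsw, h1 j i k h, neg_zero]
  let M : ι ⊕ κ → ι ⊕ κ → K := fun p q => match p, q with
    | Sum.inl i, Sum.inl j => η i j
    | Sum.inl i, Sum.inr l => - φ l i
    | Sum.inr l, Sum.inl i => φ l i
    | Sum.inr _, Sum.inr _ => 0
  let Θ : g →ₗ[K] g →ₗ[K] K := b.constr K (fun p => b.constr K (fun q => M p q))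
  have hΘ : ∀ p q, Θ (b p) (b q) = M p q := by
    intro p q; simp only [Θ, Basis.constr_basis]
  have hll : ∀ i j, Θ (b (Sum.inl i)) (b (Sum.inl j)) = η i j := fun i j => hΘ _ _
  have hlr : ∀ i l, Θ (b (Sum.inl i)) (b (Sum.inr l)) = - φ l i := fun i l => hΘ _ _
  have hrl : ∀ l i, Θ (b (Sum.inr l)) (b (Sum.inl i)) = φ l i := fun i l => hΘ _ _
  have hrr : ∀ l l', Θ (b (Sum.inr l)) (b (Sum.inr l')) = 0 := fun i l => hΘ _ _
  have hskew : ∀ X Y, Θ X Y = - Θ Y X := by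
    have : Θ = - Θ.flip := by
      refine b.ext fun p => b.ext fun q => ?_
      simp only [LinearMap.neg_apply, LinearMap.flip_apply]
      rcases p with i | l <;> rcases q with j | l'
      · rw [hll, hll, hη]
      · rw [hlr, hrl]
      · rw [hlr, hrl, neg_neg]
      · rw [hrr, hrr, neg_zero]
    intro X Y
    exact LinearMap.congr_fun₂ this X Y
  refine ⟨fun X Y => Θ X Y, ?_, ?_, ?_, ?_, ?_⟩
  · intro a X Y Z; simp
  · intro a X Y Z; simp
  · intro X; exact self_eq_neg.mp (hskew X X)
  · intro X hX
    have hexp : ∀ Y, Θ X Y = ∑ i, b.repr X (Sum.inl i) * Θ (b (Sum.inl i)) Y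
        + ∑ l, b.repr X (Sum.inr l) * Θ (b (Sum.inr l)) Y := by
      intro Y
      conv_lhs => rw [← b.sum_repr X]
      simp only [Fintype.sum_sum_type, map_add, map_sum, map_smul, LinearMap.add_apply,
        LinearMap.sum_apply, LinearMap.smul_apply, smul_eq_mul]
    have := hnd (fun i => b.repr X (Sum.inl i)) (fun l => b.repr X (Sum.inr l)) ?_ ?_
    · apply b.ext_elem
      rintro (i | l)
      · simpa using this.1 i
      · simpa using this.2 l
    · intro l
      have h : Θ X (b (Sum.inr l)) = 0 := hX (b (Sum.inr l))
      rw [hexp] at h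
      simp only [hlr, hrr, mul_zero, Finset.sum_const_zero, add_zero, mul_neg,
        Finset.sum_neg_distrib, neg_eq_zero] at h
      rw [← h]; refine Finset.sum_congr rfl fun i _ => mul_comm _ _
    · intro j
      have h : Θ X (b (Sum.inl j)) = 0 := hX (b (Sum.inl j))
      rw [hexp] at h
      simp only [hll, hrl] at h
      rw [add_comm]; exact h
  · have e1 : ∀ p q r, Θ ⁅b p, b q⁆ (b r) + Θ ⁅b q, b r⁆ (b p) + Θ ⁅b r, b p⁆ (b q) = 0 := by
      intro p q r
      rcases p with i | l <;> rcases q with j | l' <;> rcases r with k | l'' <;>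
        simp only [hc, hc', map_zero, LinearMap.zero_apply, add_zero, hbr', map_sum,
          LinearMap.sum_apply, map_smul, LinearMap.smul_apply, hrl, hrr, smul_eq_mul, mul_zero,
          Finset.sum_const_zero]
      rw [← Finset.sum_add_distrib, ← Finset.sum_add_distrib]
      exact hE i j k
    have e2 : ∀ p q Z, Θ ⁅b p, b q⁆ Z + Θ ⁅b q, Z⁆ (b p) + Θ ⁅Z, b p⁆ (b q) = 0 := by
      intro p q
      apply basis_zero b
      · intro X Y; simp; ring
      · intro a X; simp; ring
      · exact e1 p q
    have e3 : ∀ p Y Z, Θ ⁅b p, Y⁆ Z + Θ ⁅Y, Z⁆ (b p) + Θ ⁅Z, b p⁆ Y = 0 := by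
      intro p Y Z
      revert Y
      apply basis_zero b
      · intro X Y; simp; ring
      · intro a X; simp; ring
      · intro q; exact e2 p q Z
    intro X Y Z
    revert X
    apply basis_zero b
    · intro X Y; simp; ring
    · intro a X; simp; ring
    · intro q; exact e3 q Y Z

/-- Linear independence of a triple. -/
theorem li3_iff {V : Type*} [AddCommGroup V] [Module K V] (a b c : V) :
    LinearIndependent K ![a, b, c] ↔
      ∀ r s t : K, r • a + s • b + t • c = 0 → r = 0 ∧ s = 0 ∧ t = 0 := by
  rw [Fintype.linearIndependent_iff]
  constructor
  · intro h r s t hr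
    have := h ![r, s, t] (by simpa [Fin.sum_univ_three] using hr)
    exact ⟨this 0, this 1, this 2⟩
  · intro h f hf
    have := h (f 0) (f 1) (f 2) (by simpa [Fin.sum_univ_three] using hf)
    intro i; fin_cases i
    · exact this.1
    · exact this.2.1
    · exact this.2.2

theorem li3_of_det {V : Type*} [AddCommGroup V] [Module K V] {a b c : V}
    (h : LinearIndependent K ![a, b, c]) {u v w : V} (p11 p12 p13 p21 p22 p23 p31 p32 p33 : K)
    (hu : u = p11 • a + p12 • b + p13 • c) (hv : v = p21 • a + p22 • b + p23 • c)
    (hw : w = p31 • a + p32 • b + p33 • c)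
    (hd : p11 * (p22 * p33 - p23 * p32) - p12 * (p21 * p33 - p23 * p31)
      + p13 * (p21 * p32 - p22 * p31) ≠ 0) : LinearIndependent K ![u, v, w] := by
  rw [li3_iff] at h ⊢
  intro r s t hr
  subst hu hv hw
  obtain ⟨h1, h2, h3⟩ := h (r * p11 + s * p21 + t * p31) (r * p12 + s * p22 + t * p32)
    (r * p13 + s * p23 + t * p33) (by rw [← hr]; module)
  refine ⟨?_, ?_, ?_⟩ <;> refine (mul_eq_zero.mp ?_).resolve_left hd
  · linear_combination (p22 * p33 - p23 * p32) * h1 - (p21 * p33 - p23 * p31) * h2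
      + (p21 * p32 - p22 * p31) * h3
  · linear_combination -(p12 * p33 - p13 * p32) * h1 + (p11 * p33 - p13 * p31) * h2
      - (p11 * p32 - p12 * p31) * h3
  · linear_combination (p12 * p23 - p13 * p22) * h1 - (p11 * p23 - p13 * p21) * h2
      + (p11 * p22 - p12 * p21) * h3

theorem span3 {V : Type*} [AddCommGroup V] [Module K V] (h3 : finrank K V = 3) {a b c : V}
    (h : LinearIndependent K ![a, b, c]) (v : V) : ∃ r s t : K, v = r • a + s • b + t • c := by
  have := h.span_eq_top_of_card_eq_finrank (by simp [h3])
  have hv : v ∈ Submodule.span K (Set.range ![a, b, c]) := by rw [this]; trivial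
  rw [Submodule.mem_span_range_iff_exists_fun] at hv
  obtain ⟨f, hf⟩ := hv
  exact ⟨f 0, f 1, f 2, by rw [← hf]; simp [Fin.sum_univ_three]⟩

/-- Endomorphisms of a three-dimensional space. -/
theorem trichotomy {V : Type*} [AddCommGroup V] [Module K V] (h3 : finrank K V = 3)
    (L : V →ₗ[K] V) :
    (∃ v, LinearIndependent K ![v, L v, L (L v)]) ∨
    (∃ (μ β : K) (v v1 u : V), LinearIndependent K ![v, v1, u] ∧ L v - μ • v = v1 ∧
      L v1 - μ • v1 = β • v1 ∧ L u - μ • u = 0) ∨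
    (∃ μ : K, ∀ v, L v - μ • v = 0) := by
  by_cases hcyc : ∃ v, LinearIndependent K ![v, L v, L (L v)]
  · exact Or.inl hcyc
  right
  push Not at hcyc
  by_cases hsc : ∀ v, ¬ LinearIndependent K ![v, L v]
  · right
    have : FiniteDimensional K V := .of_finrank_pos (by omega)
    obtain ⟨μ, hμ⟩ := LinearMap.exists_eq_smul_id_of_forall_notLinearIndependent hsc
    exact ⟨μ, fun v => by simp [hμ]⟩
  left
  push Not at hsc
  obtain ⟨v, hv⟩ := hsc
  obtain ⟨u, hu⟩ := exists_linearIndependent_snoc_of_lt_finrank hv (by omega)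
  have hu : LinearIndependent K ![v, L v, u] := by
    have he : (Fin.snoc ![v, L v] u : Fin 3 → V) = ![v, L v, u] := by
      ext i; fin_cases i <;> rfl
    exact he ▸ hu
  obtain ⟨γ, δ, μ, hLu⟩ := span3 h3 hu (L u)
  obtain ⟨α, β, ν, hLL⟩ := span3 h3 hu (L (L v))
  have hν : ν = 0 := by
    by_contra hν
    exact hcyc v (li3_of_det hu 1 0 0 0 1 0 α β ν (by simp) (by simp) hLL (by simpa using hν))
  subst hν
  -- shifted operator
  have hcyc' : ∀ y p q : V, L y = p + μ • y → L p = q + μ • p →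
      ¬ LinearIndependent K ![y, p, q] := by
    intro y p q h1 h2 hli
    refine hcyc y (li3_of_det hli 1 0 0 μ 1 0 (μ ^ 2) (2 * μ) 1 (by simp) (by rw [h1]; module)
      (by rw [h1, map_add, map_smul, h2, h1]; module) (by norm_num))
  obtain ⟨v1, hv1⟩ : ∃ v1, v1 = L v - μ • v := ⟨_, rfl⟩
  have hLv : L v = v1 + μ • v := by rw [hv1]; abel
  have hli1 : LinearIndependent K ![v, v1, u] :=
    li3_of_det hu 1 0 0 (-μ) 1 0 0 0 1 (by simp) (by rw [hv1]; module) (by simp) (by norm_num)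
  obtain ⟨α', β', hv1'⟩ : ∃ α' β' : K, L v1 = α' • v + β' • v1 + μ • v1 := by
    refine ⟨α + β * μ - μ ^ 2, β - 2 * μ, ?_⟩
    have : L v1 = α • v + β • L v - μ • L v := by
      rw [hv1, map_sub, map_smul, hLL]; module
    rw [this, hLv]; module
  obtain ⟨γ', u', hu'⟩ : ∃ (γ' : K) (u' : V), LinearIndependent K ![v, v1, u'] ∧
      L u' = γ' • v + μ • u' := by
    refine ⟨γ + δ * μ, u - δ • v, li3_of_det hli1 1 0 0 0 1 0 (-δ) 0 1 (by simp) (by simp)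
      (by module) (by norm_num), ?_⟩
    rw [map_sub, map_smul, hLu, hLv]; module
  obtain ⟨hli2, hLu'⟩ := hu'
  have key : ∀ ε : K, ε * (ε * γ' * (β' + ε * γ') - α') = 0 := by
    intro ε
    by_contra hne
    refine hcyc' (v + ε • u') (v1 + (ε * γ') • v) (α' • v + (β' + ε * γ') • v1) ?_ ?_
      (li3_of_det hli2 1 0 ε (ε * γ') 1 0 α' (β' + ε * γ') 0 (by module) (by module)
        (by module) (by intro h; apply hne; linear_combination h))
    · rw [map_add, map_smul, hLv, hLu']; module
    · rw [map_add, map_smul, hLv, hv1']; module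
  have k1 := key 1
  have k2 := key (-1)
  have k3 := key 2
  have hγ : γ' = 0 := by
    have : γ' ^ 2 = 0 := by linear_combination (1/6) * (k3 - 3 * k1 - k2)
    exact pow_eq_zero_iff (two_ne_zero) |>.mp this
  have hα : α' = 0 := by subst hγ; linear_combination -k1
  subst hγ hα
  exact ⟨μ, β', v, v1, u', hli2, by rw [hLv]; abel, by rw [hv1']; module, by rw [hLu']; module⟩

theorem fin5_pairs (P : Fin 5 → Fin 5 → Prop) (h01 : P 0 1) (h02 : P 0 2) (h03 : P 0 3)
    (h04 : P 0 4) (h12 : P 1 2) (h13 : P 1 3) (h14 : P 1 4) (h23 : P 2 3) (h24 : P 2 4)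
    (h34 : P 3 4) (i j : Fin 5) (h : i < j) : P i j := by
  fin_cases i <;> fin_cases j <;> first | assumption | (exfalso; revert h; decide)

theorem fin5_triples (P : Fin 5 → Fin 5 → Fin 5 → Prop) (h012 : P 0 1 2) (h013 : P 0 1 3)
    (h014 : P 0 1 4) (h023 : P 0 2 3) (h024 : P 0 2 4) (h034 : P 0 3 4) (h123 : P 1 2 3)
    (h124 : P 1 2 4) (h134 : P 1 3 4) (h234 : P 2 3 4)
    (i j k : Fin 5) (h : i < j) (h' : j < k) : P i j k := by
  fin_cases i <;> fin_cases j <;>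
    first
    | (exfalso; revert h; decide)
    | (fin_cases k <;> first | assumption | (exfalso; revert h'; decide))

theorem fin4_pairs (P : Fin 4 → Fin 4 → Prop) (h01 : P 0 1) (h02 : P 0 2) (h03 : P 0 3)
    (h12 : P 1 2) (h13 : P 1 3) (h23 : P 2 3) (i j : Fin 4) (h : i < j) : P i j := by
  fin_cases i <;> fin_cases j <;> first | assumption | (exfalso; revert h; decide)

theorem fin4_triples (P : Fin 4 → Fin 4 → Fin 4 → Prop) (h012 : P 0 1 2) (h013 : P 0 1 3)
    (h023 : P 0 2 3) (h123 : P 1 2 3)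
    (i j k : Fin 4) (h : i < j) (h' : j < k) : P i j k := by
  fin_cases i <;> fin_cases j <;>
    first
    | (exfalso; revert h; decide)
    | (fin_cases k <;> first | assumption | (exfalso; revert h'; decide))

theorem frame_basis [FiniteDimensional K g] (h2 : ∀ X Y Z : g, ⁅⁅X, Y⁆, Z⁆ = 0)
    (h8 : finrank K g = 8) (x w y1 y2 y3 : g) (hxw : ⁅x, w⁆ = 0)
    (hind : ∀ (α γ : K) (r : g), α • x + γ • w + ⁅x, r⁆ = 0 → α = 0 ∧ γ = 0)
    (hz : LinearIndependent K ![⁅x, y1⁆, ⁅x, y2⁆, ⁅x, y3⁆]) :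
    ∃ b : Basis (Fin 8) K g, ⇑b = ![x, y1, y2, y3, w, ⁅x, y1⁆, ⁅x, y2⁆, ⁅x, y3⁆] := by
  have h2' : ∀ X Y Z : g, ⁅X, ⁅Y, Z⁆⁆ = 0 := by
    intro X Y Z; rw [← lie_skew, h2, neg_zero]
  have hli : LinearIndependent K ![x, y1, y2, y3, w, ⁅x, y1⁆, ⁅x, y2⁆, ⁅x, y3⁆] := by
    rw [Fintype.linearIndependent_iff]
    intro f hf
    rw [li3_iff] at hz
    simp only [Fin.sum_univ_eight] at hf
    simp at hf
    obtain ⟨e1, e2, e3⟩ := hz (f 1) (f 2) (f 3) (by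
      have := congrArg (fun v => ⁅x, v⁆) hf
      simpa [h2', hxw] using this)
    obtain ⟨e0, e4⟩ := hind (f 0) (f 4) (f 5 • y1 + f 6 • y2 + f 7 • y3) (by
      rw [← hf, e1, e2, e3]; simp only [lie_add, lie_smul]; module)
    obtain ⟨e5, e6, e7⟩ := hz (f 5) (f 6) (f 7) (by
      rw [← hf, e1, e2, e3, e0, e4]; module)
    intro i; fin_cases i <;> assumption
  exact ⟨basisOfLinearIndependentOfCardEqFinrank hli (by simp [h8]), by simp⟩

set_option maxHeartbeats 2000000 in
/-- Sufficient condition in the case `dim [g,g] = 3`. -/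
theorem good53 [FiniteDimensional K g] (h2 : ∀ X Y Z : g, ⁅⁅X, Y⁆, Z⁆ = 0)
    (h8 : finrank K g = 8) (x w y1 y2 y3 z1 z2 z3 : g) (hxw : ⁅x, w⁆ = 0)
    (hind : ∀ (α γ : K) (r : g), α • x + γ • w + ⁅x, r⁆ = 0 → α = 0 ∧ γ = 0)
    (hz1 : ⁅x, y1⁆ = z1) (hz2 : ⁅x, y2⁆ = z2) (hz3 : ⁅x, y3⁆ = z3)
    (hz : LinearIndependent K ![z1, z2, z3])
    (b11 b12 b13 b21 b22 b23 b31 b32 b33 c11 c12 c13 c21 c22 c23 c31 c32 c33 : K)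
    (hB1 : ⁅y1, w⁆ = b11 • z1 + b21 • z2 + b31 • z3)
    (hB2 : ⁅y2, w⁆ = b12 • z1 + b22 • z2 + b32 • z3)
    (hB3 : ⁅y3, w⁆ = b13 • z1 + b23 • z2 + b33 • z3)
    (hC1 : ⁅y2, y3⁆ = c11 • z1 + c21 • z2 + c31 • z3)
    (hC2 : ⁅y3, y1⁆ = c12 • z1 + c22 • z2 + c32 • z3)
    (hC3 : ⁅y1, y2⁆ = c13 • z1 + c23 • z2 + c33 • z3)
    (a1 a2 a3 s11 s12 s13 s21 s22 s23 s31 s32 s33 t1 t2 t3 : K)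
    (E1 : s23 - s32 + (c11 * a1 + c21 * a2 + c31 * a3) = 0)
    (E2 : s31 - s13 + (c12 * a1 + c22 * a2 + c32 * a3) = 0)
    (E3 : s12 - s21 + (c13 * a1 + c23 * a2 + c33 * a3) = 0)
    (E4 : t1 + (b11 * a1 + b21 * a2 + b31 * a3) = 0)
    (E5 : t2 + (b12 * a1 + b22 * a2 + b32 * a3) = 0)
    (E6 : t3 + (b13 * a1 + b23 * a2 + b33 * a3) = 0)
    (E7 : c11 * s11 + c12 * s12 + c13 * s13 + c21 * s21 + c22 * s22 + c23 * s23
      + c31 * s31 + c32 * s32 + c33 * s33 = 0)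
    (E8 : -(b12 * s13 + b22 * s23 + b32 * s33) + (b13 * s12 + b23 * s22 + b33 * s32)
      + (c11 * t1 + c21 * t2 + c31 * t3) = 0)
    (E9 : -(b13 * s11 + b23 * s21 + b33 * s31) + (b11 * s13 + b21 * s23 + b31 * s33)
      + (c12 * t1 + c22 * t2 + c32 * t3) = 0)
    (E10 : -(b11 * s12 + b21 * s22 + b31 * s32) + (b12 * s11 + b22 * s21 + b32 * s31)
      + (c13 * t1 + c23 * t2 + c33 * t3) = 0)
    (hrow : ∀ p q r : K, p * a1 + q * a2 + r * a3 = 0 → p * s11 + q * s21 + r * s31 = 0 →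
      p * s12 + q * s22 + r * s32 = 0 → p * s13 + q * s23 + r * s33 = 0 →
      p * t1 + q * t2 + r * t3 = 0 → p = 0 ∧ q = 0 ∧ r = 0) :
    ∃ θ : g → g → K, IsSymplecticForm K g θ := by
  subst hz1 hz2 hz3
  obtain ⟨b, hb⟩ := frame_basis h2 h8 x w y1 y2 y3 hxw hind hz
  have hC2' : ⁅y1, y3⁆ = -(c12 • ⁅x, y1⁆ + c22 • ⁅x, y2⁆ + c32 • ⁅x, y3⁆) := by
    rw [← hC2, lie_skew]
  let φ : Fin 3 → Fin 5 → K :=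
    ![![a1, s11, s12, s13, t1], ![a2, s21, s22, s23, t2], ![a3, s31, s32, s33, t3]]
  let W : Fin 3 → Fin 5 → Fin 5 → K := ![
    ![![0, 1, 0, 0, 0], ![-1, 0, c13, -c12, b11], ![0, -c13, 0, c11, b12],
      ![0, c12, -c11, 0, b13], ![0, -b11, -b12, -b13, 0]],
    ![![0, 0, 1, 0, 0], ![0, 0, c23, -c22, b21], ![-1, -c23, 0, c21, b22],
      ![0, c22, -c21, 0, b23], ![0, -b21, -b22, -b23, 0]],
    ![![0, 0, 0, 1, 0], ![0, 0, c33, -c32, b31], ![0, -c33, 0, c31, b32],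
      ![-1, c32, -c31, 0, b33], ![0, -b31, -b32, -b33, 0]]]
  have hφ : LinearIndependent K φ := by
    have : φ = ![φ 0, φ 1, φ 2] := by ext i; fin_cases i <;> rfl
    rw [this, li3_iff]
    intro p q r h
    have h0 := congrFun h 0
    have h1 := congrFun h 1
    have h2 := congrFun h 2
    have h3 := congrFun h 3
    have h4 := congrFun h 4
    simp [φ] at h0 h1 h2 h3 h4
    exact hrow p q r h0 h1 h2 h3 h4
  obtain ⟨P, hP⟩ := exists_linearIndependent_cons_of_lt_finrank hφ (by simp)
  obtain ⟨Q, hQ⟩ := exists_linearIndependent_cons_of_lt_finrank hP (by simp)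
  have hspan := hQ.span_eq_top_of_card_eq_finrank (by simp)
  let b' := b.reindex (finSumFinEquiv (m := 5) (n := 3)).symm
  have i0 : b' (Sum.inl 0) = x := by simp only [b']; rw [Basis.reindex_apply, hb]; rfl
  have i1 : b' (Sum.inl 1) = y1 := by simp only [b']; rw [Basis.reindex_apply, hb]; rfl
  have i2 : b' (Sum.inl 2) = y2 := by simp only [b']; rw [Basis.reindex_apply, hb]; rfl
  have i3 : b' (Sum.inl 3) = y3 := by simp only [b']; rw [Basis.reindex_apply, hb]; rfl
  have i4 : b' (Sum.inl 4) = w := by simp only [b']; rw [Basis.reindex_apply, hb]; rfl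
  have j0 : b' (Sum.inr 0) = ⁅x, y1⁆ := by simp only [b']; rw [Basis.reindex_apply, hb]; rfl
  have j1 : b' (Sum.inr 1) = ⁅x, y2⁆ := by simp only [b']; rw [Basis.reindex_apply, hb]; rfl
  have j2 : b' (Sum.inr 2) = ⁅x, y3⁆ := by simp only [b']; rw [Basis.reindex_apply, hb]; rfl
  clear_value b'
  refine symp_generic b' W ?_ ?_ ?_ φ (fun i j => P i * Q j - Q i * P j) ?_ ?_ ?_
  · intro l i j
    fin_cases l <;> fin_cases i <;> fin_cases j <;> simp [W]
  · apply fin5_pairs <;> rw [Fin.sum_univ_three] <;>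
      simp only [i0, i1, i2, i3, i4, j0, j1, j2, hxw, hB1, hB2, hB3, hC1, hC3, hC2'] <;>
      simp [W, -neg_add_rev] <;> module
  · intro l X
    fin_cases l
    · exact j0 ▸ h2 x y1 X
    · exact j1 ▸ h2 x y2 X
    · exact j2 ▸ h2 x y3 X
  · intro i j; ring
  · apply fin5_triples <;> rw [Fin.sum_univ_three] <;> simp [W, φ]
    · linear_combination E3
    · linear_combination -E2
    · linear_combination E4
    · linear_combination E1
    · linear_combination E5
    · linear_combination E6
    · linear_combination E7
    · linear_combination E10
    · linear_combination -E9
    · linear_combination E8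
  · intro u c hu hc
    rw [Fintype.linearIndependent_iff] at hQ
    have key := hQ (Fin.cons (∑ i, u i * P i) (Fin.cons (-∑ i, u i * Q i) c)) (by
      funext j
      have := hc j
      simp only [mul_sub, Finset.sum_sub_distrib, ← mul_assoc, ← Finset.sum_mul] at this
      simp only [Fin.sum_univ_succ, Fin.cons_zero, Fin.cons_succ] at this ⊢
      simp at this ⊢
      linear_combination this)
    have hP0 : ∑ i, u i * P i = 0 := key 0
    have hQ0 : ∑ i, u i * Q i = 0 := neg_eq_zero.mp (key 1)
    have hc0 : ∀ l, c l = 0 := fun l => key l.succ.succ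
    refine ⟨?_, hc0⟩
    have hall : ∀ v : Fin 5 → K, ∑ i, v i * u i = 0 := by
      intro v
      have hv : v ∈ Submodule.span K (Set.range (Fin.cons Q (Fin.cons P φ : Fin 4 → Fin 5 → K))) := by
        rw [hspan]; trivial
      induction hv using Submodule.span_induction with
      | mem v hv =>
        obtain ⟨i, rfl⟩ := hv
        refine Fin.cases ?_ (fun i => Fin.cases ?_ (fun i => ?_) i) i
        · simpa [mul_comm] using hQ0
        · simpa [mul_comm] using hP0
        · exact hu i
      | zero => simp
      | add v v' _ _ h h' => simp [add_mul, Finset.sum_add_distrib, h, h']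
      | smul a v _ h => simp [mul_assoc, ← Finset.mul_sum, h]
    intro i
    simpa [Pi.single_apply] using hall (Pi.single i 1)

/-- The case `dim [g,g] = 4`. -/
theorem good44 [FiniteDimensional K g] (h2 : ∀ X Y Z : g, ⁅⁅X, Y⁆, Z⁆ = 0)
    (h8 : finrank K g = 8) (x w y1 y2 y3 z1 z2 z3 : g) (hw : ∀ X : g, ⁅w, X⁆ = 0)
    (hind : ∀ (α γ : K) (r : g), α • x + γ • w + ⁅x, r⁆ = 0 → α = 0 ∧ γ = 0)
    (hz1 : ⁅x, y1⁆ = z1) (hz2 : ⁅x, y2⁆ = z2) (hz3 : ⁅x, y3⁆ = z3)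
    (hz : LinearIndependent K ![z1, z2, z3])
    (c11 c12 c13 c21 c22 c23 c31 c32 c33 k1 k2 k3 : K)
    (hC1 : ⁅y2, y3⁆ = c11 • z1 + c21 • z2 + c31 • z3 + k1 • w)
    (hC2 : ⁅y3, y1⁆ = c12 • z1 + c22 • z2 + c32 • z3 + k2 • w)
    (hC3 : ⁅y1, y2⁆ = c13 • z1 + c23 • z2 + c33 • z3 + k3 • w)
    (hk : ¬ (k1 = 0 ∧ k2 = 0 ∧ k3 = 0)) :
    ∃ θ : g → g → K, IsSymplecticForm K g θ := by
  subst hz1 hz2 hz3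
  have hxw : ⁅x, w⁆ = 0 := by rw [← lie_skew, hw, neg_zero]
  obtain ⟨b, hb⟩ := frame_basis h2 h8 x w y1 y2 y3 hxw hind hz
  have hC2' : ⁅y1, y3⁆ = -(c12 • ⁅x, y1⁆ + c22 • ⁅x, y2⁆ + c32 • ⁅x, y3⁆ + k2 • w) := by
    rw [← hC2, lie_skew]
  obtain ⟨t1, t2, t3, ht⟩ : ∃ t1 t2 t3 : K, k1 * t1 + k2 * t2 + k3 * t3 +
      (c11 + c22 + c33 + c32 * k1 - c31 * k2 + c21 * k3) = 0 := by
    by_cases h1 : k1 = 0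
    · by_cases h2 : k2 = 0
      · have h3 : k3 ≠ 0 := fun h3 => hk ⟨h1, h2, h3⟩
        exact ⟨0, 0, -(c11 + c22 + c33 + c32 * k1 - c31 * k2 + c21 * k3) / k3,
          by field_simp; ring⟩
      · exact ⟨0, -(c11 + c22 + c33 + c32 * k1 - c31 * k2 + c21 * k3) / k2, 0,
          by field_simp; ring⟩
    · exact ⟨-(c11 + c22 + c33 + c32 * k1 - c31 * k2 + c21 * k3) / k1, 0, 0,
          by field_simp; ring⟩
  let φ : Fin 4 → Fin 4 → K :=
    ![![1, t1, t2, t3], ![0, 1, 0, 0], ![0, k3, 1, 0], ![0, -k2, k1, 1]]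
  let W : Fin 4 → Fin 4 → Fin 4 → K := ![
    ![![0, 0, 0, 0], ![0, 0, k3, -k2], ![0, -k3, 0, k1], ![0, k2, -k1, 0]],
    ![![0, 1, 0, 0], ![-1, 0, c13, -c12], ![0, -c13, 0, c11], ![0, c12, -c11, 0]],
    ![![0, 0, 1, 0], ![0, 0, c23, -c22], ![-1, -c23, 0, c21], ![0, c22, -c21, 0]],
    ![![0, 0, 0, 1], ![0, 0, c33, -c32], ![0, -c33, 0, c31], ![-1, c32, -c31, 0]]]
  let b' := b.reindex (finSumFinEquiv (m := 4) (n := 4)).symm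
  have i0 : b' (Sum.inl 0) = x := by simp only [b']; rw [Basis.reindex_apply, hb]; rfl
  have i1 : b' (Sum.inl 1) = y1 := by simp only [b']; rw [Basis.reindex_apply, hb]; rfl
  have i2 : b' (Sum.inl 2) = y2 := by simp only [b']; rw [Basis.reindex_apply, hb]; rfl
  have i3 : b' (Sum.inl 3) = y3 := by simp only [b']; rw [Basis.reindex_apply, hb]; rfl
  have i4 : b' (Sum.inr 0) = w := by simp only [b']; rw [Basis.reindex_apply, hb]; rfl
  have j0 : b' (Sum.inr 1) = ⁅x, y1⁆ := by simp only [b']; rw [Basis.reindex_apply, hb]; rfl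
  have j1 : b' (Sum.inr 2) = ⁅x, y2⁆ := by simp only [b']; rw [Basis.reindex_apply, hb]; rfl
  have j2 : b' (Sum.inr 3) = ⁅x, y3⁆ := by simp only [b']; rw [Basis.reindex_apply, hb]; rfl
  clear_value b'
  refine symp_generic b' W ?_ ?_ ?_ φ (fun i j => 0) ?_ ?_ ?_
  · intro l i j
    fin_cases l <;> fin_cases i <;> fin_cases j <;> simp [W]
  · apply fin4_pairs <;> rw [Fin.sum_univ_four] <;>
      simp only [i0, i1, i2, i3, i4, j0, j1, j2, hC1, hC3, hC2'] <;>
      simp [W, -neg_add_rev] <;> module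
  · intro l X
    fin_cases l
    · exact i4 ▸ hw X
    · exact j0 ▸ h2 x y1 X
    · exact j1 ▸ h2 x y2 X
    · exact j2 ▸ h2 x y3 X
  · intro i j; simp
  · apply fin4_triples <;> rw [Fin.sum_univ_four] <;> simp [W, φ]
    · linear_combination ht
  · intro u c hu hc
    have u0 := hu 0
    have u1 := hu 1
    have u2 := hu 2
    have u3 := hu 3
    have d0 := hc 0
    have d1 := hc 1
    have d2 := hc 2
    have d3 := hc 3
    simp [φ, Fin.sum_univ_four] at u0 u1 u2 u3 d0 d1 d2 d3
    have v2 : u 2 = 0 := by linear_combination u2 - k3 * u1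
    have v3 : u 3 = 0 := by linear_combination u3 + k2 * u1 - k1 * v2
    have v0 : u 0 = 0 := by linear_combination u0 - t1 * u1 - t2 * v2 - t3 * v3
    have w3 : c 3 = 0 := by linear_combination d3 - t3 * d0
    have w2 : c 2 = 0 := by linear_combination d2 - t2 * d0 - k1 * w3
    have w1 : c 1 = 0 := by linear_combination d1 - t1 * d0 - k3 * w2 + k2 * w3
    constructor <;> intro i <;> fin_cases i <;> assumption

/-- Recognizing the exceptional algebra. -/
theorem iso_of [FiniteDimensional K g] (h2 : ∀ X Y Z : g, ⁅⁅X, Y⁆, Z⁆ = 0)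
    (h8 : finrank K g = 8) (x w y1 y2 y3 z1 z2 z3 : g) (hxw : ⁅x, w⁆ = 0)
    (hind : ∀ (α γ : K) (r : g), α • x + γ • w + ⁅x, r⁆ = 0 → α = 0 ∧ γ = 0)
    (hz1 : ⁅x, y1⁆ = z1) (hz2 : ⁅x, y2⁆ = z2) (hz3 : ⁅x, y3⁆ = z3)
    (hz : LinearIndependent K ![z1, z2, z3])
    (h1w : ⁅y1, w⁆ = 0) (h2w : ⁅y2, w⁆ = 0) (h3w : ⁅y3, w⁆ = z3)
    (h12 : ⁅y1, y2⁆ = z3) (h13 : ⁅y1, y3⁆ = 0) (h23 : ⁅y2, y3⁆ = 0) :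
    Nonempty (g ≃ₗ⁅K⁆ NonSympl8 K) := by
  obtain ⟨b, hb⟩ := frame_basis h2 h8 x w y1 y2 y3 hxw hind (by rw [hz1, hz2, hz3]; exact hz)
  rw [hz1, hz2, hz3] at hb
  have hz1c : ∀ X : g, ⁅z1, X⁆ = 0 := fun X => by rw [← hz1, h2]
  have hz2c : ∀ X : g, ⁅z2, X⁆ = 0 := fun X => by rw [← hz2, h2]
  have hz3c : ∀ X : g, ⁅z3, X⁆ = 0 := fun X => by rw [← hz3, h2]
  have hz1d : ∀ X : g, ⁅X, z1⁆ = 0 := fun X => by rw [← lie_skew, hz1c, neg_zero]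
  have hz2d : ∀ X : g, ⁅X, z2⁆ = 0 := fun X => by rw [← lie_skew, hz2c, neg_zero]
  have hz3d : ∀ X : g, ⁅X, z3⁆ = 0 := fun X => by rw [← lie_skew, hz3c, neg_zero]
  have hwx : ⁅w, x⁆ = 0 := by rw [← lie_skew, hxw, neg_zero]
  have r1 : ⁅y1, x⁆ = -z1 := by rw [← lie_skew, hz1]
  have r2 : ⁅y2, x⁆ = -z2 := by rw [← lie_skew, hz2]
  have r3 : ⁅y3, x⁆ = -z3 := by rw [← lie_skew, hz3]
  have r4 : ⁅w, y1⁆ = 0 := by rw [← lie_skew, h1w, neg_zero]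
  have r5 : ⁅w, y2⁆ = 0 := by rw [← lie_skew, h2w, neg_zero]
  have r6 : ⁅w, y3⁆ = -z3 := by rw [← lie_skew, h3w]
  have r7 : ⁅y2, y1⁆ = -z3 := by rw [← lie_skew, h12]
  have r8 : ⁅y3, y1⁆ = 0 := by rw [← lie_skew, h13, neg_zero]
  have r9 : ⁅y3, y2⁆ = 0 := by rw [← lie_skew, h23, neg_zero]
  have hli : LinearIndependent K ![x, y1, z1, y2, z2, y3, z3, w] := by
    have h := b.linearIndependent.comp (![0, 1, 5, 2, 6, 3, 7, 4] : Fin 8 → Fin 8) (by decide)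
    have he : (⇑b ∘ (![0, 1, 5, 2, 6, 3, 7, 4] : Fin 8 → Fin 8)) =
        ![x, y1, z1, y2, z2, y3, z3, w] := by
      rw [hb]; ext i; fin_cases i <;> rfl
    rwa [he] at h
  let b' := basisOfLinearIndependentOfCardEqFinrank hli (by simp [h8])
  have hb' : ⇑b' = ![x, y1, z1, y2, z2, y3, z3, w] := by simp [b']
  let e : NonSympl8 K ≃ₗ[K] g := b'.equivFun.symm
  have he : ∀ c : NonSympl8 K, e c = c 0 • x + c 1 • y1 + c 2 • z1 + c 3 • y2 + c 4 • z2
      + c 5 • y3 + c 6 • z3 + c 7 • w := by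
    intro c
    simp [e, Basis.equivFun_symm_apply, hb', Fin.sum_univ_eight]
  have hmap : ∀ c d : NonSympl8 K, e ⁅c, d⁆ = ⁅e c, e d⁆ := by
    intro c d
    rw [he ⁅c, d⁆, he c, he d]
    have hbr : ⁅c, d⁆ = NonSympl8.brak c d := rfl
    rw [hbr]
    simp only [lie_add, add_lie, lie_smul, smul_lie, lie_self, hz1, hz2, hz3, hxw, hwx, hz1c, hz2c,
      hz3c, hz1d, hz2d, hz3d, r1, r2, r3, r4, r5, r6, r7, r8, r9, h1w, h2w, h3w, h12, h13, h23]
    simp [NonSympl8.brak]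
    module
  exact ⟨LieEquiv.symm { e with map_lie' := fun {c d} => hmap c d }⟩

/-- The exceptional algebra is not symplectic. -/
theorem nonsymp (e : g ≃ₗ⁅K⁆ NonSympl8 K) (θ : g → g → K) (h : IsSymplecticForm K g θ) : False := by
  obtain ⟨hl, hr, halt, hnd, hcl⟩ := h
  have hl0 : ∀ Y, θ 0 Y = 0 := fun Y => by have := hl 1 0 0 Y; simpa using this
  have hr0 : ∀ Y, θ Y 0 = 0 := fun Y => by have := hr 1 Y 0 0; simpa using this
  have hln : ∀ X Y, θ (-X) Y = - θ X Y := fun X Y => by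
    have := hl (-1) X 0 Y; simpa [hl0] using this
  have hradd : ∀ X Y Z, θ X (Y + Z) = θ X Y + θ X Z := fun X Y Z => by
    have := hr 1 X Y Z; simpa using this
  have hrsmul : ∀ (a : K) X Y, θ X (a • Y) = a * θ X Y := fun a X Y => by
    have := hr a X Y 0; simpa [hr0] using this
  let E : Fin 8 → NonSympl8 K := fun i => Pi.single i 1
  let X : Fin 8 → g := fun i => e.symm (E i)
  have hX : ∀ i j, ⁅X i, X j⁆ = e.symm (NonSympl8.brak (E i) (E j)) := by
    intro i j
    have : NonSympl8.brak (E i) (E j) = ⁅E i, E j⁆ := rfl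
    rw [this, LieEquiv.map_lie]
  have z : ∀ i j, NonSympl8.brak (E i) (E j) = 0 → ⁅X i, X j⁆ = 0 := by
    intro i j hij; rw [hX, hij, map_zero]
  have p : ∀ i j k, NonSympl8.brak (E i) (E j) = E k → ⁅X i, X j⁆ = X k := by
    intro i j k hij; rw [hX, hij]
  have b57 : ⁅X 5, X 7⁆ = X 6 := p _ _ _ (by
    ext i; fin_cases i <;> simp [E, NonSympl8.brak, Pi.single_apply])
  have b13 : ⁅X 1, X 3⁆ = X 6 := p _ _ _ (by
    ext i; fin_cases i <;> simp [E, NonSympl8.brak, Pi.single_apply])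
  have b05 : ⁅X 0, X 5⁆ = X 6 := p _ _ _ (by
    ext i; fin_cases i <;> simp [E, NonSympl8.brak, Pi.single_apply])
  have zz : ∀ i ∈ ({1, 2, 3, 4} : Finset (Fin 8)), ⁅X 7, X i⁆ = 0 ∧ ⁅X i, X 5⁆ = 0 := by
    intro i hi
    constructor <;> apply z <;> fin_cases hi <;> ext i <;> fin_cases i <;>
      simp [E, NonSympl8.brak, Pi.single_apply]
  have zw : ∀ i ∈ ({5, 7} : Finset (Fin 8)), ⁅X 3, X i⁆ = 0 ∧ ⁅X i, X 1⁆ = 0 := by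
    intro i hi
    constructor <;> apply z <;> fin_cases hi <;> ext i <;> fin_cases i <;>
      simp [E, NonSympl8.brak, Pi.single_apply]
  have z70 : ⁅X 7, X 0⁆ = 0 := by
    apply z; ext i; fin_cases i <;> simp [E, NonSympl8.brak, Pi.single_apply]
  have t1 : ∀ i ∈ ({1, 2, 3, 4} : Finset (Fin 8)), θ (X 6) (X i) = 0 := by
    intro i hi
    have := hcl (X 5) (X 7) (X i)
    rw [b57, (zz i hi).1, (zz i hi).2, hl0, hl0] at this
    simpa using this
  have t2 : ∀ i ∈ ({5, 7} : Finset (Fin 8)), θ (X 6) (X i) = 0 := by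
    intro i hi
    have := hcl (X 1) (X 3) (X i)
    rw [b13, (zw i hi).1, (zw i hi).2, hl0, hl0] at this
    simpa using this
  have t3 : θ (X 6) (X 0) = 0 := by
    have := hcl (X 5) (X 7) (X 0)
    rw [b57, z70, b05, hl0, t2 7 (by simp)] at this
    simpa using this
  have hall : ∀ i, θ (X 6) (X i) = 0 := by
    intro i
    fin_cases i
    · exact t3
    · exact t1 1 (by simp)
    · exact t1 2 (by simp)
    · exact t1 3 (by simp)
    · exact t1 4 (by simp)
    · exact t2 5 (by simp)
    · exact halt _
    · exact t2 7 (by simp)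
  have h6 : X 6 = 0 := by
    apply hnd
    apply basis_zero ((Pi.basisFun K (Fin 8)).map e.symm.toLinearEquiv)
    · exact hradd _
    · exact fun a Y => hrsmul a _ Y
    · intro i
      simpa [X, E] using hall i
  have h7 : E 6 = 0 := by
    have := congrArg e h6
    simpa [X] using this
  have := congrFun h7 6
  simp [E] at this

/-- The cyclic case. -/
theorem caseF1 [FiniteDimensional K g] (h2 : ∀ X Y Z : g, ⁅⁅X, Y⁆, Z⁆ = 0)
    (h8 : finrank K g = 8) (x w y1 y2 y3 z1 z2 z3 : g) (hxw : ⁅x, w⁆ = 0)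
    (hind : ∀ (α γ : K) (r : g), α • x + γ • w + ⁅x, r⁆ = 0 → α = 0 ∧ γ = 0)
    (hz1 : ⁅x, y1⁆ = z1) (hz2 : ⁅x, y2⁆ = z2) (hz3 : ⁅x, y3⁆ = z3)
    (hz : LinearIndependent K ![z1, z2, z3])
    (d0 d1 d2 : K) (hB1 : ⁅y1, w⁆ = z2) (hB2 : ⁅y2, w⁆ = z3)
    (hB3 : ⁅y3, w⁆ = d0 • z1 + d1 • z2 + d2 • z3)
    (c11 c12 c13 c21 c22 c23 c31 c32 c33 : K)
    (hC1 : ⁅y2, y3⁆ = c11 • z1 + c21 • z2 + c31 • z3)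
    (hC2 : ⁅y3, y1⁆ = c12 • z1 + c22 • z2 + c32 • z3)
    (hC3 : ⁅y1, y2⁆ = c13 • z1 + c23 • z2 + c33 • z3)
    : ∃ θ : g → g → K, IsSymplecticForm K g θ := by
  by_cases hf : c13 + c22 + c31 + (c23 + c32) * d2 + c33 * (d1 + d2 ^ 2) = 0
  · refine good53 h2 h8 x w y1 y2 y3 z1 z2 z3 hxw hind hz1 hz2 hz3 hz
      0 0 d0 1 0 d1 0 1 d2 c11 c12 c13 c21 c22 c23 c31 c32 c33
      (by rw [hB1]; module) (by rw [hB2]; module) hB3 hC1 hC2 hC3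
      0 0 0 0 0 1 0 1 d2 1 d2 (d1 + d2 ^ 2) 0 0 0
      ?_ ?_ ?_ ?_ ?_ ?_ ?_ ?_ ?_ ?_ ?_
    · ring
    · ring
    · ring
    · ring
    · ring
    · ring
    · linear_combination hf
    · ring
    · ring
    · ring
    · intro p q r e0 e1 e2 e3 e4
      have hp1 : r = 0 := by linear_combination e1
      have hq : q = 0 := by linear_combination e2 - d2 * hp1
      have hp : p = 0 := by linear_combination e3 - d2 * hq - (d1 + d2 ^ 2) * hp1
      exact ⟨hp, hq, hp1⟩
  · set F := c13 + c22 + c31 + (c23 + c32) * d2 + c33 * (d1 + d2 ^ 2) with hF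
    obtain ⟨T1, hT1⟩ : ∃ T, T = - c21 - d2 * c31 := ⟨_, rfl⟩
    obtain ⟨T2, hT2⟩ : ∃ T, T = - c22 - d2 * c32 := ⟨_, rfl⟩
    obtain ⟨T3, hT3⟩ : ∃ T, T = - c23 - d2 * c33 := ⟨_, rfl⟩
    obtain ⟨r, hr⟩ : ∃ r, F * r + (c11 + c21 * c33 + c22 * (-c32 + T3)
        + c23 * (d0 + d1 * c33 - d2 * c32 - T2) - c31 * c32
        + c32 * (d0 + d1 * c33 - d2 * c32 - T2 + c31)
        + c33 * (d1 * (-c32 + T3) + d2 * (d0 + d1 * c33 - d2 * c32 - T2 + c31) + T1)) = 0 :=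
      ⟨-(c11 + c21 * c33 + c22 * (-c32 + T3)
        + c23 * (d0 + d1 * c33 - d2 * c32 - T2) - c31 * c32
        + c32 * (d0 + d1 * c33 - d2 * c32 - T2 + c31)
        + c33 * (d1 * (-c32 + T3) + d2 * (d0 + d1 * c33 - d2 * c32 - T2 + c31) + T1)) / F,
        by rw [mul_div_cancel₀ _ hf]; ring⟩
    obtain ⟨s31, h31⟩ : ∃ s, s = r - c32 := ⟨_, rfl⟩
    obtain ⟨s22, h22⟩ : ∃ s, s = s31 + T3 := ⟨_, rfl⟩
    obtain ⟨s23, h23⟩ : ∃ s, s = d0 + d1 * c33 + d2 * s31 - T2 := ⟨_, rfl⟩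
    obtain ⟨s32, h32⟩ : ∃ s, s = s23 + c31 := ⟨_, rfl⟩
    obtain ⟨s33, h33⟩ : ∃ s, s = d1 * s22 + d2 * s32 + T1 := ⟨_, rfl⟩
    refine good53 h2 h8 x w y1 y2 y3 z1 z2 z3 hxw hind hz1 hz2 hz3 hz
      0 0 d0 1 0 d1 0 1 d2 c11 c12 c13 c21 c22 c23 c31 c32 c33
      (by rw [hB1]; module) (by rw [hB2]; module) hB3 hC1 hC2 hC3
      0 0 1 1 0 r c33 s22 s23 s31 s32 s33 0 (-1) (-d2)
      ?_ ?_ ?_ ?_ ?_ ?_ ?_ ?_ ?_ ?_ ?_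
    · linear_combination -h32
    · linear_combination h31
    · ring
    · ring
    · ring
    · ring
    · (subst h33 h32 h23 h22 h31; rw [hF] at hr; linear_combination hr)
    · (linear_combination -h33 - hT1)
    · linear_combination h23 - hT2
    · linear_combination -h22 - hT3
    · intro p q r' e0 e1 e2 e3 e4
      have hr : r' = 0 := by linear_combination e0
      have hq : q = 0 := by linear_combination -e4 - d2 * hr
      have hp : p = 0 := by linear_combination e1 - c33 * hq - s31 * hr
      exact ⟨hp, hq, hr⟩

theorem caseF2s [FiniteDimensional K g] (h2 : ∀ X Y Z : g, ⁅⁅X, Y⁆, Z⁆ = 0)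
    (h8 : finrank K g = 8) (x w y1 y2 y3 z1 z2 z3 : g) (hxw : ⁅x, w⁆ = 0)
    (hind : ∀ (α γ : K) (r : g), α • x + γ • w + ⁅x, r⁆ = 0 → α = 0 ∧ γ = 0)
    (hz1 : ⁅x, y1⁆ = z1) (hz2 : ⁅x, y2⁆ = z2) (hz3 : ⁅x, y3⁆ = z3)
    (hz : LinearIndependent K ![z1, z2, z3])
    (β : K) (hB1 : ⁅y1, w⁆ = z2) (hB2 : ⁅y2, w⁆ = β • z2) (hB3 : ⁅y3, w⁆ = 0)
    (c11 c12 c13 c21 c22 c23 c31 c32 c33 : K)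
    (hC1 : ⁅y2, y3⁆ = c11 • z1 + c21 • z2 + c31 • z3)
    (hC2 : ⁅y3, y1⁆ = c12 • z1 + c22 • z2 + c32 • z3)
    (hC3 : ⁅y1, y2⁆ = c13 • z1 + c23 • z2 + c33 • z3)
    (p q r s : K) (hf : c11 * p + (c12 + c21 + β * c22) * q + (c13 + c31) * r + c33 * s = 0)
    (hd : q * (β * p * s - q * s - β * r ^ 2) ≠ 0) :
    ∃ θ : g → g → K, IsSymplecticForm K g θ := by
  refine good53 h2 h8 x w y1 y2 y3 z1 z2 z3 hxw hind hz1 hz2 hz3 hz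
    0 0 0 1 β 0 0 0 0 c11 c12 c13 c21 c22 c23 c31 c32 c33
    (by rw [hB1]; module) (by rw [hB2]; module) (by rw [hB3]; module) hC1 hC2 hC3
    0 0 0 p q r q (β * q) 0 r 0 s 0 0 0
    ?_ ?_ ?_ ?_ ?_ ?_ ?_ ?_ ?_ ?_ ?_
  · ring
  · ring
  · ring
  · ring
  · ring
  · ring
  · linear_combination hf
  · ring
  · ring
  · ring
  · intro p' q' r' e0 e1 e2 e3 e4
    refine ⟨?_, ?_, ?_⟩ <;> refine (mul_eq_zero.mp ?_).resolve_left hd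
    · linear_combination (β * q * s) * e1 - (q * s) * e2 - (β * q * r) * e3
    · linear_combination -(q * s) * e1 + (p * s - r ^ 2) * e2 + q * r * e3
    · linear_combination -(β * q * r) * e1 + (q * r) * e2 + (β * p * q - q ^ 2) * e3

theorem caseF2a [FiniteDimensional K g] (h2 : ∀ X Y Z : g, ⁅⁅X, Y⁆, Z⁆ = 0)
    (h8 : finrank K g = 8) (x w y1 y2 y3 z1 z2 z3 : g) (hxw : ⁅x, w⁆ = 0)
    (hind : ∀ (α γ : K) (r : g), α • x + γ • w + ⁅x, r⁆ = 0 → α = 0 ∧ γ = 0)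
    (hz1 : ⁅x, y1⁆ = z1) (hz2 : ⁅x, y2⁆ = z2) (hz3 : ⁅x, y3⁆ = z3)
    (hz : LinearIndependent K ![z1, z2, z3])
    (hB1 : ⁅y1, w⁆ = z2) (hB2 : ⁅y2, w⁆ = 0) (hB3 : ⁅y3, w⁆ = 0)
    (c11 c12 c13 c21 c22 c23 c31 c32 c33 : K)
    (hC1 : ⁅y2, y3⁆ = c11 • z1 + c21 • z2 + c31 • z3)
    (hC2 : ⁅y3, y1⁆ = c12 • z1 + c22 • z2 + c32 • z3)
    (hC3 : ⁅y1, y2⁆ = c13 • z1 + c23 • z2 + c33 • z3)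
    (hf : c33 ≠ 0) : ∃ θ : g → g → K, IsSymplecticForm K g θ := by
  obtain ⟨s, hs⟩ : ∃ s, c33 * s + (c12 * (1 - c33) + c13 + c21 + c31 * (1 - c32) + c32 * c31) = 0 :=
    ⟨-(c12 * (1 - c33) + c13 + c21 + c31 * (1 - c32) + c32 * c31) / c33,
      by rw [mul_div_cancel₀ _ hf]; ring⟩
  refine good53 h2 h8 x w y1 y2 y3 z1 z2 z3 hxw hind hz1 hz2 hz3 hz
    0 0 0 1 0 0 0 0 0 c11 c12 c13 c21 c22 c23 c31 c32 c33
    (by rw [hB1]; module) (by rw [hB2]; module) (by rw [hB3]; module) hC1 hC2 hC3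
    0 0 1 0 (1 - c33) 1 1 0 0 (1 - c32) c31 s 0 0 0
    ?_ ?_ ?_ ?_ ?_ ?_ ?_ ?_ ?_ ?_ ?_
  · ring
  · ring
  · ring
  · ring
  · ring
  · ring
  · linear_combination hs
  · ring
  · ring
  · ring
  · intro p q r e0 e1 e2 e3 e4
    have hr : r = 0 := by linear_combination e0
    have hp : p = 0 := by linear_combination e3 - s * hr
    have hq : q = 0 := by linear_combination e1 - (1 - c32) * hr
    exact ⟨hp, hq, hr⟩

theorem caseF2b [FiniteDimensional K g] (h2 : ∀ X Y Z : g, ⁅⁅X, Y⁆, Z⁆ = 0)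
    (h8 : finrank K g = 8) (x w y1 y2 y3 z1 z2 z3 : g) (hxw : ⁅x, w⁆ = 0)
    (hind : ∀ (α γ : K) (r : g), α • x + γ • w + ⁅x, r⁆ = 0 → α = 0 ∧ γ = 0)
    (hz1 : ⁅x, y1⁆ = z1) (hz2 : ⁅x, y2⁆ = z2) (hz3 : ⁅x, y3⁆ = z3)
    (hz : LinearIndependent K ![z1, z2, z3])
    (hB1 : ⁅y1, w⁆ = z2) (hB2 : ⁅y2, w⁆ = 0) (hB3 : ⁅y3, w⁆ = 0)
    (c11 c12 c13 c21 c22 c23 c31 c32 c33 : K)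
    (hC1 : ⁅y2, y3⁆ = c11 • z1 + c21 • z2 + c31 • z3)
    (hC2 : ⁅y3, y1⁆ = c12 • z1 + c22 • z2 + c32 • z3)
    (hC3 : ⁅y1, y2⁆ = c13 • z1 + c23 • z2 + c33 • z3)
    (hf1 : c11 = 0) (hf3 : c13 + c31 = 0) (hf4 : c33 = 0) (hf2 : c12 + c21 ≠ 0) :
    ∃ θ : g → g → K, IsSymplecticForm K g θ := by
  refine good53 h2 h8 x w y1 y2 y3 z1 z2 z3 hxw hind hz1 hz2 hz3 hz
    0 0 0 1 0 0 0 0 0 c11 c12 c13 c21 c22 c23 c31 c32 c33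
    (by rw [hB1]; module) (by rw [hB2]; module) (by rw [hB3]; module) hC1 hC2 hC3
    0 1 0 0 (-(c23 + c32)) 0 (-c32) (-c13) c12 (-c22) (c12 + c21) 0 (-1) 0 0
    ?_ ?_ ?_ ?_ ?_ ?_ ?_ ?_ ?_ ?_ ?_
  · ring
  · ring
  · ring
  · ring
  · ring
  · ring
  · linear_combination -c22 * hf3
  · linear_combination -hf1
  · ring
  · ring
  · intro p q r e0 e1 e2 e3 e4
    have hq : q = 0 := by linear_combination e0
    have hp : p = 0 := by linear_combination -e4
    refine ⟨hp, hq, (mul_eq_zero.mp ?_).resolve_left hf2⟩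
    linear_combination e2 + (c23 + c32) * hp + c13 * hq

/-- The scalar case. -/
theorem caseF3 [FiniteDimensional K g] (h2 : ∀ X Y Z : g, ⁅⁅X, Y⁆, Z⁆ = 0)
    (h8 : finrank K g = 8) (x w y1 y2 y3 z1 z2 z3 : g) (hxw : ⁅x, w⁆ = 0)
    (hind : ∀ (α γ : K) (r : g), α • x + γ • w + ⁅x, r⁆ = 0 → α = 0 ∧ γ = 0)
    (hz1 : ⁅x, y1⁆ = z1) (hz2 : ⁅x, y2⁆ = z2) (hz3 : ⁅x, y3⁆ = z3)
    (hz : LinearIndependent K ![z1, z2, z3])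
    (hB1 : ⁅y1, w⁆ = 0) (hB2 : ⁅y2, w⁆ = 0) (hB3 : ⁅y3, w⁆ = 0)
    (c11 c12 c13 c21 c22 c23 c31 c32 c33 : K)
    (hC1 : ⁅y2, y3⁆ = c11 • z1 + c21 • z2 + c31 • z3)
    (hC2 : ⁅y3, y1⁆ = c12 • z1 + c22 • z2 + c32 • z3)
    (hC3 : ⁅y1, y2⁆ = c13 • z1 + c23 • z2 + c33 • z3)
    : ∃ θ : g → g → K, IsSymplecticForm K g θ := by
  by_cases hf1 : c11 = 0
  swap
  · have hf := hf1
    obtain ⟨s, hs⟩ : ∃ s, c11 * s + (c12 * (-c13) + c13 * (c12) + c21 * (0) + c22 * (1) + c23 * (0) + c31 * (0) + c32 * (c11) + c33 * (1)) = 0 :=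
      ⟨-(c12 * (-c13) + c13 * (c12) + c21 * (0) + c22 * (1) + c23 * (0) + c31 * (0) + c32 * (c11) + c33 * (1)) / c11,
        by rw [mul_div_cancel₀ _ hf]; ring⟩
    refine good53 h2 h8 x w y1 y2 y3 z1 z2 z3 hxw hind hz1 hz2 hz3 hz
      0 0 0 0 0 0 0 0 0 c11 c12 c13 c21 c22 c23 c31 c32 c33
      (by rw [hB1]; module) (by rw [hB2]; module) (by rw [hB3]; module) hC1 hC2 hC3
      1 0 0 s (-c13) c12 0 1 0 0 c11 1 0 0 0
      ?_ ?_ ?_ ?_ ?_ ?_ ?_ ?_ ?_ ?_ ?_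
    · ring
    · ring
    · ring
    · ring
    · ring
    · ring
    · linear_combination hs
    · ring
    · ring
    · ring
    · intro p q r e0 e1 e2 e3 e4
      have hp : p = 0 := by linear_combination e0
      have hr : r = 0 := by linear_combination e3 - (c12) * hp
      have hq : q = 0 := by linear_combination e2 - (-c13) * hp - (c11) * hr
      exact ⟨hp, hq, hr⟩
  by_cases hf2 : c22 = 0
  swap
  · have hf := hf2
    obtain ⟨s, hs⟩ : ∃ s, c22 * s + (c11 * (1) + c12 * (0) + c13 * (c22) + c21 * (c23) + c23 * (-c21) + c31 * (0) + c32 * (0) + c33 * (1)) = 0 :=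
      ⟨-(c11 * (1) + c12 * (0) + c13 * (c22) + c21 * (c23) + c23 * (-c21) + c31 * (0) + c32 * (0) + c33 * (1)) / c22,
        by rw [mul_div_cancel₀ _ hf]; ring⟩
    refine good53 h2 h8 x w y1 y2 y3 z1 z2 z3 hxw hind hz1 hz2 hz3 hz
      0 0 0 0 0 0 0 0 0 c11 c12 c13 c21 c22 c23 c31 c32 c33
      (by rw [hB1]; module) (by rw [hB2]; module) (by rw [hB3]; module) hC1 hC2 hC3
      0 1 0 1 0 c22 c23 s (-c21) 0 0 1 0 0 0
      ?_ ?_ ?_ ?_ ?_ ?_ ?_ ?_ ?_ ?_ ?_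
    · ring
    · ring
    · ring
    · ring
    · ring
    · ring
    · linear_combination hs
    · ring
    · ring
    · ring
    · intro p q r e0 e1 e2 e3 e4
      have hq : q = 0 := by linear_combination e0
      have hp : p = 0 := by linear_combination e1 - (c23) * hq
      have hr : r = 0 := by linear_combination e3 - (-c21) * hq - (c22) * hp
      exact ⟨hp, hq, hr⟩
  by_cases hf3 : c33 = 0
  swap
  · have hf := hf3
    obtain ⟨s, hs⟩ : ∃ s, c33 * s + (c11 * (1) + c12 * (0) + c13 * (0) + c21 * (c33) + c22 * (1) + c23 * (0) + c31 * (-c32) + c32 * (c31)) = 0 :=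
      ⟨-(c11 * (1) + c12 * (0) + c13 * (0) + c21 * (c33) + c22 * (1) + c23 * (0) + c31 * (-c32) + c32 * (c31)) / c33,
        by rw [mul_div_cancel₀ _ hf]; ring⟩
    refine good53 h2 h8 x w y1 y2 y3 z1 z2 z3 hxw hind hz1 hz2 hz3 hz
      0 0 0 0 0 0 0 0 0 c11 c12 c13 c21 c22 c23 c31 c32 c33
      (by rw [hB1]; module) (by rw [hB2]; module) (by rw [hB3]; module) hC1 hC2 hC3
      0 0 1 1 0 0 c33 1 0 (-c32) c31 s 0 0 0
      ?_ ?_ ?_ ?_ ?_ ?_ ?_ ?_ ?_ ?_ ?_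
    · ring
    · ring
    · ring
    · ring
    · ring
    · ring
    · linear_combination hs
    · ring
    · ring
    · ring
    · intro p q r e0 e1 e2 e3 e4
      have hr : r = 0 := by linear_combination e0
      have hq : q = 0 := by linear_combination e2 - (c31) * hr
      have hp : p = 0 := by linear_combination e1 - (-c32) * hr - (c33) * hq
      exact ⟨hp, hq, hr⟩
  refine good53 h2 h8 x w y1 y2 y3 z1 z2 z3 hxw hind hz1 hz2 hz3 hz
    0 0 0 0 0 0 0 0 0 c11 c12 c13 c21 c22 c23 c31 c32 c33
    (by rw [hB1]; module) (by rw [hB2]; module) (by rw [hB3]; module) hC1 hC2 hC3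
    0 0 0 1 0 0 0 1 0 0 0 1 0 0 0
    ?_ ?_ ?_ ?_ ?_ ?_ ?_ ?_ ?_ ?_ ?_
  · ring
  · ring
  · ring
  · ring
  · ring
  · ring
  · linear_combination hf1 + hf2 + hf3
  · ring
  · ring
  · ring
  · intro p q r e0 e1 e2 e3 e4
    exact ⟨by linear_combination e1, by linear_combination e2, by linear_combination e3⟩

theorem caseF2iso [FiniteDimensional K g] (h2 : ∀ X Y Z : g, ⁅⁅X, Y⁆, Z⁆ = 0)
    (h8 : finrank K g = 8) (x w y1 y2 y3 z1 z2 z3 : g) (hxw : ⁅x, w⁆ = 0)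
    (hind : ∀ (α γ : K) (r : g), α • x + γ • w + ⁅x, r⁆ = 0 → α = 0 ∧ γ = 0)
    (hz1 : ⁅x, y1⁆ = z1) (hz2 : ⁅x, y2⁆ = z2) (hz3 : ⁅x, y3⁆ = z3)
    (hz : LinearIndependent K ![z1, z2, z3])
    (β : K) (hB1 : ⁅y1, w⁆ = z2) (hB2 : ⁅y2, w⁆ = β • z2) (hB3 : ⁅y3, w⁆ = 0)
    (c11 c12 c13 c21 c22 c23 c31 c32 c33 : K)
    (hC1 : ⁅y2, y3⁆ = c11 • z1 + c21 • z2 + c31 • z3)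
    (hC2 : ⁅y3, y1⁆ = c12 • z1 + c22 • z2 + c32 • z3)
    (hC3 : ⁅y1, y2⁆ = c13 • z1 + c23 • z2 + c33 • z3)
    (hβ : β ≠ 0) (hf1 : c11 = 0) (hf3 : c13 + c31 = 0) (hf4 : c33 = 0)
    (hf2 : c12 + c21 + β * c22 ≠ 0) : Nonempty (g ≃ₗ⁅K⁆ NonSympl8 K) := by
  obtain ⟨i, hi⟩ : ∃ i, i = β⁻¹ := ⟨_, rfl⟩
  have hβi : β * i = 1 := by rw [hi]; exact mul_inv_cancel₀ hβ
  obtain ⟨f, hf⟩ : ∃ f, f = (c12 + c21 + β * c22)⁻¹ := ⟨_, rfl⟩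
  have hff : (c12 + c21 + β * c22) * f = 1 := by rw [hf]; exact mul_inv_cancel₀ hf2
  have h31 : c31 = -c13 := by linear_combination hf3
  subst hf1 hf4 h31
  have r1 : ⁅y1, x⁆ = -z1 := by rw [← lie_skew, hz1]
  have r2 : ⁅y2, x⁆ = -z2 := by rw [← lie_skew, hz2]
  have r3 : ⁅y3, x⁆ = -z3 := by rw [← lie_skew, hz3]
  have r4 : ⁅w, y1⁆ = -z2 := by rw [← lie_skew, hB1]
  have r5 : ⁅w, y2⁆ = -(β • z2) := by rw [← lie_skew, hB2]
  have r6 : ⁅w, y3⁆ = 0 := by rw [← lie_skew, hB3, neg_zero]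
  have r7 : ⁅w, x⁆ = 0 := by rw [← lie_skew, hxw, neg_zero]
  have r8 : ⁅y1, y3⁆ = -(c12 • z1 + c22 • z2 + c32 • z3) := by rw [← lie_skew, hC2]
  have r9 : ⁅y3, y2⁆ = -((0 : K) • z1 + c21 • z2 + (-c13) • z3) := by rw [← lie_skew, hC1]
  have key : ∀ α α' γ γ' δ k : K, α = c32 - c13 * i → α' = i * (α + c23 + c13 * i) → γ = -c12 →
      γ' = i * (γ - c21) → δ = c13 → k = -β * f → Nonempty (g ≃ₗ⁅K⁆ NonSympl8 K) := by
    intro α α' γ γ' δ k hα hα' hγ hγ' hδ hk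
    refine iso_of h2 h8 x (i • w) (k • (y1 - i • y2 + α • x + α' • w))
      (y3 + γ • x + γ' • w) (y2 + δ • x) (k • (z1 - i • z2)) z3 z2 ?_ ?_ ?_ ?_ ?_ ?_ ?_ ?_ ?_ ?_ ?_ ?_
    · rw [lie_smul, hxw, smul_zero]
    · intro a c r h
      obtain ⟨h1, h2⟩ := hind a (c * i) r (by rw [← h]; module)
      refine ⟨h1, ?_⟩
      linear_combination β * h2 - c * hβi
    all_goals try simp only [lie_add, add_lie, lie_sub, sub_lie, lie_smul, smul_lie, lie_self, hz1, hz2, hz3,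
      hxw, hB1, hB2, hB3, hC1, hC2, hC3, r1, r2, r3, r4, r5, r6, r7, r8, r9]
    · module
    · module
    · module
    · have hk0 : k ≠ 0 := by
        rw [hk, hf]; exact mul_ne_zero (neg_ne_zero.mpr hβ) (inv_ne_zero hf2)
      refine li3_of_det hz k (-(k * i)) 0 0 0 1 0 1 0 (by module) (by module) (by module) ?_
      simpa using hk0
    · match_scalars
      linear_combination -k * i * hβi
    · module
    · match_scalars
      linear_combination hβi
    · subst hα hα' hγ hγ' hδ hk
      match_scalars
      · ring
      · linear_combination hff - f * (c12 + c21) * (β * i - 1) * hβi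
      · ring
    · subst hα hα' hγ hγ' hδ hk
      match_scalars
      · ring
      · linear_combination β * f * (c23 + c32) * hβi
      · ring
    · subst hα hα' hγ hγ' hδ hk
      match_scalars
      · ring
      · linear_combination (c21 + c12) * hβi
      · ring
  exact key _ _ _ _ _ _ rfl rfl rfl rfl rfl rfl

theorem caseF2 [FiniteDimensional K g] (h2 : ∀ X Y Z : g, ⁅⁅X, Y⁆, Z⁆ = 0)
    (h8 : finrank K g = 8) (x w y1 y2 y3 z1 z2 z3 : g) (hxw : ⁅x, w⁆ = 0)
    (hind : ∀ (α γ : K) (r : g), α • x + γ • w + ⁅x, r⁆ = 0 → α = 0 ∧ γ = 0)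
    (hz1 : ⁅x, y1⁆ = z1) (hz2 : ⁅x, y2⁆ = z2) (hz3 : ⁅x, y3⁆ = z3)
    (hz : LinearIndependent K ![z1, z2, z3])
    (β : K) (hB1 : ⁅y1, w⁆ = z2) (hB2 : ⁅y2, w⁆ = β • z2) (hB3 : ⁅y3, w⁆ = 0)
    (c11 c12 c13 c21 c22 c23 c31 c32 c33 : K)
    (hC1 : ⁅y2, y3⁆ = c11 • z1 + c21 • z2 + c31 • z3)
    (hC2 : ⁅y3, y1⁆ = c12 • z1 + c22 • z2 + c32 • z3)
    (hC3 : ⁅y1, y2⁆ = c13 • z1 + c23 • z2 + c33 • z3) :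
    (∃ θ : g → g → K, IsSymplecticForm K g θ) ∨ Nonempty (g ≃ₗ⁅K⁆ NonSympl8 K) := by
  have sym := caseF2s h2 h8 x w y1 y2 y3 z1 z2 z3 hxw hind hz1 hz2 hz3 hz β hB1 hB2 hB3
    c11 c12 c13 c21 c22 c23 c31 c32 c33 hC1 hC2 hC3
  by_cases hβ : β = 0
  · left
    subst hβ
    rw [zero_smul] at hB2
    by_cases h4 : c33 = 0
    swap
    · exact caseF2a h2 h8 x w y1 y2 y3 z1 z2 z3 hxw hind hz1 hz2 hz3 hz hB1 hB2 hB3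
        c11 c12 c13 c21 c22 c23 c31 c32 c33 hC1 hC2 hC3 h4
    by_cases h1 : c11 = 0
    swap
    · refine sym (-(c12 + c21) / c11) 1 0 1 ?_ (by simp)
      rw [mul_div_cancel₀ _ h1]; linear_combination h4
    by_cases h3 : c13 + c31 = 0
    swap
    · refine sym 0 1 (-(c12 + c21) / (c13 + c31)) 1 ?_ (by simp)
      rw [mul_div_cancel₀ _ h3]; linear_combination h4
    by_cases h2' : c12 + c21 = 0
    · refine sym 0 1 0 1 ?_ (by simp)
      linear_combination h4 + h2'
    · exact caseF2b h2 h8 x w y1 y2 y3 z1 z2 z3 hxw hind hz1 hz2 hz3 hz hB1 hB2 hB3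
        c11 c12 c13 c21 c22 c23 c31 c32 c33 hC1 hC2 hC3 h1 h3 h4 h2'
  by_cases h1 : c11 = 0
  swap
  · left
    refine sym (-((c12 + c21 + β * c22) + (c13 + c31)) / c11) 1 1 0 ?_ (by simpa using hβ)
    rw [mul_div_cancel₀ _ h1]; ring
  by_cases h3 : c13 + c31 = 0
  swap
  · left
    obtain ⟨r, hr⟩ : ∃ r, (c13 + c31) * r = -((c12 + c21 + β * c22) + c33) :=
      ⟨-((c12 + c21 + β * c22) + c33) / (c13 + c31), mul_div_cancel₀ _ h3⟩
    refine sym ((2 + β * r ^ 2) / β) 1 r 1 ?_ ?_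
    · rw [h1]; linear_combination hr
    · rw [mul_div_cancel₀ _ hβ]
      have : (1 : K) * ((2 + β * r ^ 2) * 1 - 1 * 1 - β * r ^ 2) = 1 := by ring
      rw [this]; exact one_ne_zero
  by_cases h4 : c33 = 0
  swap
  · left
    refine sym β⁻¹ 1 1 (-(c12 + c21 + β * c22) / c33) ?_ ?_
    · rw [h1, mul_div_cancel₀ _ h4]; linear_combination h3
    · rw [mul_inv_cancel₀ hβ]
      simpa using hβ
  by_cases h2' : c12 + c21 + β * c22 = 0
  · left
    refine sym 0 1 1 0 ?_ (by simpa using hβ)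
    linear_combination h2' + h3
  · right
    exact caseF2iso h2 h8 x w y1 y2 y3 z1 z2 z3 hxw hind hz1 hz2 hz3 hz β hB1 hB2 hB3
        c11 c12 c13 c21 c22 c23 c31 c32 c33 hC1 hC2 hC3 hβ h1 h3 h4 h2'

theorem fromR {V : Type*} [AddCommGroup V] [Module K V] (R : Submodule K V)
    (h3 : finrank K R = 3) (z1 z2 z3 : R) (hz : LinearIndependent K ![z1, z2, z3]) :
    LinearIndependent K ![(z1 : V), (z2 : V), (z3 : V)] ∧
      ∀ v ∈ R, ∃ r s t : K, v = r • (z1 : V) + s • (z2 : V) + t • (z3 : V) := by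
  constructor
  · rw [li3_iff] at hz ⊢
    intro r s t h
    exact hz r s t (Subtype.ext (by simpa using h))
  · intro v hv
    obtain ⟨r, s, t, h⟩ := span3 h3 hz ⟨v, hv⟩
    exact ⟨r, s, t, by simpa using congrArg Subtype.val h⟩

/-- The case where all brackets lie in the range of `ad x`. -/
theorem caseA [FiniteDimensional K g] (h2 : ∀ X Y Z : g, ⁅⁅X, Y⁆, Z⁆ = 0)
    (h8 : finrank K g = 8) (x : g)
    (h3 : finrank K ↥(LinearMap.range (LieAlgebra.ad K g x)) = 3)
    (hx : x ∉ LinearMap.range (LieAlgebra.ad K g x))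
    (hR : ∀ X Y : g, ⁅X, Y⁆ ∈ LinearMap.range (LieAlgebra.ad K g x)) :
    (∃ θ : g → g → K, IsSymplecticForm K g θ) ∨ Nonempty (g ≃ₗ⁅K⁆ NonSympl8 K) := by
  obtain ⟨A, hA⟩ : ∃ A, A = LieAlgebra.ad K g x := ⟨_, rfl⟩
  have hAx : ∀ v, A v = ⁅x, v⁆ := fun v => by rw [hA]; rfl
  rw [← hA] at h3 hx hR
  -- choose w
  obtain ⟨w0, hxw0, hw0⟩ : ∃ w, A w = 0 ∧ w ∉ (K ∙ x) ⊔ LinearMap.range A := by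
    by_contra hcon
    push Not at hcon
    have hle : LinearMap.ker A ≤ (K ∙ x) ⊔ LinearMap.range A := fun w hw => hcon w hw
    have e1 := Submodule.finrank_mono hle
    have e2 := Submodule.finrank_add_le_finrank_add_finrank (K ∙ x) (LinearMap.range A)
    have e3 := LinearMap.finrank_range_add_finrank_ker A
    have hx0 : x ≠ 0 := fun h => hx (h ▸ Submodule.zero_mem _)
    have e4 := finrank_span_singleton (K := K) hx0
    omega
  have hindp : ∀ (μ α γ : K) (r : g), α • x + γ • (w0 + μ • x) + ⁅x, r⁆ = 0 → α = 0 ∧ γ = 0 := by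
    intro μ α γ r h
    have hγ : γ = 0 := by
      by_contra hγ
      apply hw0
      have : w0 = (-(γ⁻¹ * α + μ)) • x + A (-(γ⁻¹ • r)) := by
        have h' : γ⁻¹ • (α • x + γ • (w0 + μ • x) + ⁅x, r⁆) = 0 := by rw [h, smul_zero]
        rw [map_neg, map_smul, hAx]
        have e : γ⁻¹ * γ = 1 := inv_mul_cancel₀ hγ
        rw [smul_add, smul_add, smul_smul γ⁻¹ γ, e, one_smul] at h'
        rw [← sub_eq_zero, ← h']
        module
      rw [this]
      exact Submodule.add_mem_sup (Submodule.smul_mem _ _ (Submodule.mem_span_singleton_self x))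
        (LinearMap.mem_range_self _ _)
    refine ⟨?_, hγ⟩
    by_contra hα
    apply hx
    refine ⟨-(α⁻¹ • r), ?_⟩
    have h' : α⁻¹ • (α • x + γ • (w0 + μ • x) + ⁅x, r⁆) = 0 := by rw [h, smul_zero]
    rw [hγ, zero_smul, add_zero, smul_add, smul_smul, inv_mul_cancel₀ hα, one_smul] at h'
    rw [map_neg, map_smul, hAx, ← sub_eq_zero, ← neg_eq_zero, ← h']
    module
  have hxwp : ∀ μ : K, ⁅x, w0 + μ • x⁆ = 0 := by
    intro μ; rw [lie_add, lie_smul, lie_self, smul_zero, ← hAx, hxw0, add_zero]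
  obtain ⟨σ, hσ⟩ := A.rangeRestrict.exists_rightInverse_of_surjective A.range_rangeRestrict
  have hσ' : ∀ r : LinearMap.range A, ⁅x, σ r⁆ = r := by
    intro r
    have := congrArg Subtype.val (LinearMap.congr_fun hσ r)
    rw [← hAx]; simpa using this
  let L : LinearMap.range A →ₗ[K] LinearMap.range A :=
    { toFun := fun r => ⟨⁅σ r, w0⁆, hR _ _⟩
      map_add' := fun r s => Subtype.ext (by simp)
      map_smul' := fun a r => Subtype.ext (by simp) }
  have hL : ∀ r, ⁅σ r, w0⁆ = L r := fun r => rfl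
  have hLμ : ∀ (μ : K) r, ⁅σ r, w0 + (-μ) • x⁆ = ((L r + μ • r : LinearMap.range A) : g) := by
    intro μ r
    have e : ⁅σ r, x⁆ = -(r : g) := by rw [← lie_skew, hσ']
    rw [lie_add, lie_smul, e, hL]
    simp
  clear_value L
  rcases trichotomy h3 L with ⟨v, hv⟩ | ⟨μ, β, v, v1, u, hv, l1, l2, l3⟩ | ⟨μ, hμ⟩
  · obtain ⟨hz, hsp⟩ := fromR _ h3 _ _ _ hv
    obtain ⟨d0, d1, d2, hd⟩ := hsp _ (hR (σ (L (L v))) w0)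
    obtain ⟨c11, c21, c31, hC1⟩ := hsp _ (hR (σ (L v)) (σ (L (L v))))
    obtain ⟨c12, c22, c32, hC2⟩ := hsp _ (hR (σ (L (L v))) (σ v))
    obtain ⟨c13, c23, c33, hC3⟩ := hsp _ (hR (σ v) (σ (L v)))
    have hi := hindp 0
    have hxw := hxwp 0
    simp only [zero_smul, add_zero] at hi hxw
    exact Or.inl (caseF1 h2 h8 x w0 _ _ _ _ _ _ hxw hi (hσ' _) (hσ' _) (hσ' _) hz d0 d1 d2
      (hL _) (hL _) hd c11 c12 c13 c21 c22 c23 c31 c32 c33 hC1 hC2 hC3)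
  · obtain ⟨hz, hsp⟩ := fromR _ h3 _ _ _ hv
    obtain ⟨c11, c21, c31, hC1⟩ := hsp _ (hR (σ v1) (σ u))
    obtain ⟨c12, c22, c32, hC2⟩ := hsp _ (hR (σ u) (σ v))
    obtain ⟨c13, c23, c33, hC3⟩ := hsp _ (hR (σ v) (σ v1))
    have hLm : ∀ r, ⁅σ r, w0 + μ • x⁆ = ((L r - μ • r : LinearMap.range A) : g) := by
      intro r
      have := hLμ (-μ) r
      rwa [neg_neg, neg_smul, ← sub_eq_add_neg] at this
    refine caseF2 h2 h8 x (w0 + μ • x) _ _ _ _ _ _ (hxwp _) (hindp _) (hσ' _) (hσ' _) (hσ' _) hz β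
      ?_ ?_ ?_ c11 c12 c13 c21 c22 c23 c31 c32 c33 hC1 hC2 hC3
    · rw [hLm, l1]
    · rw [hLm, l2]; rfl
    · rw [hLm, l3]; rfl
  · have hLm : ∀ r, ⁅σ r, w0 + μ • x⁆ = 0 := by
      intro r
      have := hLμ (-μ) r
      rw [neg_neg, neg_smul, ← sub_eq_add_neg, hμ] at this
      simpa using this
    have : FiniteDimensional K (LinearMap.range A) := .of_finrank_pos (by omega)
    let b := finBasisOfFinrankEq K (LinearMap.range A) h3
    have hv : LinearIndependent K ![b 0, b 1, b 2] := by
      have := b.linearIndependent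
      have e : ![b 0, b 1, b 2] = ⇑b := by ext i; fin_cases i <;> rfl
      rwa [e]
    obtain ⟨hz, hsp⟩ := fromR _ h3 _ _ _ hv
    obtain ⟨c11, c21, c31, hC1⟩ := hsp _ (hR (σ (b 1)) (σ (b 2)))
    obtain ⟨c12, c22, c32, hC2⟩ := hsp _ (hR (σ (b 2)) (σ (b 0)))
    obtain ⟨c13, c23, c33, hC3⟩ := hsp _ (hR (σ (b 0)) (σ (b 1)))
    exact Or.inl (caseF3 h2 h8 x (w0 + μ • x) _ _ _ _ _ _ (hxwp _) (hindp _) (hσ' _) (hσ' _)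
      (hσ' _) hz (hLm _) (hLm _) (hLm _) c11 c12 c13 c21 c22 c23 c31 c32 c33 hC1 hC2 hC3)

/-- The case where some bracket lies outside the range of `ad x`. -/
theorem caseB [FiniteDimensional K g] (h2 : ∀ X Y Z : g, ⁅⁅X, Y⁆, Z⁆ = 0)
    (h8 : finrank K g = 8) (x : g) (D : Submodule K g) (hxD : x ∉ D) (hD : ∀ X Y : g, ⁅X, Y⁆ ∈ D)
    (h3 : finrank K ↥(LinearMap.range (LieAlgebra.ad K g x)) = 3)
    (X0 Y0 : g) (hR : ⁅X0, Y0⁆ ∉ LinearMap.range (LieAlgebra.ad K g x)) :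
    ∃ θ : g → g → K, IsSymplecticForm K g θ := by
  obtain ⟨w, hwdef⟩ : ∃ w, w = ⁅X0, Y0⁆ := ⟨_, rfl⟩
  have hwD : w ∈ D := hwdef ▸ hD _ _
  rw [← hwdef] at hR
  have hw : ∀ X : g, ⁅w, X⁆ = 0 := fun X => by rw [hwdef, h2]
  have hxw : ⁅x, w⁆ = 0 := by rw [← lie_skew, hw, neg_zero]
  have h2' : ∀ X Y Z : g, ⁅X, ⁅Y, Z⁆⁆ = 0 := by
    intro X Y Z; rw [← lie_skew, h2, neg_zero]
  have hxz : ∀ α : K, α • x ∈ D → α = 0 := by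
    intro α h
    by_contra hα
    exact hxD ((D.smul_mem_iff hα).mp h)
  have hind : ∀ (α γ : K) (r : g), α • x + γ • w + ⁅x, r⁆ = 0 → α = 0 ∧ γ = 0 := by
    intro α γ r h
    have hα : α = 0 := by
      apply hxz
      have : α • x = -(γ • w + ⁅x, r⁆) := by rw [← sub_eq_zero, ← h]; module
      rw [this]
      exact D.neg_mem (D.add_mem (D.smul_mem _ hwD) (hD _ _))
    refine ⟨hα, ?_⟩
    by_contra hγ
    apply hR
    rw [← Submodule.smul_mem_iff _ hγ]
    refine ⟨-r, ?_⟩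
    rw [LieAlgebra.ad_apply, lie_neg, ← sub_eq_zero, ← neg_eq_zero, ← h, hα]
    module
  let b0 := finBasisOfFinrankEq K (LinearMap.range (LieAlgebra.ad K g x)) h3
  have hv : LinearIndependent K ![b0 0, b0 1, b0 2] := by
    have := b0.linearIndependent
    have e : ![b0 0, b0 1, b0 2] = ⇑b0 := by ext i; fin_cases i <;> rfl
    rwa [e]
  obtain ⟨hz, hsp⟩ := fromR _ h3 _ _ _ hv
  obtain ⟨y1, hy1⟩ := (b0 0).2
  obtain ⟨y2, hy2⟩ := (b0 1).2
  obtain ⟨y3, hy3⟩ := (b0 2).2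
  rw [← hy1, ← hy2, ← hy3] at hz hsp
  simp only [LieAlgebra.ad_apply] at hz hsp
  obtain ⟨b, hb⟩ := frame_basis h2 h8 x w y1 y2 y3 hxw hind hz
  have hdec : ∀ X : g, ∃ f : Fin 8 → K, X = f 0 • x + f 1 • y1 + f 2 • y2 + f 3 • y3 + f 4 • w
      + f 5 • ⁅x, y1⁆ + f 6 • ⁅x, y2⁆ + f 7 • ⁅x, y3⁆ := by
    intro X
    refine ⟨b.repr X, ?_⟩
    have := b.sum_repr X
    rw [Fin.sum_univ_eight, hb] at this
    exact this.symm
  have hbr : ∀ X Y : g, ∃ r s t k : K,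
      ⁅X, Y⁆ = r • ⁅x, y1⁆ + s • ⁅x, y2⁆ + t • ⁅x, y3⁆ + k • w := by
    intro X Y
    obtain ⟨f, hf⟩ := hdec ⁅X, Y⁆
    have e := congrArg (fun v => ⁅x, v⁆) hf
    simp only [lie_add, lie_smul, lie_self, h2', hxw, smul_zero, zero_add, add_zero] at e
    obtain ⟨f1, f2, f3⟩ := (li3_iff _ _ _).mp hz _ _ _ e.symm
    rw [f1, f2, f3] at hf
    have f0 : f 0 = 0 := by
      apply hxz
      have : f 0 • x = ⁅X, Y⁆ - (f 4 • w + ⁅x, f 5 • y1 + f 6 • y2 + f 7 • y3⁆) := by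
        rw [hf]; simp only [lie_add, lie_smul]; module
      rw [this]
      exact D.sub_mem (hD _ _) (D.add_mem (D.smul_mem _ hwD) (hD _ _))
    exact ⟨f 5, f 6, f 7, f 4, by rw [hf, f0]; module⟩
  obtain ⟨c11, c21, c31, k1, hC1⟩ := hbr y2 y3
  obtain ⟨c12, c22, c32, k2, hC2⟩ := hbr y3 y1
  obtain ⟨c13, c23, c33, k3, hC3⟩ := hbr y1 y2
  refine good44 h2 h8 x w y1 y2 y3 _ _ _ hw hind rfl rfl rfl hz
    c11 c12 c13 c21 c22 c23 c31 c32 c33 k1 k2 k3 hC1 hC2 hC3 ?_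
  rintro ⟨rfl, rfl, rfl⟩
  apply hR
  obtain ⟨R, hRdef⟩ : ∃ R, R = LinearMap.range (LieAlgebra.ad K g x) := ⟨_, rfl⟩
  rw [← hRdef]
  have hm : ∀ v, ⁅x, v⁆ ∈ R := fun v => hRdef ▸ LinearMap.mem_range_self (LieAlgebra.ad K g x) v
  have m0 : ∀ v, ⁅v, x⁆ ∈ R := fun v => by rw [← lie_skew]; exact R.neg_mem (hm v)
  have m1 : ⁅y2, y3⁆ ∈ R := by
    rw [hC1, zero_smul, add_zero]
    exact R.add_mem (R.add_mem (R.smul_mem _ (hm _)) (R.smul_mem _ (hm _))) (R.smul_mem _ (hm _))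
  have m2 : ⁅y3, y1⁆ ∈ R := by
    rw [hC2, zero_smul, add_zero]
    exact R.add_mem (R.add_mem (R.smul_mem _ (hm _)) (R.smul_mem _ (hm _))) (R.smul_mem _ (hm _))
  have m3 : ⁅y1, y2⁆ ∈ R := by
    rw [hC3, zero_smul, add_zero]
    exact R.add_mem (R.add_mem (R.smul_mem _ (hm _)) (R.smul_mem _ (hm _))) (R.smul_mem _ (hm _))
  have m1' : ⁅y3, y2⁆ ∈ R := by rw [← lie_skew]; exact R.neg_mem m1
  have m2' : ⁅y1, y3⁆ ∈ R := by rw [← lie_skew]; exact R.neg_mem m2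
  have m3' : ⁅y2, y1⁆ ∈ R := by rw [← lie_skew]; exact R.neg_mem m3
  have hw' : ∀ X : g, ⁅X, w⁆ = 0 := fun X => by rw [← lie_skew, hw, neg_zero]
  obtain ⟨p, hp⟩ := hdec X0
  obtain ⟨q, hq⟩ := hdec Y0
  have step : ∀ u, (∀ v ∈ ({x, y1, y2, y3} : Set g), ⁅v, u⁆ ∈ R) → ⁅X0, u⁆ ∈ R := by
    intro u hu
    have e : ⁅X0, u⁆ = p 0 • ⁅x, u⁆ + p 1 • ⁅y1, u⁆ + p 2 • ⁅y2, u⁆ + p 3 • ⁅y3, u⁆ := by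
      conv_lhs => rw [hp]
      simp only [add_lie, smul_lie, h2, hw, smul_zero, add_zero]
    rw [e]
    refine R.add_mem (R.add_mem (R.add_mem ?_ ?_) ?_) ?_ <;> refine R.smul_mem _ (hu _ ?_) <;> simp
  have e : w = q 0 • ⁅X0, x⁆ + q 1 • ⁅X0, y1⁆ + q 2 • ⁅X0, y2⁆ + q 3 • ⁅X0, y3⁆ := by
    rw [hwdef]
    conv_lhs => rw [hq]
    simp only [lie_add, lie_smul, h2', hw', smul_zero, add_zero]
  rw [e]
  refine R.add_mem (R.add_mem (R.add_mem ?_ ?_) ?_) ?_ <;> refine R.smul_mem _ (step _ ?_) <;>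
    simp [hm, m0, m1, m2, m3, m1', m2', m3', R.zero_mem]


end Aux

/-- An 8-dimensional 2-step nilpotent Lie algebra over `K` with characteristic sequence
`(2,2,2,1,1)` admits a symplectic form if and only if it is not isomorphic to the Lie
algebra with nonzero brackets `⁅X₁,X₂⁆ = X₃`, `⁅X₁,X₄⁆ = X₅`, `⁅X₁,X₆⁆ = X₇`,
`⁅X₂,X₄⁆ = X₇`, `⁅X₆,X₈⁆ = X₇`. -/
theorem eightDim_charSeq32_symplectic_iff
    (K : Type*) [RCLike K] (g : Type*) [LieRing g] [LieAlgebra K g] [FiniteDimensional K g]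
    (h2 : IsTwoStepNilpotent g) (h8 : Module.finrank K g = 8)
    (hc : HasCharSeqTwos K g 3) :
    (∃ θ : g → g → K, IsSymplecticForm K g θ) ↔ ¬ Nonempty (g ≃ₗ⁅K⁆ NonSympl8 K) := by
  obtain ⟨h2, -⟩ := h2
  constructor
  · rintro ⟨θ, hθ⟩ ⟨e⟩
    exact nonsymp e θ hθ
  · intro hn
    obtain ⟨-, x, hxD, h3⟩ := hc
    have hD : ∀ X Y : g, ⁅X, Y⁆ ∈ (LieAlgebra.derivedSeries K g 1).toSubmodule := by
      intro X Y
      rw [LieSubmodule.mem_toSubmodule, LieAlgebra.derivedSeries_def,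
        LieAlgebra.derivedSeriesOfIdeal_succ, LieAlgebra.derivedSeriesOfIdeal_zero]
      exact LieSubmodule.lie_mem_lie (LieSubmodule.mem_top X) (LieSubmodule.mem_top Y)
    by_cases hR : ∀ X Y : g, ⁅X, Y⁆ ∈ LinearMap.range (LieAlgebra.ad K g x)
    · refine (caseA h2 h8 x h3 ?_ hR).resolve_right hn
      rintro ⟨r, hr⟩
      apply hxD
      rw [← hr]
      exact hD x r
    · push Not at hR
      obtain ⟨X0, Y0, h⟩ := hR
      exact caseB h2 h8 x _ hxD hD h3 X0 Y0 h
end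

section
/- Every 8-dimensional 2-step nilpotent symplectic Lie algebra over K (K = ℝ or ℂ) with characteristic sequence (2,2,1,1,1,1) is decomposable, i.e. is the direct sum of two nonzero ideals. -/
/-- If the commuting part is bigger than a space containing all brackets, split off a line. -/
theorem split_of_lt {K : Type*} [RCLike K] {g : Type*} [LieRing g] [LieAlgebra K g]
    [FiniteDimensional K g] (h8 : Module.finrank K g = 8) (D S : Submodule K g)
    (hS : ∀ z ∈ S, ∀ y : g, ⁅z, y⁆ = 0) (hD : ∀ x y : g, ⁅x, y⁆ ∈ D)
    (hlt : Module.finrank K D < Module.finrank K S) :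
    ∃ I J : LieIdeal K g, I ≠ ⊥ ∧ J ≠ ⊥ ∧ I ⊓ J = ⊥ ∧ I ⊔ J = ⊤ := by
  have hnot : ¬ S ≤ D := fun h => absurd (Submodule.finrank_mono h) (by omega)
  obtain ⟨z, hzS, hzD⟩ := Set.not_subset.mp hnot
  obtain ⟨f, hfz, hfD⟩ := Submodule.exists_le_ker_of_notMem hzD
  have hz0 : z ≠ 0 := by
    rintro rfl
    exact hfz (map_zero f)
  have hfb : ∀ x y : g, f ⁅x, y⁆ = 0 := fun x y => hfD (hD x y)
  let I : LieIdeal K g :=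
    { toSubmodule := Submodule.span K {z}
      lie_mem := by
        intro x m hm
        obtain ⟨a, rfl⟩ := Submodule.mem_span_singleton.mp hm
        have : ⁅x, a • z⁆ = 0 := by
          rw [lie_smul, ← lie_skew, hS z hzS x]; simp
        rw [this]
        exact Submodule.zero_mem _ }
  let J : LieIdeal K g :=
    { toSubmodule := LinearMap.ker f
      lie_mem := by
        intro x m hm
        exact hfb x m }
  have hI : ∀ x, x ∈ I ↔ ∃ a : K, a • z = x := fun x => Submodule.mem_span_singleton
  have hJ : ∀ x, x ∈ J ↔ f x = 0 := fun x => LinearMap.mem_ker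
  refine ⟨I, J, ?_, ?_, ?_, ?_⟩
  · intro h
    have : z ∈ I := (hI z).2 ⟨1, one_smul _ _⟩
    rw [h] at this
    exact hz0 (by simpa using this)
  · intro h
    have h0 : LinearMap.ker f = ⊥ := by
      rw [eq_bot_iff]
      intro x hx
      have : x ∈ J := hx
      rw [h] at this
      simpa using this
    have := LinearMap.finrank_le_finrank_of_injective (LinearMap.ker_eq_bot.mp h0)
    rw [h8, Module.finrank_self] at this
    omega
  · rw [eq_bot_iff]
    intro x hx
    obtain ⟨hx1, hx2⟩ := (LieSubmodule.mem_inf _ _ _).mp hx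
    obtain ⟨a, rfl⟩ := (hI x).1 hx1
    have := (hJ _).1 hx2
    rw [map_smul, smul_eq_mul, mul_eq_zero] at this
    rcases this with h | h
    · simp [h]
    · exact absurd h hfz
  · rw [eq_top_iff]
    intro x _
    have h1 : (f x / f z) • z ∈ I := (hI _).2 ⟨_, rfl⟩
    have h2 : x - (f x / f z) • z ∈ J := by
      rw [hJ, map_sub, map_smul, smul_eq_mul, div_mul_cancel₀ _ hfz, sub_self]
    have := (LieSubmodule.mem_sup I J x).2 ⟨_, h1, _, h2, by abel⟩
    exact this

/-- Dual functionals to a linearly independent family. -/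
theorem exists_dual_family {K : Type*} [RCLike K] {g : Type*} [AddCommGroup g] [Module K g]
    {n : ℕ} (v : Fin n → g) (hv : LinearIndependent K v) :
    ∃ f : g →ₗ[K] (Fin n → K), ∀ i, f (v i) = Pi.single i 1 := by
  have hinj : LinearMap.ker (Fintype.linearCombination K v) = ⊥ := by
    rw [LinearMap.ker_eq_bot]
    exact hv.fintypeLinearCombination_injective
  obtain ⟨f, hf⟩ := LinearMap.exists_leftInverse_of_injective _ hinj
  refine ⟨f, fun i => ?_⟩
  have := LinearMap.congr_fun hf (Pi.single i 1)
  simpa [Fintype.linearCombination_apply_single] using this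

theorem perturb {K : Type*} [RCLike K] {g : Type*} [AddCommGroup g] [Module K g]
    (u₁ u₂ w y₁ y₂ : g) (hv : LinearIndependent K ![u₁, u₂, w]) :
    ∃ t : K, t ≠ 0 ∧ LinearIndependent K ![u₁ + t • y₁, u₂ + t • y₂, t • w] := by
  obtain ⟨f, hf⟩ := exists_dual_family _ hv
  have f0 : f u₁ = Pi.single 0 1 := hf 0
  have f1 : f u₂ = Pi.single 1 1 := hf 1
  have f2 : f w = Pi.single 2 1 := hf 2
  by_contra hcon
  have key : ∀ t : K, t ≠ 0 →
      (1 + t * f y₁ 0) * (1 + t * f y₂ 1) - t * f y₁ 1 * (t * f y₂ 0) = 0 := by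
    intro t ht
    by_contra hne
    apply hcon
    refine ⟨t, ht, ?_⟩
    apply LinearIndependent.of_comp f
    have := Matrix.linearIndependent_rows_of_det_ne_zero
      (A := Matrix.of (⇑f ∘ ![u₁ + t • y₁, u₂ + t • y₂, t • w])) (by
        rw [Matrix.det_fin_three]
        simp [f0, f1, f2]
        intro h
        apply hne
        apply mul_right_cancel₀ ht
        linear_combination h)
    exact this
  have k1 := key 1 one_ne_zero
  have k2 := key (-1) (by simp)
  have k3 := key 2 two_ne_zero
  have : (3 : K) = 0 := by linear_combination 3 * k1 + k2 - k3
  norm_num at this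

/-- three vectors, first two independent, all dependent -/
theorem mem_span_pair_of_dep {K : Type*} [RCLike K] {g : Type*} [AddCommGroup g] [Module K g]
    (u₁ u₂ w : g) (hu : LinearIndependent K ![u₁, u₂])
    (hv : ¬ LinearIndependent K ![u₁, u₂, w]) : ∃ a b : K, w = a • u₁ + b • u₂ := by
  by_contra hcon
  apply hv
  have hs := LinearIndependent.pair_iff.mp hu
  rw [Fintype.linearIndependent_iff]
  intro c hc
  simp [Fin.sum_univ_three] at hc
  have hc2 : c 2 = 0 := by
    by_contra h2
    apply hcon
    refine ⟨-(c 2)⁻¹ * c 0, -(c 2)⁻¹ * c 1, ?_⟩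
    have : (c 2)⁻¹ • (c 0 • u₁ + c 1 • u₂ + c 2 • w) = 0 := by rw [hc, smul_zero]
    rw [smul_add, smul_smul _ (c 2), inv_mul_cancel₀ h2, one_smul] at this
    rw [eq_neg_of_add_eq_zero_right this]
    module
  rw [hc2, zero_smul, add_zero] at hc
  have := hs _ _ hc
  intro i
  fin_cases i
  · exact this.1
  · exact this.2
  · exact hc2

theorem finrank_span_family_le {K : Type*} [RCLike K] {g : Type*} [AddCommGroup g] [Module K g]
    {n : ℕ} (v : Fin n → g) : Module.finrank K (Submodule.span K (Set.range v)) ≤ n := by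
  simpa [Set.finrank] using finrank_range_le_card (R := K) v

/-- Symplectic case with two-dimensional derived algebra. -/
theorem case_two {K : Type*} [RCLike K] {g : Type*} [LieRing g] [LieAlgebra K g]
    [FiniteDimensional K g] (h8 : Module.finrank K g = 8)
    (T : g →ₗ[K] g →ₗ[K] K) (hself : ∀ x, T x x = 0)
    (hnd : ∀ x, (∀ y, T x y = 0) → x = 0)
    (hcl : ∀ X Y Z : g, T ⁅X, Y⁆ Z + T ⁅Y, Z⁆ X + T ⁅Z, X⁆ Y = 0)
    (u₁ u₂ : g) (hu : LinearIndependent K ![u₁, u₂])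
    (hD : ∀ x y : g, ∃ a b : K, ⁅x, y⁆ = a • u₁ + b • u₂) :
    ∃ I J : LieIdeal K g, I ≠ ⊥ ∧ J ≠ ⊥ ∧ I ⊓ J = ⊥ ∧ I ⊔ J = ⊤ := by
  have hskew : ∀ x y, T x y = - T y x := by
    intro x y
    have h := hself (x + y)
    simp only [map_add, LinearMap.add_apply, hself] at h
    linear_combination h
  have hTinj : Function.Injective T := by
    rw [← LinearMap.ker_eq_bot, eq_bot_iff]
    intro x hx
    exact hnd x fun y => by rw [LinearMap.mem_ker.mp hx]; rfl
  have hTsurj : Function.Surjective T :=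
    (LinearMap.injective_iff_surjective_of_finrank_eq_finrank
      (Subspace.dual_finrank_eq (K := K) (V := g)).symm).mp hTinj
  obtain ⟨f, hf⟩ := exists_dual_family _ hu
  have f0 : f u₁ = Pi.single 0 1 := hf 0
  have f1 : f u₂ = Pi.single 1 1 := hf 1
  obtain ⟨A, hA⟩ := hTsurj ((LinearMap.proj 0 : (Fin 2 → K) →ₗ[K] K) ∘ₗ f)
  obtain ⟨B, hB⟩ := hTsurj ((LinearMap.proj 1 : (Fin 2 → K) →ₗ[K] K) ∘ₗ f)
  have A1 : T A u₁ = 1 := by rw [hA]; simp [f0]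
  have A2 : T A u₂ = 0 := by rw [hA]; simp [f1]
  have B1 : T B u₁ = 0 := by rw [hB]; simp [f0]
  have B2 : T B u₂ = 1 := by rw [hB]; simp [f1]
  -- elements orthogonal to the derived algebra
  have hM : ∀ W, T W u₁ = 0 → T W u₂ = 0 → ∀ x y : g, T ⁅x, y⁆ W = 0 := by
    intro W h1 h2 x y
    obtain ⟨a, b, hab⟩ := hD x y
    rw [hab, hskew]
    simp [h1, h2]
  let L : (g →ₗ[K] K) → g → g →ₗ[K] K := fun φ Y => φ ∘ₗ (LieAlgebra.ad K g Y)
  let Φ : g →ₗ[K] (Fin 5 → K) := LinearMap.pi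
    ![T.flip u₁, T.flip u₂, L (T.flip A) A, L (T.flip B) A, L (T.flip B) B]
  have hker : 3 ≤ Module.finrank K (LinearMap.ker Φ) := by
    have h1 := LinearMap.finrank_range_add_finrank_ker Φ
    have h2 := Submodule.finrank_le (LinearMap.range Φ)
    simp at h2
    omega
  refine split_of_lt h8 (Submodule.span K (Set.range ![u₁, u₂])) (LinearMap.ker Φ) ?_ ?_ ?_
  · intro X hX
    have hX' := fun i => congrFun (LinearMap.mem_ker.mp hX) i
    have x0 : T X u₁ = 0 := hX' 0
    have x1 : T X u₂ = 0 := hX' 1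
    have x2 : T ⁅A, X⁆ A = 0 := hX' 2
    have x3 : T ⁅A, X⁆ B = 0 := hX' 3
    have x4 : T ⁅B, X⁆ B = 0 := hX' 4
    have x5 : T ⁅B, X⁆ A = 0 := by
      have h := hcl A B X
      rw [hM X x0 x1 A B, ← lie_skew X A, map_neg, LinearMap.neg_apply, x3] at h
      simpa using h
    have hdec : ∀ W, ∃ a b : K, ∃ M, W = a • A + b • B + M ∧ T M u₁ = 0 ∧ T M u₂ = 0 := by
      intro W
      refine ⟨T W u₁, T W u₂, W - T W u₁ • A - T W u₂ • B, by abel, ?_, ?_⟩ <;>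
      simp [A1, A2, B1, B2]
    have hAX : ⁅A, X⁆ = 0 := by
      apply hnd
      intro W
      obtain ⟨a, b, M, rfl, m1, m2⟩ := hdec W
      simp [x2, x3, hM M m1 m2]
    have hBX : ⁅B, X⁆ = 0 := by
      apply hnd
      intro W
      obtain ⟨a, b, M, rfl, m1, m2⟩ := hdec W
      simp [x4, x5, hM M m1 m2]
    intro Y
    obtain ⟨a, b, M, rfl, m1, m2⟩ := hdec Y
    have hXM : ⁅X, M⁆ = 0 := by
      apply hnd
      intro W
      have h := hcl X M W
      rw [hM X x0 x1, hM M m1 m2] at h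
      simpa using h
    rw [lie_add, lie_add, lie_smul, lie_smul, ← lie_skew, ← lie_skew X B, hAX, hBX, hXM]
    simp
  · intro x y
    obtain ⟨a, b, hab⟩ := hD x y
    rw [hab]
    exact Submodule.add_mem _
      (Submodule.smul_mem _ _ (Submodule.subset_span ⟨0, rfl⟩))
      (Submodule.smul_mem _ _ (Submodule.subset_span ⟨1, rfl⟩))
  · have := finrank_span_family_le (K := K) ![u₁, u₂]
    omega

theorem decomposable_of_eightDim_charSeq24_symplectic
    (K : Type*) [RCLike K] (g : Type*) [LieRing g] [LieAlgebra K g] [FiniteDimensional K g]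
    (h2 : IsTwoStepNilpotent g) (h8 : Module.finrank K g = 8)
    (hc : HasCharSeqTwos K g 2)
    (θ : g → g → K) (hθ : IsSymplecticForm K g θ) :
    ∃ I J : LieIdeal K g, I ≠ ⊥ ∧ J ≠ ⊥ ∧ I ⊓ J = ⊥ ∧ I ⊔ J = ⊤ := by
  obtain ⟨hl, hr, hself, hnd, hcl⟩ := hθ
  have hl0 : ∀ Z, θ 0 Z = 0 := fun Z => by simpa using hl 1 0 0 Z
  have hr0 : ∀ Z, θ Z 0 = 0 := fun Z => by simpa using hr 1 Z 0 0
  let T : g →ₗ[K] g →ₗ[K] K := LinearMap.mk₂ K θ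
    (fun x y z => by simpa using hl 1 x y z)
    (fun a x z => by simpa [hl0] using hl a x 0 z)
    (fun x y z => by simpa using hr 1 x y z)
    (fun a x z => by simpa [hr0] using hr a x z 0)
  -- the rank condition
  have hrank : ∀ X a b c : g, ¬ LinearIndependent K ![⁅X, a⁆, ⁅X, b⁆, ⁅X, c⁆] := by
    intro X a b c hli
    have hle : Module.finrank K (LinearMap.range (LieAlgebra.ad K g X)) ≤ 2 := by
      by_cases hX : X ∈ LieAlgebra.derivedSeries K g 1
      · exfalso
        have hX0 : ∀ y : g, ⁅X, y⁆ = 0 := by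
          have hle : LieAlgebra.derivedSeries K g 1 ≤ LieAlgebra.center K g := by
            rw [LieAlgebra.derivedSeries_def, LieAlgebra.derivedSeriesOfIdeal_succ,
              LieAlgebra.derivedSeriesOfIdeal_zero, LieSubmodule.lie_le_iff]
            intro x _ m _
            rw [LieModule.mem_maxTrivSubmodule]
            intro y
            rw [← lie_skew, h2.1, neg_zero]
          intro y
          have := (LieModule.mem_maxTrivSubmodule (R := K) (L := g) (M := g) X).mp (hle hX) y
          rw [← lie_skew, this, neg_zero]
        have := hli.ne_zero 0
        simp [hX0] at this
      · exact hc.1 X hX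
    have hs : Submodule.span K (Set.range ![⁅X, a⁆, ⁅X, b⁆, ⁅X, c⁆]) ≤
        LinearMap.range (LieAlgebra.ad K g X) := by
      rw [Submodule.span_le]
      rintro _ ⟨i, rfl⟩
      fin_cases i
      · exact ⟨a, rfl⟩
      · exact ⟨b, rfl⟩
      · exact ⟨c, rfl⟩
    have h3 := finrank_span_eq_card hli
    have h4 := Submodule.finrank_mono hs
    rw [h3] at h4
    simp at h4
    omega
  obtain ⟨X, -, hX⟩ := hc.2
  obtain ⟨P, Q, hPQ⟩ : ∃ P Q : g, LinearIndependent K ![⁅X, P⁆, ⁅X, Q⁆] := by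
    let bs := Module.finBasisOfFinrankEq K _ hX
    obtain ⟨P, hP⟩ := (bs 0).2
    obtain ⟨Q, hQ⟩ := (bs 1).2
    refine ⟨P, Q, ?_⟩
    have h := bs.linearIndependent.map' (Submodule.subtype _) (Submodule.ker_subtype _)
    have hEq : ![⁅X, P⁆, ⁅X, Q⁆] = (Submodule.subtype _) ∘ bs := by
      funext i
      fin_cases i
      · exact hP
      · exact hQ
    rw [hEq]
    exact h
  -- first key fact
  have hdecomp : ∀ Y, ∃ a b : K, ∃ c, Y = a • P + b • Q + c ∧ ⁅X, c⁆ = 0 := by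
    intro Y
    obtain ⟨a, b, hab⟩ := mem_span_pair_of_dep _ _ _ hPQ (hrank X P Q Y)
    refine ⟨a, b, Y - a • P - b • Q, by abel, ?_⟩
    rw [lie_sub, lie_sub, hab, lie_smul, lie_smul]
    abel
  have hC : ∀ Y c : g, ⁅X, c⁆ = 0 → ∃ a b : K, ⁅Y, c⁆ = a • ⁅X, P⁆ + b • ⁅X, Q⁆ := by
    intro Y c hc0
    apply mem_span_pair_of_dep _ _ _ hPQ
    intro hli
    obtain ⟨t, ht, hli'⟩ := perturb _ _ _ ⁅Y, P⁆ ⁅Y, Q⁆ hli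
    apply hrank (X + t • Y) P Q c
    simpa [hc0] using hli'
  have hbr : ∀ x y : g, ∃ a b d : K, ⁅x, y⁆ = a • ⁅X, P⁆ + b • ⁅X, Q⁆ + d • ⁅P, Q⁆ := by
    intro x y
    obtain ⟨a, b, c, rfl, hc0⟩ := hdecomp x
    obtain ⟨a', b', c', rfl, hc0'⟩ := hdecomp y
    obtain ⟨s1, t1, e1⟩ := hC (a • P + b • Q + c) c' hc0'
    obtain ⟨s2, t2, e2⟩ := hC P c hc0
    obtain ⟨s3, t3, e3⟩ := hC Q c hc0
    refine ⟨s1 - a' * s2 - b' * s3, t1 - a' * t2 - b' * t3, a * b' - b * a', ?_⟩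
    rw [lie_add, e1]
    have e4 : ⁅c, P⁆ = -(s2 • ⁅X, P⁆ + t2 • ⁅X, Q⁆) := by rw [← e2, lie_skew]
    have e5 : ⁅c, Q⁆ = -(s3 • ⁅X, P⁆ + t3 • ⁅X, Q⁆) := by rw [← e3, lie_skew]
    have e6 : ⁅Q, P⁆ = -⁅P, Q⁆ := (lie_skew _ _).symm
    simp only [lie_add, add_lie, lie_smul, smul_lie, lie_self, e4, e5, e6]
    module
  by_cases hW : ∃ a b : K, ⁅P, Q⁆ = a • ⁅X, P⁆ + b • ⁅X, Q⁆
  · obtain ⟨s, t, hst⟩ := hW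
    refine case_two h8 T hself hnd hcl _ _ hPQ ?_
    intro x y
    obtain ⟨a, b, d, h⟩ := hbr x y
    refine ⟨a + d * s, b + d * t, ?_⟩
    rw [h, hst]
    module
  · have hli : LinearIndependent K ![⁅X, P⁆, ⁅X, Q⁆, ⁅P, Q⁆] := by
      by_contra h
      exact hW (mem_span_pair_of_dep _ _ _ hPQ h)
    obtain ⟨f, hf⟩ := exists_dual_family _ hli
    have f0 : f ⁅X, P⁆ = Pi.single 0 1 := hf 0
    have f1 : f ⁅X, Q⁆ = Pi.single 1 1 := hf 1
    have f2 : f ⁅P, Q⁆ = Pi.single 2 1 := hf 2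
    -- a determinant form of the rank condition
    have hdet : ∀ Y a b c : g,
        (Matrix.of ![f ⁅Y, a⁆, f ⁅Y, b⁆, f ⁅Y, c⁆]).det = 0 := by
      intro Y a b c
      by_contra hne
      apply hrank Y a b c
      apply LinearIndependent.of_comp f
      have := Matrix.linearIndependent_rows_of_det_ne_zero hne
      have hEq : f ∘ ![⁅Y, a⁆, ⁅Y, b⁆, ⁅Y, c⁆] =
          fun i => Matrix.of ![f ⁅Y, a⁆, f ⁅Y, b⁆, f ⁅Y, c⁆] i := by
        funext i
        fin_cases i <;> rfl
      rw [hEq]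
      exact this
    have hPX : f ⁅P, X⁆ = -Pi.single 0 1 := by rw [← lie_skew, map_neg, f0]
    have hQX : f ⁅Q, X⁆ = -Pi.single 1 1 := by rw [← lie_skew, map_neg, f1]
    have hQP : f ⁅Q, P⁆ = -Pi.single 2 1 := by rw [← lie_skew, map_neg, f2]
    have hC2 : ∀ c : g, ⁅X, c⁆ = 0 → ∃ l : K, ⁅P, c⁆ = l • ⁅P, X⁆ ∧ ⁅Q, c⁆ = l • ⁅Q, X⁆ := by
      intro c hc0
      obtain ⟨s2, t2, e2⟩ := hC P c hc0
      obtain ⟨s3, t3, e3⟩ := hC Q c hc0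
      have d1 := hdet P X Q c
      have d2 := hdet Q X P c
      have d3 := hdet (P + Q) X Q c
      simp [Matrix.det_fin_three, add_lie, e2, e3, f0, f1, f2, hPX, hQX, hQP] at d1 d2 d3
      have q1 : t2 = 0 := by grind
      have q2 : s3 = 0 := by grind
      have q3 : s2 = t3 := by grind
      refine ⟨-s2, ?_, ?_⟩
      · rw [e2, q1, ← lie_skew P X]; module
      · rw [e3, q2, ← lie_skew Q X, q3]; module
    have hCC : ∀ c d : g, ⁅X, c⁆ = 0 → ⁅P, c⁆ = 0 → ⁅Q, c⁆ = 0 →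
        ⁅X, d⁆ = 0 → ⁅P, d⁆ = 0 → ⁅Q, d⁆ = 0 → ⁅c, d⁆ = 0 := by
      intro c d c1 c2 c3 d1 d2 d3
      obtain ⟨s, t, e⟩ := hC c d d1
      have cX : ⁅c, X⁆ = 0 := by rw [← lie_skew, c1, neg_zero]
      have cP : ⁅c, P⁆ = 0 := by rw [← lie_skew, c2, neg_zero]
      have cQ : ⁅c, Q⁆ = 0 := by rw [← lie_skew, c3, neg_zero]
      have m1 := hdet (P + c) X Q d
      have m2 := hdet (Q + c) X P d
      simp [Matrix.det_fin_three, add_lie, e, f0, f1, f2, hPX, hQX, hQP,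
        cX, cP, cQ, d2, d3] at m1 m2
      rw [e, m1, m2]; simp
    let S : Submodule K g := LinearMap.ker (LieAlgebra.ad K g X) ⊓
      (LinearMap.ker (LieAlgebra.ad K g P) ⊓
        LinearMap.ker (LieAlgebra.ad K g Q))
    have hSm : ∀ z, z ∈ S ↔ ⁅X, z⁆ = 0 ∧ ⁅P, z⁆ = 0 ∧ ⁅Q, z⁆ = 0 := fun z => Iff.rfl
    have hfull : ∀ Y, ∃ a b l : K, ∃ d ∈ S, Y = a • P + b • Q + l • X + d := by
      intro Y
      obtain ⟨a, b, c, rfl, hc0⟩ := hdecomp Y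
      obtain ⟨l, hl1, hl2⟩ := hC2 c hc0
      refine ⟨a, b, l, c - l • X, ?_, by abel⟩
      rw [hSm]
      simp [hc0, hl1, hl2]
    refine split_of_lt h8 (Submodule.span K (Set.range ![⁅X, P⁆, ⁅X, Q⁆, ⁅P, Q⁆])) S ?_ ?_ ?_
    · intro z hz y
      obtain ⟨a, b, l, d, hd, rfl⟩ := hfull y
      obtain ⟨z1, z2, z3⟩ := (hSm z).1 hz
      obtain ⟨d1, d2, d3⟩ := (hSm d).1 hd
      have zX : ⁅z, X⁆ = 0 := by rw [← lie_skew, z1, neg_zero]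
      have zP : ⁅z, P⁆ = 0 := by rw [← lie_skew, z2, neg_zero]
      have zQ : ⁅z, Q⁆ = 0 := by rw [← lie_skew, z3, neg_zero]
      simp [zX, zP, zQ, hCC z d z1 z2 z3 d1 d2 d3]
    · intro x y
      obtain ⟨a, b, d, h⟩ := hbr x y
      rw [h]
      exact Submodule.add_mem _ (Submodule.add_mem _
        (Submodule.smul_mem _ _ (Submodule.subset_span ⟨0, rfl⟩))
        (Submodule.smul_mem _ _ (Submodule.subset_span ⟨1, rfl⟩)))
        (Submodule.smul_mem _ _ (Submodule.subset_span ⟨2, rfl⟩))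
    · have h3 := finrank_span_family_le (K := K) ![⁅X, P⁆, ⁅X, Q⁆, ⁅P, Q⁆]
      have h3' := finrank_span_family_le (K := K) ![P, Q, X]
      have htop : Submodule.span K (Set.range ![P, Q, X]) ⊔ S = ⊤ := by
        rw [eq_top_iff]
        intro Y _
        obtain ⟨a, b, l, d, hd, rfl⟩ := hfull Y
        refine Submodule.add_mem_sup ?_ hd
        exact Submodule.add_mem _ (Submodule.add_mem _
          (Submodule.smul_mem _ _ (Submodule.subset_span ⟨0, rfl⟩))
          (Submodule.smul_mem _ _ (Submodule.subset_span ⟨1, rfl⟩)))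
          (Submodule.smul_mem _ _ (Submodule.subset_span ⟨2, rfl⟩))
      have h4 := Submodule.finrank_add_le_finrank_add_finrank
        (Submodule.span K (Set.range ![P, Q, X])) S
      rw [htop, finrank_top, h8] at h4
      omega
end
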